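/- Let (L,d,λ) be a weak Lie 3-algebra over a commutative ring k, (p,i,h) a deformation retract of (L,d) onto (L′,d′), and equip (L′,d′) with the transferred weak Lie 3-algebra structure λ′. Then the maps i1 := i, i2 := −h∘λ2∘(i,i), i21 := −h∘λ21∘(i,i), and i3 := −h∘λ3∘(i,i,i) − h∘(λ2∘1(h∘λ2) − (λ2∘2(h∘λ2))^{1−(12)})∘(i,i,i) form a weak morphism (i1,i2,i21,i3): (L′,d′,λ′) → (L,d,λ) of weak Lie 3-algebras, i.e. they satisfy equations (M1)–(M8). -/

import Mathlib

namespace WL3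

open Finset

/-! ## Graded multilinear maps -/

/-- Cast along an equality of degrees. -/
def gcast {M : ℤ → Type} {i j : ℤ} (h : i = j) (x : M i) : M j := h ▸ x

/-- A degree-`r`, arity-`m` map between ℤ-graded types, given by its components on
homogeneous tuples: its component at degrees `d` maps `L (d 1) ⊗ ⋯ ⊗ L (d m)` to
`M (r + d 1 + ⋯ + d m)`. -/
abbrev MMap (L M : ℤ → Type) (m : ℕ) (r : ℤ) : Type :=
  ∀ d : Fin m → ℤ, (∀ j, L (d j)) → M (r + ∑ j, d j)

variable {L M N : ℤ → Type}

/-- Cast an `MMap` along equalities of arities and degrees. -/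
def mcast {m m' : ℕ} {r r' : ℤ} (hm : m = m') (hr : r = r') (μ : MMap L M m r) :
    MMap L M m' r' := by subst hm; subst hr; exact μ

/-- Koszul sign of the permutation `σ` acting on a tuple of homogeneous elements of
degrees `d`: `∏_{i<j, σ i > σ j} (-1)^(d i · d j)`. -/
def koszulSign {m : ℕ} (d : Fin m → ℤ) (σ : Equiv.Perm (Fin m)) : ℤ :=
  ∏ p ∈ Finset.univ.filter (fun p : Fin m × Fin m => p.1 < p.2 ∧ σ p.2 < σ p.1),
    (-1 : ℤ) ^ (d p.1 * d p.2).natAbs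

/-- The action `μ ↦ μ^σ`, `μ^σ(x₁,…,x_m) = ε(σ;x)·μ(x_{σ⁻¹1},…,x_{σ⁻¹m})`. -/
def pa [∀ i, AddCommGroup (M i)] {m : ℕ} {r : ℤ} (σ : Equiv.Perm (Fin m)) (μ : MMap L M m r) :
    MMap L M m r := fun d x =>
  koszulSign d σ •
    gcast (by rw [Equiv.sum_comp σ.symm d])
      (μ (fun j => d (σ.symm j)) (fun j => x (σ.symm j)))

/-- Degrees of the outer map in a partial composition. -/
def outDeg (m₁ m₂ n : ℕ) (s : ℤ) (d : Fin (m₁ + n + m₂) → ℤ) : Fin (m₁ + 1 + m₂) → ℤ :=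
  Fin.append
    (Fin.append (fun j : Fin m₁ => d (Fin.castAdd m₂ (Fin.castAdd n j)))
      (fun _ : Fin 1 => s + ∑ j : Fin n, d (Fin.castAdd m₂ (Fin.natAdd m₁ j))))
    (fun j : Fin m₂ => d (Fin.natAdd (m₁ + n) j))

theorem outDeg_left (m₁ m₂ n : ℕ) (s : ℤ) (d : Fin (m₁ + n + m₂) → ℤ) (j : Fin m₁) :
    outDeg m₁ m₂ n s d (Fin.castAdd m₂ (Fin.castAdd 1 j))
      = d (Fin.castAdd m₂ (Fin.castAdd n j)) := by
  simp [outDeg, Fin.append_left]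

theorem outDeg_mid (m₁ m₂ n : ℕ) (s : ℤ) (d : Fin (m₁ + n + m₂) → ℤ) (j : Fin 1) :
    outDeg m₁ m₂ n s d (Fin.castAdd m₂ (Fin.natAdd m₁ j))
      = s + ∑ j : Fin n, d (Fin.castAdd m₂ (Fin.natAdd m₁ j)) := by
  simp [outDeg, Fin.append_left, Fin.append_right]

theorem outDeg_right (m₁ m₂ n : ℕ) (s : ℤ) (d : Fin (m₁ + n + m₂) → ℤ) (j : Fin m₂) :
    outDeg m₁ m₂ n s d (Fin.natAdd (m₁ + 1) j) = d (Fin.natAdd (m₁ + n) j) := by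
  simp [outDeg, Fin.append_right]

theorem outDeg_sum (m₁ m₂ n : ℕ) (r s : ℤ) (d : Fin (m₁ + n + m₂) → ℤ) :
    r + ∑ j, outDeg m₁ m₂ n s d j = (r + s) + ∑ j, d j := by
  simp [outDeg, Fin.sum_univ_add, Fin.append_left, Fin.append_right]
  ring

/-- Partial (operadic) composition `μ ∘_{m₁+1} ν` of `μ` (of arity `m₁ + 1 + m₂`) with `ν`
inserted in the slot `m₁ + 1`, with the Koszul sign `(-1)^(|ν|·(d 1 + ⋯ + d m₁))`. -/
def pcomp [∀ i, AddCommGroup (L i)] [∀ i, AddCommGroup (M i)] (m₁ m₂ : ℕ) {n : ℕ} {r s : ℤ}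
    (μ : MMap L M (m₁ + 1 + m₂) r) (ν : MMap L L n s) : MMap L M (m₁ + n + m₂) (r + s) :=
  fun d x =>
    ((-1 : ℤ) ^ (s * ∑ j : Fin m₁, d (Fin.castAdd m₂ (Fin.castAdd n j))).natAbs) •
    gcast (outDeg_sum m₁ m₂ n r s d)
      (μ (outDeg m₁ m₂ n s d)
        (fun j => Fin.addCases (motive := fun t => L (outDeg m₁ m₂ n s d t))
          (fun j' => Fin.addCases (motive := fun t => L (outDeg m₁ m₂ n s d (Fin.castAdd m₂ t)))
            (fun j1 => gcast (outDeg_left m₁ m₂ n s d j1).symm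
              (x (Fin.castAdd m₂ (Fin.castAdd n j1))))
            (fun j0 => gcast (outDeg_mid m₁ m₂ n s d j0).symm
              (ν (fun j2 => d (Fin.castAdd m₂ (Fin.natAdd m₁ j2)))
                 (fun j2 => x (Fin.castAdd m₂ (Fin.natAdd m₁ j2)))))
            j')
          (fun j3 => gcast (outDeg_right m₁ m₂ n s d j3).symm (x (Fin.natAdd (m₁ + n) j3)))
          j))

/-- Composition `μ ∘ g` of an arity-1 map with an arity-`a` map. -/
def comp₁ {a : ℕ} {r s : ℤ} (μ : MMap M N 1 r) (g : MMap L M a s) : MMap L N a (r + s) :=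
  fun d x =>
    gcast (by rw [Fin.sum_univ_one]; ring)
      (μ (fun _ : Fin 1 => s + ∑ j, d j) (fun _ => g d x))

theorem sum2 (a b : ℕ) (r s₁ s₂ : ℤ) (d : Fin (a + b) → ℤ) :
    r + ∑ t : Fin 2, ![s₁ + ∑ j : Fin a, d (Fin.castAdd b j),
                       s₂ + ∑ j : Fin b, d (Fin.natAdd a j)] t
      = (r + (s₁ + s₂)) + ∑ j, d j := by
  simp [Fin.sum_univ_two, Fin.sum_univ_add]
  ring

/-- Full composition `μ ∘ (g₁, g₂)` with Koszul signs. -/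
def comp₂ [∀ i, AddCommGroup (N i)] {a b : ℕ} {r s₁ s₂ : ℤ}
    (μ : MMap M N 2 r) (g₁ : MMap L M a s₁) (g₂ : MMap L M b s₂) :
    MMap L N (a + b) (r + (s₁ + s₂)) :=
  fun d x =>
    ((-1 : ℤ) ^ (s₂ * ∑ j : Fin a, d (Fin.castAdd b j)).natAbs) •
    gcast (sum2 a b r s₁ s₂ d)
      (μ ![s₁ + ∑ j : Fin a, d (Fin.castAdd b j), s₂ + ∑ j : Fin b, d (Fin.natAdd a j)]
        (Fin.cons (gcast (by simp) (g₁ (fun j => d (Fin.castAdd b j)) (fun j => x (Fin.castAdd b j))))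
          (fun _ : Fin 1 => gcast (by simp) (g₂ (fun j => d (Fin.natAdd a j)) (fun j => x (Fin.natAdd a j))))))

theorem sum3 (a b c : ℕ) (r s₁ s₂ s₃ : ℤ) (d : Fin (a + b + c) → ℤ) :
    r + ∑ t : Fin 3, ![s₁ + ∑ j : Fin a, d (Fin.castAdd c (Fin.castAdd b j)),
                       s₂ + ∑ j : Fin b, d (Fin.castAdd c (Fin.natAdd a j)),
                       s₃ + ∑ j : Fin c, d (Fin.natAdd (a + b) j)] t
      = (r + (s₁ + s₂ + s₃)) + ∑ j, d j := by
  simp [Fin.sum_univ_three, Fin.sum_univ_add]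
  ring

/-- Full composition `μ ∘ (g₁, g₂, g₃)` with Koszul signs. -/
def comp₃ [∀ i, AddCommGroup (N i)] {a b c : ℕ} {r s₁ s₂ s₃ : ℤ}
    (μ : MMap M N 3 r) (g₁ : MMap L M a s₁) (g₂ : MMap L M b s₂) (g₃ : MMap L M c s₃) :
    MMap L N (a + b + c) (r + (s₁ + s₂ + s₃)) :=
  fun d x =>
    ((-1 : ℤ) ^ (s₂ * (∑ j : Fin a, d (Fin.castAdd c (Fin.castAdd b j)))
        + s₃ * ((∑ j : Fin a, d (Fin.castAdd c (Fin.castAdd b j)))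
          + ∑ j : Fin b, d (Fin.castAdd c (Fin.natAdd a j)))).natAbs) •
    gcast (sum3 a b c r s₁ s₂ s₃ d)
      (μ ![s₁ + ∑ j : Fin a, d (Fin.castAdd c (Fin.castAdd b j)),
           s₂ + ∑ j : Fin b, d (Fin.castAdd c (Fin.natAdd a j)),
           s₃ + ∑ j : Fin c, d (Fin.natAdd (a + b) j)]
        (Fin.cons (gcast (by simp)
            (g₁ (fun j => d (Fin.castAdd c (Fin.castAdd b j)))
                (fun j => x (Fin.castAdd c (Fin.castAdd b j)))))
          (Fin.cons (gcast (by simp)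
              (g₂ (fun j => d (Fin.castAdd c (Fin.natAdd a j)))
                  (fun j => x (Fin.castAdd c (Fin.natAdd a j)))))
            (fun _ : Fin 1 => gcast (by simp)
              (g₃ (fun j => d (Fin.natAdd (a + b) j))
                  (fun j => x (Fin.natAdd (a + b) j)))))))

theorem sum4 (a b c e : ℕ) (r s₁ s₂ s₃ s₄ : ℤ) (d : Fin (a + b + c + e) → ℤ) :
    r + ∑ t : Fin 4, ![s₁ + ∑ j : Fin a, d (Fin.castAdd e (Fin.castAdd c (Fin.castAdd b j))),
                       s₂ + ∑ j : Fin b, d (Fin.castAdd e (Fin.castAdd c (Fin.natAdd a j))),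
                       s₃ + ∑ j : Fin c, d (Fin.castAdd e (Fin.natAdd (a + b) j)),
                       s₄ + ∑ j : Fin e, d (Fin.natAdd (a + b + c) j)] t
      = (r + (s₁ + s₂ + s₃ + s₄)) + ∑ j, d j := by
  simp [Fin.sum_univ_four, Fin.sum_univ_add]
  ring

/-- Full composition `μ ∘ (g₁, g₂, g₃, g₄)` with Koszul signs. -/
def comp₄ [∀ i, AddCommGroup (N i)] {a b c e : ℕ} {r s₁ s₂ s₃ s₄ : ℤ}
    (μ : MMap M N 4 r) (g₁ : MMap L M a s₁) (g₂ : MMap L M b s₂) (g₃ : MMap L M c s₃)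
    (g₄ : MMap L M e s₄) :
    MMap L N (a + b + c + e) (r + (s₁ + s₂ + s₃ + s₄)) :=
  fun d x =>
    ((-1 : ℤ) ^ (s₂ * (∑ j : Fin a, d (Fin.castAdd e (Fin.castAdd c (Fin.castAdd b j))))
        + s₃ * ((∑ j : Fin a, d (Fin.castAdd e (Fin.castAdd c (Fin.castAdd b j))))
          + ∑ j : Fin b, d (Fin.castAdd e (Fin.castAdd c (Fin.natAdd a j))))
        + s₄ * ((∑ j : Fin a, d (Fin.castAdd e (Fin.castAdd c (Fin.castAdd b j))))
          + (∑ j : Fin b, d (Fin.castAdd e (Fin.castAdd c (Fin.natAdd a j))))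
          + ∑ j : Fin c, d (Fin.castAdd e (Fin.natAdd (a + b) j)))).natAbs) •
    gcast (sum4 a b c e r s₁ s₂ s₃ s₄ d)
      (μ ![s₁ + ∑ j : Fin a, d (Fin.castAdd e (Fin.castAdd c (Fin.castAdd b j))),
           s₂ + ∑ j : Fin b, d (Fin.castAdd e (Fin.castAdd c (Fin.natAdd a j))),
           s₃ + ∑ j : Fin c, d (Fin.castAdd e (Fin.natAdd (a + b) j)),
           s₄ + ∑ j : Fin e, d (Fin.natAdd (a + b + c) j)]
        (Fin.cons (gcast (by simp)
            (g₁ (fun j => d (Fin.castAdd e (Fin.castAdd c (Fin.castAdd b j))))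
                (fun j => x (Fin.castAdd e (Fin.castAdd c (Fin.castAdd b j))))))
          (Fin.cons (gcast (by simp)
              (g₂ (fun j => d (Fin.castAdd e (Fin.castAdd c (Fin.natAdd a j))))
                  (fun j => x (Fin.castAdd e (Fin.castAdd c (Fin.natAdd a j))))))
            (Fin.cons (gcast (by simp)
                (g₃ (fun j => d (Fin.castAdd e (Fin.natAdd (a + b) j)))
                    (fun j => x (Fin.castAdd e (Fin.natAdd (a + b) j)))))
              (fun _ : Fin 1 => gcast (by simp)
                (g₄ (fun j => d (Fin.natAdd (a + b + c) j))
                    (fun j => x (Fin.natAdd (a + b + c) j))))))))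

/-- The differential `∂(μ) = D' ∘ μ - (-1)^{|μ|} ∑ᵢ μ ∘ᵢ D`. -/
def bdry [∀ i, AddCommGroup (L i)] [∀ i, AddCommGroup (M i)] {m : ℕ} {r : ℤ}
    (D' : MMap M M 1 (-1)) (D : MMap L L 1 (-1)) (μ : MMap L M m r) : MMap L M m (-1 + r) :=
  comp₁ D' μ - ((-1 : ℤ) ^ r.natAbs) •
    ∑ p : Fin m, mcast (by have := p.isLt; omega) (by ring)
      (pcomp p.val (m - 1 - p.val) (mcast (by have := p.isLt; omega) rfl μ) D)

/-- The identity, as an `MMap`. -/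
def idm : MMap L L 1 0 := fun d x => gcast (by rw [Fin.sum_univ_one, zero_add]) (x 0)

/-- `μ ∘_{m₁+1} ν`, recast to a specified target degree `R`. -/
def pc [∀ i, AddCommGroup (L i)] [∀ i, AddCommGroup (M i)] (R : ℤ) (m₁ m₂ : ℕ) {n : ℕ}
    {r s : ℤ} (μ : MMap L M (m₁ + 1 + m₂) r) (ν : MMap L L n s)
    (h : r + s = R := by norm_num) : MMap L M (m₁ + n + m₂) R :=
  mcast rfl h (pcomp m₁ m₂ μ ν)

/-- `μ ∘ g`, recast to a specified target degree `R`. -/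
def fc1 (R : ℤ) {a : ℕ} {r s : ℤ} (μ : MMap M N 1 r) (g : MMap L M a s)
    (h : r + s = R := by norm_num) : MMap L N a R :=
  mcast rfl h (comp₁ μ g)

/-- `μ ∘ (g₁, g₂)`, recast to a specified target degree `R`. -/
def fc2 [∀ i, AddCommGroup (N i)] (R : ℤ) {a b : ℕ} {r s₁ s₂ : ℤ}
    (μ : MMap M N 2 r) (g₁ : MMap L M a s₁) (g₂ : MMap L M b s₂)
    (h : r + (s₁ + s₂) = R := by norm_num) : MMap L N (a + b) R :=
  mcast rfl h (comp₂ μ g₁ g₂)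

/-- `μ ∘ (g₁, g₂, g₃)`, recast to a specified target degree `R`. -/
def fc3 [∀ i, AddCommGroup (N i)] (R : ℤ) {a b c : ℕ} {r s₁ s₂ s₃ : ℤ}
    (μ : MMap M N 3 r) (g₁ : MMap L M a s₁) (g₂ : MMap L M b s₂) (g₃ : MMap L M c s₃)
    (h : r + (s₁ + s₂ + s₃) = R := by norm_num) : MMap L N (a + b + c) R :=
  mcast rfl h (comp₃ μ g₁ g₂ g₃)

/-- `μ ∘ (g₁, g₂, g₃, g₄)`, recast to a specified target degree `R`. -/
def fc4 [∀ i, AddCommGroup (N i)] (R : ℤ) {a b c e : ℕ} {r s₁ s₂ s₃ s₄ : ℤ}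
    (μ : MMap M N 4 r) (g₁ : MMap L M a s₁) (g₂ : MMap L M b s₂) (g₃ : MMap L M c s₃)
    (g₄ : MMap L M e s₄) (h : r + (s₁ + s₂ + s₃ + s₄) = R := by norm_num) :
    MMap L N (a + b + c + e) R :=
  mcast rfl h (comp₄ μ g₁ g₂ g₃ g₄)

/-- `∂(μ)`, recast to a specified target degree `R`. -/
def bd [∀ i, AddCommGroup (L i)] [∀ i, AddCommGroup (M i)] (R : ℤ) {m : ℕ} {r : ℤ}
    (D' : MMap M M 1 (-1)) (D : MMap L L 1 (-1)) (μ : MMap L M m r)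
    (h : -1 + r = R := by norm_num) : MMap L M m R :=
  mcast rfl h (bdry D' D μ)

/-- Multilinearity over `k` of the components of an `MMap`. -/
def IsMultilinear (k : Type) [CommRing k] {L M : ℤ → Type} [∀ i, AddCommGroup (L i)]
    [∀ i, AddCommGroup (M i)] [∀ i, Module k (L i)] [∀ i, Module k (M i)] {m : ℕ} {r : ℤ}
    (μ : MMap L M m r) : Prop :=
  ∀ (d : Fin m → ℤ) (x : ∀ j, L (d j)) (j : Fin m),
    (∀ a b : L (d j), μ d (Function.update x j (a + b))
        = μ d (Function.update x j a) + μ d (Function.update x j b)) ∧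
    (∀ (c : k) (a : L (d j)), μ d (Function.update x j (c • a)) = c • μ d (Function.update x j a))

/-! ## Permutations (0-indexed; a cycle `(a b c)` is `swap a b * swap b c`) -/

def P12 (m : ℕ) [NeZero m] : Equiv.Perm (Fin m) := Equiv.swap 0 1
def P13 (m : ℕ) [NeZero m] : Equiv.Perm (Fin m) := Equiv.swap 0 2
def P23 (m : ℕ) [NeZero m] : Equiv.Perm (Fin m) := Equiv.swap 1 2
def P34 (m : ℕ) [NeZero m] : Equiv.Perm (Fin m) := Equiv.swap 2 3
def P123 (m : ℕ) [NeZero m] : Equiv.Perm (Fin m) := Equiv.swap 0 1 * Equiv.swap 1 2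
def P132 (m : ℕ) [NeZero m] : Equiv.Perm (Fin m) := Equiv.swap 0 2 * Equiv.swap 2 1
def P234 (m : ℕ) [NeZero m] : Equiv.Perm (Fin m) := Equiv.swap 1 2 * Equiv.swap 2 3
def P243 (m : ℕ) [NeZero m] : Equiv.Perm (Fin m) := Equiv.swap 1 3 * Equiv.swap 3 2
def P1234 (m : ℕ) [NeZero m] : Equiv.Perm (Fin m) :=
  Equiv.swap 0 1 * Equiv.swap 1 2 * Equiv.swap 2 3
def P1432 (m : ℕ) [NeZero m] : Equiv.Perm (Fin m) :=
  Equiv.swap 0 3 * Equiv.swap 3 2 * Equiv.swap 2 1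
def P1342 (m : ℕ) [NeZero m] : Equiv.Perm (Fin m) :=
  Equiv.swap 0 2 * Equiv.swap 2 3 * Equiv.swap 3 1
def P13P24 (m : ℕ) [NeZero m] : Equiv.Perm (Fin m) := Equiv.swap 0 2 * Equiv.swap 1 3

end WL3
namespace WL3

open Finset

variable (k : Type) [CommRing k]

/-- A Leibniz 3-algebra structure: maps `l2, l3, l4` on a complex with differential `D`
satisfying the generalized Jacobi identities (L1)–(L4). -/
structure IsLeibniz3 {L : ℤ → Type} [∀ i, AddCommGroup (L i)] [∀ i, Module k (L i)]
    (D : MMap L L 1 (-1)) (l2 : MMap L L 2 0) (l3 : MMap L L 3 1) (l4 : MMap L L 4 2) :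
    Prop where
  lin2 : IsMultilinear k l2
  lin3 : IsMultilinear k l3
  lin4 : IsMultilinear k l4
  eqL1 : bd (-1) D D l2 = 0
  eqL2 : bd 0 D D l3 =
    pc 0 1 0 l2 l2 - pc 0 0 1 l2 l2 - pa (P12 3) (pc 0 1 0 l2 l2)
  eqL3 : bd 1 D D l4 =
    pc 1 0 1 l2 l3 + pc 1 1 0 l2 l3 - pa (P12 4) (pc 1 1 0 l2 l3)
      + pa (P123 4) (pc 1 1 0 l2 l3) - pc 1 0 2 l3 l2
      + pc 1 1 1 l3 l2 - pa (P12 4) (pc 1 1 1 l3 l2)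
      - pc 1 2 0 l3 l2 + pa (P23 4) (pc 1 2 0 l3 l2) - pa (P132 4) (pc 1 2 0 l3 l2)
  eqL4 : (0 : MMap L L 5 2) =
    pc 2 0 1 l2 l4 - pc 2 1 0 l2 l4 + pa (P12 5) (pc 2 1 0 l2 l4)
      - pa (P123 5) (pc 2 1 0 l2 l4) + pa (P1234 5) (pc 2 1 0 l2 l4)
      + pc 2 0 2 l3 l3 + pc 2 1 1 l3 l3 - pa (P12 5) (pc 2 1 1 l3 l3)
      + pa (P123 5) (pc 2 1 1 l3 l3) + pc 2 2 0 l3 l3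
      - pa (P23 5) (pc 2 2 0 l3 l3) + pa (P132 5) (pc 2 2 0 l3 l3)
      + pa (P234 5) (pc 2 2 0 l3 l3) - pa (P1342 5) (pc 2 2 0 l3 l3)
      + pa (P13P24 5) (pc 2 2 0 l3 l3)
      + pc 2 0 3 l4 l2 - pc 2 1 2 l4 l2 + pa (P12 5) (pc 2 1 2 l4 l2)
      + pc 2 2 1 l4 l2 - pa (P23 5) (pc 2 2 1 l4 l2) + pa (P132 5) (pc 2 2 1 l4 l2)
      - pc 2 3 0 l4 l2 + pa (P34 5) (pc 2 3 0 l4 l2) - pa (P243 5) (pc 2 3 0 l4 l2)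
      + pa (P1432 5) (pc 2 3 0 l4 l2)

/-- A weak Lie 3-algebra: a 3-term chain complex equipped with structure maps
`l2, l3, l4, l21, l211, l31, l32` satisfying (L1)–(L4) and (W1)–(W11). -/
structure WeakLie3 (L : ℤ → Type) [∀ i, AddCommGroup (L i)] [∀ i, Module k (L i)] where
  D : MMap L L 1 (-1)
  linD : IsMultilinear k D
  dd : fc1 (-2) D D = 0
  bound : ∀ i : ℤ, (i < 0 ∨ 2 < i) → ∀ x : L i, x = 0
  l2 : MMap L L 2 0
  l3 : MMap L L 3 1
  l4 : MMap L L 4 2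
  l21 : MMap L L 2 1
  l211 : MMap L L 2 2
  l31 : MMap L L 3 2
  l32 : MMap L L 3 2
  leib : IsLeibniz3 k D l2 l3 l4
  lin21 : IsMultilinear k l21
  lin211 : IsMultilinear k l211
  lin31 : IsMultilinear k l31
  lin32 : IsMultilinear k l32
  w1 : bd 0 D D l21 = l2 + pa (P12 2) l2
  w2 : bd 1 D D l211 = l21 - pa (P12 2) l21
  w3 : bd 1 D D l31 = l3 + pa (P12 3) l3 + pc 1 0 1 l2 l21
  w4 : bd 1 D D l32 = l3 + pa (P23 3) l3 - pc 1 1 0 l2 l21 + pc 1 0 1 l21 l2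
        + pa (P12 3) (pc 1 1 0 l21 l2)
  w5 : l211 + pa (P12 2) l211 = 0
  w6 : l31 - pa (P12 3) l31 = pc 2 0 1 l2 l211
  w7 : l31 - pa (P12 3) l32 + pa (P132 3) l31 - l32 + pa (P23 3) l31 - pa (P123 3) l32
        = pc 2 1 0 l21 l21 + pc 2 0 1 l21 l21 + pa (P12 3) (pc 2 1 0 l21 l21)
          + pa (P132 3) (pc 2 1 0 l211 l2)
  w8 : l32 - pa (P23 3) l32 = - pc 2 1 0 l2 l211 + pc 2 0 1 l211 l2
        + pa (P12 3) (pc 2 1 0 l211 l2)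
  w9 : l4 + pa (P12 4) l4 = pc 2 0 1 l2 l31 - pc 2 2 0 l31 l2
        + pa (P123 4) (pc 2 1 0 l2 l31) + pc 2 0 2 l3 l21
  w10 : l4 + pa (P23 4) l4 = pc 2 0 1 l2 l32 - pc 2 1 1 l3 l21 + pc 2 1 0 l2 l31
        - pc 2 0 2 l31 l2 - pa (P12 4) (pc 2 1 1 l31 l2) - pa (P132 4) (pc 2 2 0 l31 l2)
  w11 : l4 + pa (P34 4) l4 = pc 2 0 1 l21 l3 - pc 2 0 2 l32 l2 + pc 2 1 1 l32 l2
        - pa (P12 4) (pc 2 1 1 l32 l2) + pc 2 2 0 l3 l21 + pa (P23 4) (pc 2 2 0 l32 l2)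
        - pa (P132 4) (pc 2 2 0 l32 l2) + pc 2 1 0 l2 l32 - pa (P12 4) (pc 2 1 0 l2 l32)
        + pa (P123 4) (pc 2 1 0 l21 l3)

end WL3
namespace WL3

open Finset

variable (k : Type) [CommRing k]

/-- A weak morphism of weak Lie 3-algebras `(f1,f2,f21,f3) : A → B`, i.e. a solution of
equations (M1)–(M8). -/
structure IsWeakMorphism {L M : ℤ → Type} [∀ i, AddCommGroup (L i)] [∀ i, Module k (L i)]
    [∀ i, AddCommGroup (M i)] [∀ i, Module k (M i)]
    (A : WeakLie3 k L) (B : WeakLie3 k M)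
    (f1 : MMap L M 1 0) (f2 : MMap L M 2 1) (f21 : MMap L M 2 2) (f3 : MMap L M 3 2) :
    Prop where
  lin1 : IsMultilinear k f1
  lin2 : IsMultilinear k f2
  lin21 : IsMultilinear k f21
  lin3 : IsMultilinear k f3
  m1 : bd (-1) B.D A.D f1 = 0
  m2 : bd 0 B.D A.D f2 = fc1 0 f1 A.l2 - fc2 0 B.l2 f1 f1
  m3 : bd 1 B.D A.D f3 = fc1 1 f1 A.l3 - pc 1 1 0 f2 A.l2 + pc 1 0 1 f2 A.l2
        + pa (P12 3) (pc 1 1 0 f2 A.l2) - fc3 1 B.l3 f1 f1 f1 - fc2 1 B.l2 f1 f2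
        + fc2 1 B.l2 f2 f1 + pa (P12 3) (fc2 1 B.l2 f1 f2)
  m4 : fc1 2 f1 A.l4 - fc4 2 B.l4 f1 f1 f1 f1 =
        pc 2 0 1 f2 A.l3 + pc 2 1 0 f2 A.l3 - pa (P12 4) (pc 2 1 0 f2 A.l3)
        + pa (P123 4) (pc 2 1 0 f2 A.l3) - pc 2 0 2 f3 A.l2 + pc 2 1 1 f3 A.l2
        - pa (P12 4) (pc 2 1 1 f3 A.l2) - pc 2 2 0 f3 A.l2 + pa (P23 4) (pc 2 2 0 f3 A.l2)
        - pa (P132 4) (pc 2 2 0 f3 A.l2) + fc2 2 B.l2 f3 f1 + fc2 2 B.l2 f1 f3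
        - pa (P12 4) (fc2 2 B.l2 f1 f3) + pa (P123 4) (fc2 2 B.l2 f1 f3)
        - fc2 2 B.l2 f2 f2 + pa (P23 4) (fc2 2 B.l2 f2 f2) - pa (P132 4) (fc2 2 B.l2 f2 f2)
        + fc3 2 B.l3 f2 f1 f1 - fc3 2 B.l3 f1 f2 f1 + pa (P12 4) (fc3 2 B.l3 f1 f2 f1)
        + fc3 2 B.l3 f1 f1 f2 - pa (P23 4) (fc3 2 B.l3 f1 f1 f2)
        + pa (P132 4) (fc3 2 B.l3 f1 f1 f2)
  m5 : bd 1 B.D A.D f21 = - f2 - pa (P12 2) f2 + fc1 1 f1 A.l21 - fc2 1 B.l21 f1 f1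
  m6 : fc1 2 f1 A.l211 - fc2 2 B.l211 f1 f1 = f21 - pa (P12 2) f21
  m7 : fc1 2 f1 A.l31 - fc3 2 B.l31 f1 f1 f1 =
        f3 + pa (P12 3) f3 + pc 2 0 1 f2 A.l21 + fc2 2 B.l2 f21 f1
  m8 : fc1 2 f1 A.l32 - fc3 2 B.l32 f1 f1 f1 =
        f3 + pa (P23 3) f3 - pc 2 1 0 f2 A.l21 + pc 2 0 1 f21 A.l2
        + pa (P12 3) (pc 2 1 0 f21 A.l2) - fc2 2 B.l2 f1 f21 - fc2 2 B.l21 f2 f1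
        - pa (P12 3) (fc2 2 B.l21 f1 f2)

/-- A morphism of (semi-strict) Lie 3-algebras / Leibniz 3-algebras: equations (M1)–(M4)
for structure maps `(a2,a3,a4)` on the source and `(b2,b3,b4)` on the target. -/
structure IsLeibMorphism {L M : ℤ → Type} [∀ i, AddCommGroup (L i)] [∀ i, Module k (L i)]
    [∀ i, AddCommGroup (M i)] [∀ i, Module k (M i)]
    (DL : MMap L L 1 (-1)) (DM : MMap M M 1 (-1))
    (a2 : MMap L L 2 0) (a3 : MMap L L 3 1) (a4 : MMap L L 4 2)
    (b2 : MMap M M 2 0) (b3 : MMap M M 3 1) (b4 : MMap M M 4 2)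
    (f1 : MMap L M 1 0) (f2 : MMap L M 2 1) (f3 : MMap L M 3 2) : Prop where
  lin1 : IsMultilinear k f1
  lin2 : IsMultilinear k f2
  lin3 : IsMultilinear k f3
  m1 : bd (-1) DM DL f1 = 0
  m2 : bd 0 DM DL f2 = fc1 0 f1 a2 - fc2 0 b2 f1 f1
  m3 : bd 1 DM DL f3 = fc1 1 f1 a3 - pc 1 1 0 f2 a2 + pc 1 0 1 f2 a2
        + pa (P12 3) (pc 1 1 0 f2 a2) - fc3 1 b3 f1 f1 f1 - fc2 1 b2 f1 f2
        + fc2 1 b2 f2 f1 + pa (P12 3) (fc2 1 b2 f1 f2)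
  m4 : fc1 2 f1 a4 - fc4 2 b4 f1 f1 f1 f1 =
        pc 2 0 1 f2 a3 + pc 2 1 0 f2 a3 - pa (P12 4) (pc 2 1 0 f2 a3)
        + pa (P123 4) (pc 2 1 0 f2 a3) - pc 2 0 2 f3 a2 + pc 2 1 1 f3 a2
        - pa (P12 4) (pc 2 1 1 f3 a2) - pc 2 2 0 f3 a2 + pa (P23 4) (pc 2 2 0 f3 a2)
        - pa (P132 4) (pc 2 2 0 f3 a2) + fc2 2 b2 f3 f1 + fc2 2 b2 f1 f3
        - pa (P12 4) (fc2 2 b2 f1 f3) + pa (P123 4) (fc2 2 b2 f1 f3)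
        - fc2 2 b2 f2 f2 + pa (P23 4) (fc2 2 b2 f2 f2) - pa (P132 4) (fc2 2 b2 f2 f2)
        + fc3 2 b3 f2 f1 f1 - fc3 2 b3 f1 f2 f1 + pa (P12 4) (fc3 2 b3 f1 f2 f1)
        + fc3 2 b3 f1 f1 f2 - pa (P23 4) (fc3 2 b3 f1 f1 f2)
        + pa (P132 4) (fc3 2 b3 f1 f1 f2)

/-- A deformation retract `(p, i, h)` of `(L, D)` onto `(L', D')`:
`p`, `i` are chain maps, `id - i∘p = D∘h + h∘D` and `p∘i = id`. -/
structure IsDefRetract {L L' : ℤ → Type} [∀ i, AddCommGroup (L i)] [∀ i, Module k (L i)]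
    [∀ i, AddCommGroup (L' i)] [∀ i, Module k (L' i)]
    (D : MMap L L 1 (-1)) (D' : MMap L' L' 1 (-1))
    (p : MMap L L' 1 0) (i : MMap L' L 1 0) (h : MMap L L 1 1) : Prop where
  linp : IsMultilinear k p
  lini : IsMultilinear k i
  linh : IsMultilinear k h
  chainp : bd (-1) D' D p = 0
  chaini : bd (-1) D D' i = 0
  homotopy : idm - fc1 0 i p = fc1 0 D h + fc1 0 h D
  retract : fc1 0 p i = idm

/-- A weak Lie 2-algebra in the sense of Roytenberg (a 2-term truncation of a weak
Lie 3-algebra). -/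
structure WeakLie2 (L : ℤ → Type) [∀ i, AddCommGroup (L i)] [∀ i, Module k (L i)] where
  D : MMap L L 1 (-1)
  linD : IsMultilinear k D
  dd : fc1 (-2) D D = 0
  bound : ∀ i : ℤ, (i < 0 ∨ 1 < i) → ∀ x : L i, x = 0
  l2 : MMap L L 2 0
  l3 : MMap L L 3 1
  l21 : MMap L L 2 1
  lin2 : IsMultilinear k l2
  lin3 : IsMultilinear k l3
  lin21 : IsMultilinear k l21
  e1 : bd (-1) D D l2 = 0
  e2 : bd 0 D D l3 = pc 0 1 0 l2 l2 - pc 0 0 1 l2 l2 - pa (P12 3) (pc 0 1 0 l2 l2)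
  e3 : (0 : MMap L L 4 1) =
    pc 1 0 1 l2 l3 + pc 1 1 0 l2 l3 - pa (P12 4) (pc 1 1 0 l2 l3)
      + pa (P123 4) (pc 1 1 0 l2 l3) - pc 1 0 2 l3 l2
      + pc 1 1 1 l3 l2 - pa (P12 4) (pc 1 1 1 l3 l2)
      - pc 1 2 0 l3 l2 + pa (P23 4) (pc 1 2 0 l3 l2) - pa (P132 4) (pc 1 2 0 l3 l2)
  e4 : bd 0 D D l21 = l2 + pa (P12 2) l2
  e5 : (0 : MMap L L 2 1) = l21 - pa (P12 2) l21
  e6 : (0 : MMap L L 3 1) = l3 + pa (P12 3) l3 + pc 1 0 1 l2 l21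
  e7 : (0 : MMap L L 3 1) = l3 + pa (P23 3) l3 - pc 1 1 0 l2 l21 + pc 1 0 1 l21 l2
        + pa (P12 3) (pc 1 1 0 l21 l2)

end WL3
namespace WL3

open Finset

section Transfer

variable {k : Type} [CommRing k] {L L' : ℤ → Type}
  [∀ i, AddCommGroup (L i)] [∀ i, Module k (L i)]
  [∀ i, AddCommGroup (L' i)] [∀ i, Module k (L' i)]
variable (A : WeakLie3 k L) (p : MMap L L' 1 0) (i : MMap L' L 1 0) (h : MMap L L 1 1)

/-- `h ∘ λ2` -/
def hl2 : MMap L L 2 1 := fc1 1 h A.l2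
/-- `h ∘ λ3` -/
def hl3 : MMap L L 3 2 := fc1 2 h A.l3
/-- `h ∘ λ21` -/
def hl21 : MMap L L 2 2 := fc1 2 h A.l21

/-- Transferred `λ2' = p ∘ λ2 ∘ (i,i)`. -/
def tl2 : MMap L' L' 2 0 := fc1 0 p (fc2 0 A.l2 i i)

/-- Transferred `λ3'`. -/
def tl3 : MMap L' L' 3 1 :=
  fc1 1 p (fc3 1 A.l3 i i i)
  + fc1 1 p (fc3 1 (pc 1 0 1 A.l2 (hl2 A h)
      - (pc 1 1 0 A.l2 (hl2 A h) - pa (P12 3) (pc 1 1 0 A.l2 (hl2 A h)))) i i i)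

/-- Transferred `λ4'`. -/
def tl4 : MMap L' L' 4 2 :=
  fc1 2 p (fc4 2 A.l4 i i i i)
  - fc1 2 p (fc4 2
      (pc 2 0 1 A.l2 (hl3 A h)
        + (pc 2 1 0 A.l2 (hl3 A h) - pa (P12 4) (pc 2 1 0 A.l2 (hl3 A h))
            + pa (P123 4) (pc 2 1 0 A.l2 (hl3 A h)))
        + pc 2 0 2 A.l3 (hl2 A h)
        - (pc 2 1 1 A.l3 (hl2 A h) - pa (P12 4) (pc 2 1 1 A.l3 (hl2 A h)))
        + (pc 2 2 0 A.l3 (hl2 A h) - pa (P23 4) (pc 2 2 0 A.l3 (hl2 A h))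
            + pa (P132 4) (pc 2 2 0 A.l3 (hl2 A h)))) i i i i)
  - fc1 2 p (fc4 2
      (pc 2 0 2 (pc 1 0 1 A.l2 (hl2 A h)) (hl2 A h)
        - (pc 2 1 1 (pc 1 0 1 A.l2 (hl2 A h)) (hl2 A h)
            - pa (P12 4) (pc 2 1 1 (pc 1 0 1 A.l2 (hl2 A h)) (hl2 A h)))
        + (fc2 2 A.l2 (hl2 A h) (hl2 A h) - pa (P23 4) (fc2 2 A.l2 (hl2 A h) (hl2 A h))
            + pa (P132 4) (fc2 2 A.l2 (hl2 A h) (hl2 A h)))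
        + (pc 2 1 1 (pc 1 1 0 A.l2 (hl2 A h)) (hl2 A h)
            - pa (P12 4) (pc 2 1 1 (pc 1 1 0 A.l2 (hl2 A h)) (hl2 A h))
            + pa (P123 4) (pc 2 1 1 (pc 1 1 0 A.l2 (hl2 A h)) (hl2 A h)))
        - (pc 2 2 0 (pc 1 1 0 A.l2 (hl2 A h)) (hl2 A h)
            - pa (P12 4) (pc 2 2 0 (pc 1 1 0 A.l2 (hl2 A h)) (hl2 A h))
            + pa (P123 4) (pc 2 2 0 (pc 1 1 0 A.l2 (hl2 A h)) (hl2 A h))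
            - pa (P23 4) (pc 2 2 0 (pc 1 1 0 A.l2 (hl2 A h)) (hl2 A h))
            + pa (P132 4) (pc 2 2 0 (pc 1 1 0 A.l2 (hl2 A h)) (hl2 A h))
            - pa (P13 4) (pc 2 2 0 (pc 1 1 0 A.l2 (hl2 A h)) (hl2 A h)))) i i i i)

/-- Transferred `λ21' = p ∘ λ21 ∘ (i,i)`. -/
def tl21 : MMap L' L' 2 1 := fc1 1 p (fc2 1 A.l21 i i)

/-- Transferred `λ211' = p ∘ λ211 ∘ (i,i)`. -/
def tl211 : MMap L' L' 2 2 := fc1 2 p (fc2 2 A.l211 i i)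

/-- Transferred `λ31'`. -/
def tl31 : MMap L' L' 3 2 :=
  fc1 2 p (fc3 2 A.l31 i i i) - fc1 2 p (fc3 2 (pc 2 0 1 A.l2 (hl21 A h)) i i i)

/-- Transferred `λ32'`. -/
def tl32 : MMap L' L' 3 2 :=
  fc1 2 p (fc3 2 A.l32 i i i)
  + fc1 2 p (fc3 2 (pc 2 0 1 A.l21 (hl2 A h) + pc 2 1 0 A.l2 (hl21 A h)
      + pa (P12 3) (pc 2 1 0 A.l21 (hl2 A h))) i i i)

/-- Extension of `i`: `i₂ = -h ∘ λ2 ∘ (i,i)`. -/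
def ti2 : MMap L' L 2 1 := - fc1 1 h (fc2 0 A.l2 i i)

/-- Extension of `i`: `i₂₁ = -h ∘ λ21 ∘ (i,i)`. -/
def ti21 : MMap L' L 2 2 := - fc1 2 h (fc2 1 A.l21 i i)

/-- Extension of `i`: `i₃`. -/
def ti3 : MMap L' L 3 2 :=
  - fc1 2 h (fc3 1 A.l3 i i i)
  - fc1 2 h (fc3 1 (pc 1 0 1 A.l2 (hl2 A h)
      - (pc 1 1 0 A.l2 (hl2 A h) - pa (P12 3) (pc 1 1 0 A.l2 (hl2 A h)))) i i i)

end Transfer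

section Skew

variable (k : Type) [CommRing k] [Invertible (2 : k)] [Invertible (3 : k)]
variable {L M : ℤ → Type} [∀ i, AddCommGroup (L i)] [∀ i, Module k (L i)]
  [∀ i, AddCommGroup (M i)] [∀ i, Module k (M i)]

/-- Skew-symmetrization `λ̄2` of a weak Lie 3-algebra. -/
def skew2 (A : WeakLie3 k L) : MMap L L 2 0 :=
  (⅟ (2 : k)) • ∑ σ : Equiv.Perm (Fin 2), (Equiv.Perm.sign σ : ℤ) • pa σ A.l2

/-- Skew-symmetrization `λ̄3` of a weak Lie 3-algebra. -/
def skew3 (A : WeakLie3 k L) : MMap L L 3 1 :=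
  (⅟ (2 : k) * ⅟ (3 : k)) • ∑ σ : Equiv.Perm (Fin 3), (Equiv.Perm.sign σ : ℤ) • pa σ A.l3
  - (⅟ (2 : k) * ⅟ (2 : k) * ⅟ (2 : k) * ⅟ (3 : k)) •
      ∑ σ : Equiv.Perm (Fin 3), (Equiv.Perm.sign σ : ℤ) •
        pa σ (pc 1 0 1 A.l21 A.l2 + pc 1 1 0 A.l21 A.l2)

/-- Skew-symmetrization `λ̄4` of a weak Lie 3-algebra. -/
def skew4 (A : WeakLie3 k L) : MMap L L 4 2 :=
  (⅟ (2 : k) * ⅟ (2 : k) * ⅟ (2 : k) * ⅟ (3 : k)) •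
      ∑ σ : Equiv.Perm (Fin 4), (Equiv.Perm.sign σ : ℤ) • pa σ A.l4
  + (⅟ (2 : k) * ⅟ (2 : k) * ⅟ (2 : k) * ⅟ (2 : k) * ⅟ (3 : k)) •
      ∑ σ : Equiv.Perm (Fin 4), (Equiv.Perm.sign σ : ℤ) •
        pa σ (pc 2 0 1 A.l21 A.l3 - pc 2 0 2 A.l31 A.l2 + pc 2 1 1 A.l32 A.l2
          - pc 2 1 0 A.l21 A.l3 - pc 2 1 1 A.l31 A.l2 + pc 2 2 0 A.l32 A.l2)

/-- Skew-symmetrization `f̄2` of the second component of a weak morphism. -/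
def skewMor2 (f2 : MMap L M 2 1) : MMap L M 2 1 :=
  (⅟ (2 : k)) • ∑ σ : Equiv.Perm (Fin 2), (Equiv.Perm.sign σ : ℤ) • pa σ f2

/-- Skew-symmetrization `f̄3` of the third component of a weak morphism `A → B`. -/
def skewMor3 (A : WeakLie3 k L) (B : WeakLie3 k M) (f1 : MMap L M 1 0) (f2 : MMap L M 2 1)
    (f21 : MMap L M 2 2) (f3 : MMap L M 3 2) : MMap L M 3 2 :=
  (⅟ (2 : k) * ⅟ (3 : k)) • ∑ σ : Equiv.Perm (Fin 3), (Equiv.Perm.sign σ : ℤ) • pa σ f3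
  - (⅟ (2 : k) * ⅟ (2 : k) * ⅟ (2 : k) * ⅟ (3 : k)) •
      ∑ σ : Equiv.Perm (Fin 3), (Equiv.Perm.sign σ : ℤ) •
        pa σ (pc 2 0 1 f21 A.l2 + pc 2 1 0 f21 A.l2
          - fc2 2 B.l21 f2 f1 - fc2 2 B.l21 f1 f2)

end Skew

section Comp

variable {k : Type} [CommRing k] {L M N : ℤ → Type}
  [∀ i, AddCommGroup (L i)] [∀ i, Module k (L i)]
  [∀ i, AddCommGroup (M i)] [∀ i, Module k (M i)]
  [∀ i, AddCommGroup (N i)] [∀ i, Module k (N i)]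

/-- First component of the composition of weak morphisms. -/
def cmp1 (f1' : MMap M N 1 0) (f1 : MMap L M 1 0) : MMap L N 1 0 := fc1 0 f1' f1

/-- Second component of the composition of weak morphisms. -/
def cmp2 (f1' : MMap M N 1 0) (f2' : MMap M N 2 1) (f1 : MMap L M 1 0) (f2 : MMap L M 2 1) :
    MMap L N 2 1 := fc2 1 f2' f1 f1 + fc1 1 f1' f2

/-- `(f'∘f)21` component of the composition of weak morphisms. -/
def cmp21 (f1' : MMap M N 1 0) (f21' : MMap M N 2 2) (f1 : MMap L M 1 0)
    (f21 : MMap L M 2 2) : MMap L N 2 2 := fc2 2 f21' f1 f1 + fc1 2 f1' f21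

/-- Third component of the composition of weak morphisms. -/
def cmp3 (f1' : MMap M N 1 0) (f2' : MMap M N 2 1) (f3' : MMap M N 3 2)
    (f1 : MMap L M 1 0) (f2 : MMap L M 2 1) (f3 : MMap L M 3 2) : MMap L N 3 2 :=
  fc3 2 f3' f1 f1 f1 - fc2 2 f2' f2 f1 + fc2 2 f2' f1 f2 - pa (P12 3) (fc2 2 f2' f1 f2)
    + fc1 2 f1' f3

end Comp

end WL3

/-!
Put `P = i ∘ p`, so `∂h = id - P`. Since `i ∘ λ' = P ∘ (perturbed bracket) ∘ (i, …, i)`, each of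
(M2)–(M8) is the restriction along `i` of an identity between maps on `L` itself, obtained by
applying `h` or `P` to the equations of `λ`: for `∂μ = ν` one has `∂(h ∘ μ) = μ - P ∘ μ - h ∘ ν`.
The equations of top degree need no coherence beyond this, because `h ∘ μ` vanishes when `μ` has
degree 2, whence `P ∘ μ = μ - h ∘ ∂μ`. Moreover a degree-2 map between complexes concentrated in
degrees 0, 1, 2 is determined by its values on inputs of degree 0, where all Koszul signs are
trivial; signs in lower degrees are tracked by evaluating maps on words of homogeneous letters.
-/

namespace WL3

section Tuples

variable {L M N : ℤ → Type} [∀ i, AddCommGroup (M i)]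

/-- A homogeneous element of unspecified degree: the letter `(n, X)` stands for the element `X n`
of `L n`. The other components of `X` are irrelevant; they spare us casts between degrees. -/
abbrev Letter (L : ℤ → Type) : Type := ℤ × ∀ n, L n

/-- The family concentrated in degree `n` with value `x`. -/
def el {n : ℤ} (x : M n) : ∀ j, M j := Pi.single n x

theorem el_self {n : ℤ} (x : M n) : el x n = x := Pi.single_eq_same n x

theorem el_injective {n : ℤ} : Function.Injective (el : M n → ∀ j, M j) :=
  Pi.single_injective (M := M) n

theorem el_gcast {i j : ℤ} (h : i = j) (x : M i) : el (gcast h x) = el x := by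
  subst h; rfl

theorem el_zsmul {n : ℤ} (c : ℤ) (x : M n) : el (c • x) = c • el x :=
  Pi.single_smul (f := M) n c x

theorem negOnePow_smul {G : Type} [AddCommGroup G] (n : ℤ) (x : G) :
    n.negOnePow • x = (-1 : ℤ) ^ n.natAbs • x := by
  rw [Units.smul_def, ← Int.coe_negOnePow, Int.cast_id]

/-- The homogeneous element denoted by a letter. -/
def Letter.val (x : Letter M) : ∀ j, M j := el (x.2 x.1)

/-- The value of `μ` on a tuple of letters, as a family of elements; it is concentrated in
degree `r + ∑ j, (x j).1`. -/
def evalTuple {m : ℕ} {r : ℤ} (μ : MMap L M m r) (x : Fin m → Letter L) : ∀ j, M j :=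
  el (μ (fun j => (x j).1) fun j => (x j).2 (x j).1)

theorem el_evalTuple_apply {m : ℕ} {r n : ℤ} (μ : MMap L M m r) (x : Fin m → Letter L)
    (hn : r + ∑ j, (x j).1 = n) : el (evalTuple μ x n) = evalTuple μ x := by
  subst hn; rw [evalTuple, el_self]

theorem el_eq_evalTuple {m : ℕ} {r : ℤ} (μ : MMap L M m r) {d : Fin m → ℤ} {y : ∀ j, L (d j)}
    [∀ i, AddCommGroup (L i)] {x : Fin m → Letter L}
    (h : ∀ j, (x j).1 = d j ∧ el (y j) = (x j).val) :
    el (μ d y) = evalTuple μ x := by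
  obtain rfl : d = fun j => (x j).1 := funext fun j => (h j).1.symm
  rw [evalTuple, show y = fun j => (x j).2 (x j).1 from funext fun j => el_injective (h j).2]

/-- The letter `μ (x₀, …, xₘ₋₁)`. -/
def applyTuple {m : ℕ} {r : ℤ} (μ : MMap L M m r) (x : Fin m → Letter L) : Letter M :=
  (r + ∑ j, (x j).1, evalTuple μ x)

theorem val_applyTuple {m : ℕ} {r : ℤ} (μ : MMap L M m r) (x : Fin m → Letter L) :
    (applyTuple μ x).val = evalTuple μ x :=
  el_evalTuple_apply μ x rfl

theorem el_gcast_evalTuple {m : ℕ} {r n : ℤ} (μ : MMap L M m r) (x : Fin m → Letter L)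
    (h : r + ∑ j, (x j).1 = n) :
    el (gcast h (μ (fun j => (x j).1) fun j => (x j).2 (x j).1)) = el (evalTuple μ x n) := by
  rw [el_gcast, el_evalTuple_apply μ x h, evalTuple]

theorem evalTuple_idm (x : Fin 1 → Letter M) :
    evalTuple (idm : MMap M M 1 0) x = (x 0).val :=
  el_gcast _ _

theorem evalTuple_pa {m : ℕ} {r : ℤ} (σ : Equiv.Perm (Fin m)) (μ : MMap L M m r)
    (x : Fin m → Letter L) :
    evalTuple (pa σ μ) x =
      koszulSign (fun j => (x j).1) σ • evalTuple μ (fun j => x (σ.symm j)) := by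
  simp only [evalTuple, pa, el_zsmul, el_gcast]

theorem evalTuple_pcomp [∀ i, AddCommGroup (L i)] (m₁ m₂ : ℕ) {n : ℕ} {r s : ℤ}
    (μ : MMap L M (m₁ + 1 + m₂) r) (ν : MMap L L n s) (x : Fin (m₁ + n + m₂) → Letter L) :
    evalTuple (pcomp m₁ m₂ μ ν) x =
      (s * ∑ j : Fin m₁, (x (.castAdd m₂ (.castAdd n j))).1).negOnePow •
        evalTuple μ (Fin.append
          (Fin.append (fun j => x (.castAdd m₂ (.castAdd n j)))
            ![applyTuple ν fun j => x (.castAdd m₂ (.natAdd m₁ j))])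
          fun j => x (.natAdd (m₁ + n) j)) := by
  rw [evalTuple, pcomp, el_zsmul, el_gcast, negOnePow_smul]
  congr 1
  refine el_eq_evalTuple μ fun j => ?_
  induction j using Fin.addCases with
  | left j =>
    induction j using Fin.addCases with
    | left j =>
      simp only [Fin.addCases_left, el_gcast, Fin.append_left, outDeg_left]
      exact ⟨trivial, rfl⟩
    | right j =>
      simp only [Fin.addCases_left, Fin.addCases_right, el_gcast, Fin.append_left,
        Fin.append_right, outDeg_mid, Matrix.cons_val_fin_one]
      exact ⟨rfl, (val_applyTuple ν _).symm⟩
  | right j =>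
    simp only [Fin.addCases_right, el_gcast, Fin.append_right, outDeg_right]
    exact ⟨trivial, rfl⟩

section Composition

variable [∀ i, AddCommGroup (N i)]

theorem evalTuple_comp₁ {a : ℕ} {r s : ℤ} (μ : MMap M N 1 r) (g : MMap L M a s)
    (x : Fin a → Letter L) : evalTuple (comp₁ μ g) x = evalTuple μ ![applyTuple g x] := by
  rw [evalTuple, comp₁, el_gcast]
  refine el_eq_evalTuple μ fun j => ?_
  rw [Matrix.cons_val_fin_one, val_applyTuple]
  exact ⟨rfl, rfl⟩

theorem evalTuple_comp₂ {a b : ℕ} {r s₁ s₂ : ℤ} (μ : MMap M N 2 r) (g₁ : MMap L M a s₁)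
    (g₂ : MMap L M b s₂) (x : Fin (a + b) → Letter L) :
    evalTuple (comp₂ μ g₁ g₂) x =
      (s₂ * ∑ j : Fin a, (x (.castAdd b j)).1).negOnePow •
        evalTuple μ
          ![applyTuple g₁ fun j => x (.castAdd b j), applyTuple g₂ fun j => x (.natAdd a j)] := by
  rw [evalTuple, comp₂, el_zsmul, el_gcast, negOnePow_smul]
  congr 1
  refine el_eq_evalTuple μ fun j => ?_
  fin_cases j
  · exact ⟨rfl, el_gcast_evalTuple g₁ (fun _ => x _) rfl⟩
  · exact ⟨rfl, el_gcast_evalTuple g₂ (fun _ => x _) rfl⟩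

theorem evalTuple_comp₃ {a b c : ℕ} {r s₁ s₂ s₃ : ℤ} (μ : MMap M N 3 r) (g₁ : MMap L M a s₁)
    (g₂ : MMap L M b s₂) (g₃ : MMap L M c s₃) (x : Fin (a + b + c) → Letter L) :
    evalTuple (comp₃ μ g₁ g₂ g₃) x =
      (s₂ * ∑ j : Fin a, (x (.castAdd c (.castAdd b j))).1
          + s₃ * (∑ j : Fin a, (x (.castAdd c (.castAdd b j))).1
            + ∑ j : Fin b, (x (.castAdd c (.natAdd a j))).1)).negOnePow •
        evalTuple μ
          ![applyTuple g₁ fun j => x (.castAdd c (.castAdd b j)),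
            applyTuple g₂ fun j => x (.castAdd c (.natAdd a j)),
            applyTuple g₃ fun j => x (.natAdd (a + b) j)] := by
  rw [evalTuple, comp₃, el_zsmul, el_gcast, negOnePow_smul]
  congr 1
  refine el_eq_evalTuple μ fun j => ?_
  fin_cases j
  · exact ⟨rfl, el_gcast_evalTuple g₁ (fun _ => x _) rfl⟩
  · exact ⟨rfl, el_gcast_evalTuple g₂ (fun _ => x _) rfl⟩
  · exact ⟨rfl, el_gcast_evalTuple g₃ (fun _ => x _) rfl⟩

theorem evalTuple_comp₄ {a b c e : ℕ} {r s₁ s₂ s₃ s₄ : ℤ} (μ : MMap M N 4 r)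
    (g₁ : MMap L M a s₁) (g₂ : MMap L M b s₂) (g₃ : MMap L M c s₃) (g₄ : MMap L M e s₄)
    (x : Fin (a + b + c + e) → Letter L) :
    evalTuple (comp₄ μ g₁ g₂ g₃ g₄) x =
      (s₂ * ∑ j : Fin a, (x (.castAdd e (.castAdd c (.castAdd b j)))).1
          + s₃ * (∑ j : Fin a, (x (.castAdd e (.castAdd c (.castAdd b j)))).1
            + ∑ j : Fin b, (x (.castAdd e (.castAdd c (.natAdd a j)))).1)
          + s₄ * (∑ j : Fin a, (x (.castAdd e (.castAdd c (.castAdd b j)))).1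
            + ∑ j : Fin b, (x (.castAdd e (.castAdd c (.natAdd a j)))).1
            + ∑ j : Fin c, (x (.castAdd e (.natAdd (a + b) j))).1)).negOnePow •
        evalTuple μ
          ![applyTuple g₁ fun j => x (.castAdd e (.castAdd c (.castAdd b j))),
            applyTuple g₂ fun j => x (.castAdd e (.castAdd c (.natAdd a j))),
            applyTuple g₃ fun j => x (.castAdd e (.natAdd (a + b) j)),
            applyTuple g₄ fun j => x (.natAdd (a + b + c) j)] := by
  rw [evalTuple, comp₄, el_zsmul, el_gcast, negOnePow_smul]
  congr 1
  refine el_eq_evalTuple μ fun j => ?_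
  fin_cases j
  · exact ⟨rfl, el_gcast_evalTuple g₁ (fun _ => x _) rfl⟩
  · exact ⟨rfl, el_gcast_evalTuple g₂ (fun _ => x _) rfl⟩
  · exact ⟨rfl, el_gcast_evalTuple g₃ (fun _ => x _) rfl⟩
  · exact ⟨rfl, el_gcast_evalTuple g₄ (fun _ => x _) rfl⟩

end Composition

end Tuples

section Degree

variable {L : ℤ → Type}

/-- A tensor monomial `x₁ ⊗ ⋯ ⊗ xₘ` of homogeneous elements. Words are lists, so that inserting
and composing multilinear maps become operations on lists without casts. -/
abbrev Word (L : ℤ → Type) : Type := List (Letter L)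

/-- The total degree of a word. -/
def Word.deg (w : Word L) : ℤ := (w.map Prod.fst).sum

@[simp] theorem Word.deg_nil : Word.deg ([] : Word L) = 0 := rfl

@[simp] theorem Word.deg_cons (x : Letter L) (w : Word L) : Word.deg (x :: w) = x.1 + w.deg :=
  List.sum_cons

@[simp] theorem Word.deg_append (v w : Word L) : Word.deg (v ++ w) = v.deg + w.deg := by
  simp only [Word.deg, List.map_append, List.sum_append]

theorem Word.deg_ofFn {m : ℕ} (x : Fin m → Letter L) :
    Word.deg (List.ofFn x) = ∑ j, (x j).1 := by
  simp only [Word.deg, List.map_ofFn, List.sum_ofFn, Function.comp_apply]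

theorem exists_eq_ofFn {m : ℕ} {w : Word L} (hw : w.length = m) :
    ∃ x : Fin m → Letter L, w = List.ofFn x := by
  subst hw; exact ⟨_, (List.ofFn_get w).symm⟩

theorem exists_eq_append {a b : ℕ} {w : Word L} (hw : w.length = a + b) :
    ∃ u v, w = u ++ v ∧ u.length = a ∧ v.length = b :=
  ⟨w.take a, w.drop a, (w.take_append_drop a).symm, by grind, by grind⟩

end Degree

section Words

variable {L M N : ℤ → Type} [∀ i, AddCommGroup (L i)] [∀ i, AddCommGroup (M i)]
  [∀ i, AddCommGroup (N i)]

/-- The value of an `m`-ary map on a word of length `m`. Words of any other length are cut off or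
padded with zeros, so `ev` is used for words of length `m` only. -/
def ev {m : ℕ} {r : ℤ} (μ : MMap L M m r) (w : Word L) : ∀ j, M j :=
  evalTuple μ fun j => w.getD j 0

/-- The letter `μ (x₁, …, xₘ)`, where `w` is the word `x₁ … xₘ`. -/
def app {m : ℕ} {r : ℤ} (μ : MMap L M m r) (w : Word L) : Letter M := (r + w.deg, ev μ w)

theorem ev_ofFn {m : ℕ} {r : ℤ} (μ : MMap L M m r) (x : Fin m → Letter L) :
    ev μ (List.ofFn x) = evalTuple μ x := by
  simp [ev]

theorem app_ofFn {m : ℕ} {r : ℤ} (μ : MMap L M m r) (x : Fin m → Letter L) :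
    app μ (List.ofFn x) = applyTuple μ x := by
  rw [app, applyTuple, ev_ofFn, Word.deg_ofFn]

theorem val_app {m : ℕ} {r : ℤ} (μ : MMap L M m r) {w : Word L} (hw : w.length = m) :
    (app μ w).val = ev μ w := by
  obtain ⟨x, rfl⟩ := exists_eq_ofFn hw
  rw [app_ofFn, val_applyTuple, ev_ofFn]

theorem ext_ev {m : ℕ} {r : ℤ} {μ ν : MMap L M m r}
    (H : ∀ w : Word L, w.length = m → ev μ w = ev ν w) : μ = ν := by
  funext d x
  have hx := H (List.ofFn fun j => (d j, el (x j))) (List.length_ofFn ..)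
  simpa only [ev_ofFn, evalTuple, el_self, el_injective.eq_iff] using hx

theorem ev_mcast {m m' : ℕ} {r r' : ℤ} (hm : m = m') (hr : r = r') (μ : MMap L M m r)
    (w : Word L) : ev (mcast hm hr μ) w = ev μ w := by
  subst hm hr; rfl

@[simp] theorem ev_zero {m : ℕ} {r : ℤ} (w : Word L) : ev (0 : MMap L M m r) w = 0 :=
  Pi.single_zero _

@[simp] theorem ev_add {m : ℕ} {r : ℤ} (μ ν : MMap L M m r) (w : Word L) :
    ev (μ + ν) w = ev μ w + ev ν w :=
  Pi.single_add ..

@[simp] theorem ev_sub {m : ℕ} {r : ℤ} (μ ν : MMap L M m r) (w : Word L) :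
    ev (μ - ν) w = ev μ w - ev ν w :=
  Pi.single_sub ..

@[simp] theorem ev_neg {m : ℕ} {r : ℤ} (μ : MMap L M m r) (w : Word L) :
    ev (-μ) w = -ev μ w :=
  Pi.single_neg ..

theorem ev_zsmul {m : ℕ} {r : ℤ} (c : ℤ) (μ : MMap L M m r) (w : Word L) :
    ev (c • μ) w = c • ev μ w :=
  el_zsmul ..

theorem ev_sum {ι : Type} {m : ℕ} {r : ℤ} (s : Finset ι) (μ : ι → MMap L M m r) (w : Word L) :
    ev (∑ j ∈ s, μ j) w = ∑ j ∈ s, ev (μ j) w :=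
  map_sum (AddMonoidHom.mk' (fun μ : MMap L M m r => ev μ w) fun μ ν => ev_add μ ν w) μ s

@[simp] theorem ev_idm (x : Letter M) : ev (idm : MMap M M 1 0) [x] = x.val := evalTuple_idm _

theorem ev_pcomp {m₁ m₂ n : ℕ} {r s : ℤ} (μ : MMap L M (m₁ + 1 + m₂) r) (ν : MMap L L n s)
    {u v w : Word L} (hu : u.length = m₁) (hv : v.length = n) (hw : w.length = m₂) :
    ev (pcomp m₁ m₂ μ ν) (u ++ v ++ w) = (s * u.deg).negOnePow • ev μ (u ++ app ν v :: w) := by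
  obtain ⟨x, rfl⟩ := exists_eq_ofFn hu
  obtain ⟨y, rfl⟩ := exists_eq_ofFn hv
  obtain ⟨z, rfl⟩ := exists_eq_ofFn hw
  have hxyz : List.ofFn x ++ app ν (List.ofFn y) :: List.ofFn z =
      List.ofFn (Fin.append (Fin.append x ![app ν (List.ofFn y)]) z) := by
    rw [List.ofFn_fin_append, List.ofFn_fin_append, List.append_assoc]; rfl
  rw [hxyz, ← List.ofFn_fin_append, ← List.ofFn_fin_append, ev_ofFn, ev_ofFn, evalTuple_pcomp,
    app_ofFn, Word.deg_ofFn]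
  simp only [Fin.append_left, Fin.append_right]

theorem ev_pc {R : ℤ} {m₁ m₂ n : ℕ} {r s : ℤ} (μ : MMap L M (m₁ + 1 + m₂) r) (ν : MMap L L n s)
    (h : r + s = R) {u v w : Word L} (hu : u.length = m₁) (hv : v.length = n)
    (hw : w.length = m₂) :
    ev (pc R m₁ m₂ μ ν h) (u ++ v ++ w) =
      (s * u.deg).negOnePow • ev μ (u ++ app ν v :: w) := by
  rw [pc, ev_mcast, ev_pcomp μ ν hu hv hw]

theorem ev_fc1 {R : ℤ} {a : ℕ} {r s : ℤ} (μ : MMap M N 1 r) (g : MMap L M a s)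
    (h : r + s = R) {w : Word L} (hw : w.length = a) :
    ev (fc1 R μ g h) w = ev μ [app g w] := by
  obtain ⟨x, rfl⟩ := exists_eq_ofFn hw
  rw [fc1, ev_mcast, ev_ofFn, evalTuple_comp₁, app_ofFn, ← ev_ofFn μ]
  rfl

theorem ev_fc2 {R : ℤ} {a b : ℕ} {r s₁ s₂ : ℤ} (μ : MMap M N 2 r) (g₁ : MMap L M a s₁)
    (g₂ : MMap L M b s₂) (h : r + (s₁ + s₂) = R) {u v : Word L} (hu : u.length = a)
    (hv : v.length = b) :
    ev (fc2 R μ g₁ g₂ h) (u ++ v) = (s₂ * u.deg).negOnePow • ev μ [app g₁ u, app g₂ v] := by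
  obtain ⟨x, rfl⟩ := exists_eq_ofFn hu
  obtain ⟨y, rfl⟩ := exists_eq_ofFn hv
  rw [fc2, ev_mcast, ← List.ofFn_fin_append, ev_ofFn, evalTuple_comp₂]
  simp only [Fin.append_left, Fin.append_right, app_ofFn, Word.deg_ofFn, ← ev_ofFn μ]
  rfl

theorem ev_fc3 {R : ℤ} {a b c : ℕ} {r s₁ s₂ s₃ : ℤ} (μ : MMap M N 3 r) (g₁ : MMap L M a s₁)
    (g₂ : MMap L M b s₂) (g₃ : MMap L M c s₃) (h : r + (s₁ + s₂ + s₃) = R) {u v w : Word L}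
    (hu : u.length = a) (hv : v.length = b) (hw : w.length = c) :
    ev (fc3 R μ g₁ g₂ g₃ h) (u ++ v ++ w) =
      (s₂ * u.deg + s₃ * (u.deg + v.deg)).negOnePow • ev μ [app g₁ u, app g₂ v, app g₃ w] := by
  obtain ⟨x, rfl⟩ := exists_eq_ofFn hu
  obtain ⟨y, rfl⟩ := exists_eq_ofFn hv
  obtain ⟨z, rfl⟩ := exists_eq_ofFn hw
  rw [fc3, ev_mcast, ← List.ofFn_fin_append, ← List.ofFn_fin_append, ev_ofFn, evalTuple_comp₃]
  simp only [Fin.append_left, Fin.append_right, app_ofFn, Word.deg_ofFn, ← ev_ofFn μ]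
  rfl

theorem ev_fc4 {R : ℤ} {a b c e : ℕ} {r s₁ s₂ s₃ s₄ : ℤ} (μ : MMap M N 4 r)
    (g₁ : MMap L M a s₁) (g₂ : MMap L M b s₂) (g₃ : MMap L M c s₃) (g₄ : MMap L M e s₄)
    (h : r + (s₁ + s₂ + s₃ + s₄) = R) {t u v w : Word L} (ht : t.length = a)
    (hu : u.length = b) (hv : v.length = c) (hw : w.length = e) :
    ev (fc4 R μ g₁ g₂ g₃ g₄ h) (t ++ u ++ v ++ w) =
      (s₂ * t.deg + s₃ * (t.deg + u.deg) + s₄ * (t.deg + u.deg + v.deg)).negOnePow •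
        ev μ [app g₁ t, app g₂ u, app g₃ v, app g₄ w] := by
  obtain ⟨x, rfl⟩ := exists_eq_ofFn ht
  obtain ⟨y, rfl⟩ := exists_eq_ofFn hu
  obtain ⟨z, rfl⟩ := exists_eq_ofFn hv
  obtain ⟨z', rfl⟩ := exists_eq_ofFn hw
  rw [fc4, ev_mcast, ← List.ofFn_fin_append, ← List.ofFn_fin_append, ← List.ofFn_fin_append,
    ev_ofFn, evalTuple_comp₄]
  simp only [Fin.append_left, Fin.append_right, app_ofFn, Word.deg_ofFn, ← ev_ofFn μ]
  rfl

theorem ev_pa {m : ℕ} {r : ℤ} (σ : Equiv.Perm (Fin m)) (μ : MMap L M m r)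
    (x : Fin m → Letter L) :
    ev (pa σ μ) (List.ofFn x) =
      koszulSign (fun j => (x j).1) σ • ev μ (List.ofFn fun j => x (σ.symm j)) := by
  rw [ev_ofFn, ev_ofFn, evalTuple_pa]

end Words

section Multilinear

variable {k : Type} [CommRing k] {L M N : ℤ → Type}
  [∀ i, AddCommGroup (L i)] [∀ i, Module k (L i)]
  [∀ i, AddCommGroup (M i)] [∀ i, Module k (M i)]
  [∀ i, AddCommGroup (N i)] [∀ i, Module k (N i)]

theorem evalTuple_update {m : ℕ} {r : ℤ} (μ : MMap L M m r) (x : Fin m → Letter L) (j : Fin m)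
    (X : ∀ n, L n) :
    evalTuple μ (Function.update x j ((x j).1, X)) =
      el (μ (fun j => (x j).1)
        (Function.update (fun j => (x j).2 (x j).1) j (X (x j).1))) := by
  refine (el_eq_evalTuple μ fun i => ?_).symm
  obtain rfl | hij := eq_or_ne i j
  · rw [Function.update_self, Function.update_self]; exact ⟨rfl, rfl⟩
  · rw [Function.update_of_ne hij, Function.update_of_ne hij]; exact ⟨rfl, rfl⟩

theorem isMultilinear_iff_update {m : ℕ} {r : ℤ} {μ : MMap L M m r} :
    IsMultilinear k μ ↔ ∀ (x : Fin m → Letter L) (j : Fin m),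
      IsLinearMap k fun X => evalTuple μ (Function.update x j ((x j).1, X)) := by
  simp only [evalTuple_update]
  constructor
  · intro hμ x j
    refine ⟨fun X Y => ?_, fun c X => ?_⟩
    · rw [Pi.add_apply, (hμ _ _ j).1]; exact Pi.single_add ..
    · rw [Pi.smul_apply, (hμ _ _ j).2]; exact Pi.single_smul ..
  · intro hμ d x j
    have h := hμ (fun j => (d j, el (x j))) j
    simp only [el_self] at h
    refine ⟨fun a b => el_injective ?_, fun c a => el_injective ?_⟩
    · have hadd := h.map_add (el a) (el b)
      simp only [Pi.add_apply, el_self] at hadd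
      exact hadd.trans (Pi.single_add ..).symm
    · have hsmul := h.map_smul c (el a)
      simp only [Pi.smul_apply, el_self] at hsmul
      exact hsmul.trans (Pi.single_smul ..).symm

theorem ofFn_update {α : Type} {m : ℕ} (x : Fin m → α) (j : Fin m) (a : α) :
    List.ofFn (Function.update x j a) =
      (List.ofFn x).take j ++ a :: (List.ofFn x).drop (j + 1) := by
  apply List.ext_getElem <;> grind [Function.update_apply]

theorem isMultilinear_iff_ev {m : ℕ} {r : ℤ} {μ : MMap L M m r} :
    IsMultilinear k μ ↔ ∀ (u w : Word L) (a : ℤ), u.length + 1 + w.length = m →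
      IsLinearMap k fun X => ev μ (u ++ (a, X) :: w) := by
  rw [isMultilinear_iff_update]
  constructor
  · intro hμ u w a hm
    obtain ⟨x, hx⟩ := exists_eq_ofFn (w := u ++ (a, 0) :: w) (m := m) (by grind)
    have hu : u.length < m := by omega
    have hxu : x ⟨u.length, hu⟩ = (a, 0) := by
      simpa [List.getElem_ofFn] using (List.getElem_of_eq hx (i := u.length) (by simp)).symm
    have h := hμ x ⟨u.length, hu⟩
    simpa [← ev_ofFn, ofFn_update, ← hx, hxu] using h
  · intro hμ x j
    have h := hμ ((List.ofFn x).take j) ((List.ofFn x).drop (j + 1)) (x j).1 (by grind)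
    simpa only [← ofFn_update, ev_ofFn] using h

namespace IsMultilinear

theorem add {m : ℕ} {r : ℤ} {μ ν : MMap L M m r} (hμ : IsMultilinear k μ)
    (hν : IsMultilinear k ν) : IsMultilinear k (μ + ν) := by
  simp only [isMultilinear_iff_ev, ev_add] at hμ hν ⊢
  exact fun u w a hm => ((hμ u w a hm).mk' _ + (hν u w a hm).mk' _).isLinear

theorem zsmul {m : ℕ} {r : ℤ} {μ : MMap L M m r} (hμ : IsMultilinear k μ) (c : ℤ) :
    IsMultilinear k (c • μ) := by
  simp only [isMultilinear_iff_ev, ev_zsmul] at hμ ⊢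
  exact fun u w a hm => (c • (hμ u w a hm).mk' _).isLinear

theorem neg {m : ℕ} {r : ℤ} {μ : MMap L M m r} (hμ : IsMultilinear k μ) :
    IsMultilinear k (-μ) :=
  neg_one_zsmul μ ▸ hμ.zsmul (-1)

theorem sub {m : ℕ} {r : ℤ} {μ ν : MMap L M m r} (hμ : IsMultilinear k μ)
    (hν : IsMultilinear k ν) : IsMultilinear k (μ - ν) :=
  sub_eq_add_neg μ ν ▸ hμ.add hν.neg

theorem pa {m : ℕ} {r : ℤ} {μ : MMap L M m r} (hμ : IsMultilinear k μ)
    (σ : Equiv.Perm (Fin m)) : IsMultilinear k (pa σ μ) := by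
  rw [isMultilinear_iff_update] at hμ ⊢
  intro x j
  have hdeg (X : ∀ n, L n) :
      (fun i => (Function.update x j ((x j).1, X) i).1) = fun i => (x i).1 := by
    grind [Function.update_apply]
  have hperm (X : ∀ n, L n) :
      (fun i => Function.update x j ((x j).1, X) (σ.symm i)) =
        Function.update (fun i => x (σ.symm i)) (σ j) ((x (σ.symm (σ j))).1, X) := by
    rw [Equiv.symm_apply_apply]; exact Function.update_comp_equiv x σ.symm j _
  simp only [evalTuple_pa, hdeg, hperm]
  exact (koszulSign _ σ • (hμ _ (σ j)).mk' _).isLinear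

theorem fc1 {R : ℤ} {a : ℕ} {r s : ℤ} {μ : MMap M N 1 r} {g : MMap L M a s}
    (hμ : IsMultilinear k μ) (hg : IsMultilinear k g) (h : r + s = R) :
    IsMultilinear k (fc1 R μ g h) := by
  rw [isMultilinear_iff_ev] at hμ hg ⊢
  intro u w n hm
  convert ((hμ [] [] (s + Word.deg (u ++ (n, 0) :: w)) rfl).mk' _ ∘ₗ (hg u w n hm).mk' _).isLinear
    using 2 with X
  rw [ev_fc1 _ _ _ (by grind), app]
  simp

theorem pc {R : ℤ} {m₁ m₂ n : ℕ} {r s : ℤ} {μ : MMap L M (m₁ + 1 + m₂) r} {ν : MMap L L n s}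
    (hμ : IsMultilinear k μ) (hν : IsMultilinear k ν) (h : r + s = R) :
    IsMultilinear k (pc R m₁ m₂ μ ν h) := by
  rw [isMultilinear_iff_ev] at hμ hν ⊢
  intro u w a hm
  obtain hu | ⟨hu, hu'⟩ | hu : u.length < m₁ ∨ (m₁ ≤ u.length ∧ u.length < m₁ + n) ∨
      m₁ + n ≤ u.length := by omega
  · obtain ⟨w, w₃, rfl, hw, hw₃⟩ := exists_eq_append (a := m₁ + n - 1 - u.length) (b := m₂)
      (w := w) (by omega)
    obtain ⟨w₁, w₂, rfl, hw₁, hw₂⟩ := exists_eq_append (a := m₁ - 1 - u.length) (b := n)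
      (w := w) (by omega)
    convert ((s * (u.deg + (a + w₁.deg))).negOnePow •
      (hμ u (w₁ ++ WL3.app ν w₂ :: w₃) a (by grind)).mk' _).isLinear using 2 with X
    rw [show u ++ (a, X) :: (w₁ ++ w₂ ++ w₃) = (u ++ (a, X) :: w₁) ++ w₂ ++ w₃ by simp,
      ev_pc _ _ _ (by grind) hw₂ hw₃]
    simp
  · obtain ⟨u₁, u₂, rfl, hu₁, hu₂⟩ := exists_eq_append (a := m₁) (b := u.length - m₁)
      (w := u) (by omega)
    obtain ⟨w₁, w₂, rfl, hw₁, hw₂⟩ := exists_eq_append (a := m₁ + n - 1 - (u₁ ++ u₂).length)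
      (b := m₂) (w := w) (by omega)
    convert ((s * u₁.deg).negOnePow • (hμ u₁ w₂ (s + Word.deg (u₂ ++ (a, 0) :: w₁))
      (by grind)).mk' _ ∘ₗ (hν u₂ w₁ a (by grind)).mk' _).isLinear using 2 with X
    rw [show u₁ ++ u₂ ++ (a, X) :: (w₁ ++ w₂) = u₁ ++ (u₂ ++ (a, X) :: w₁) ++ w₂ by simp,
      ev_pc _ _ _ hu₁ (by grind) hw₂]
    simp [app]
  · obtain ⟨u, u₃, rfl, hu, hu₃⟩ := exists_eq_append (a := m₁ + n) (b := u.length - (m₁ + n))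
      (w := u) (by omega)
    obtain ⟨u₁, u₂, rfl, hu₁, hu₂⟩ := exists_eq_append hu
    convert ((s * u₁.deg).negOnePow • (hμ (u₁ ++ WL3.app ν u₂ :: u₃) w a (by grind)).mk' _).isLinear
      using 2 with X
    rw [show u₁ ++ u₂ ++ u₃ ++ (a, X) :: w = u₁ ++ u₂ ++ (u₃ ++ (a, X) :: w) by simp,
      ev_pc _ _ _ hu₁ hu₂ (by grind)]
    simp

end IsMultilinear

end Multilinear

section Differential

variable {L M : ℤ → Type} [∀ i, AddCommGroup (L i)] [∀ i, AddCommGroup (M i)]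
  {G H : Type} [AddCommGroup G] [AddCommGroup H]

/-- The sum `∑ ± F (x₁, …, D xⱼ, …, xₘ)` with Koszul signs: the precomposition of `F` with the
differential that `D` induces on the tensor algebra. -/
def dsum (D : MMap L L 1 (-1)) : (Word L → G) → Word L → G
  | _, [] => 0
  | F, x :: w => F (app D [x] :: w) + x.1.negOnePow • dsum D (fun v => F (x :: v)) w

variable (D : MMap L L 1 (-1))

theorem dsum_nil (F : Word L → G) : dsum D F [] = 0 := rfl

theorem dsum_cons (F : Word L → G) (x : Letter L) (w : Word L) :
    dsum D F (x :: w) = F (app D [x] :: w) + x.1.negOnePow • dsum D (fun v => F (x :: v)) w :=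
  rfl

theorem dsum_append (F : Word L → G) (u v : Word L) :
    dsum D F (u ++ v) =
      dsum D (fun u' => F (u' ++ v)) u + u.deg.negOnePow • dsum D (fun v' => F (u ++ v')) v := by
  induction u generalizing F with
  | nil => simp [dsum_nil]
  | cons x u ih =>
    simp [dsum_cons, ih, smul_smul, Int.negOnePow_add, add_assoc]

theorem map_dsum (φ : G →+ H) (F : Word L → G) (w : Word L) :
    φ (dsum D F w) = dsum D (fun v => φ (F v)) w := by
  induction w generalizing F with
  | nil => exact map_zero φ
  | cons x w ih => simp only [dsum_cons, map_add, Units.smul_def, map_zsmul, ih]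

theorem dsum_congr {F F' : Word L → G} {w : Word L}
    (h : ∀ v : Word L, v.length = w.length → v.deg = w.deg - 1 → F v = F' v) :
    dsum D F w = dsum D F' w := by
  induction w generalizing F F' with
  | nil => rfl
  | cons x w ih =>
    have hhead : Word.deg (app D [x] :: w) = Word.deg (x :: w) - 1 := by
      simp only [app, Word.deg_cons, Word.deg_nil]
      ring
    have htail (v : Word L) (hv : v.deg = Word.deg w - 1) :
        Word.deg (x :: v) = Word.deg (x :: w) - 1 := by
      rw [Word.deg_cons, Word.deg_cons, hv, add_sub_assoc]
    rw [dsum_cons, dsum_cons, h (app D [x] :: w) (by simp) hhead,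
      ih fun v hv hdeg => h (x :: v) (by simp [hv]) (htail v hdeg)]

theorem dsum_eq_sum (F : Word L → G) (w : Word L) :
    dsum D F w = ∑ j : Fin w.length,
      (Word.deg (w.take j)).negOnePow • F (w.take j ++ app D [w[j]] :: w.drop (j + 1)) := by
  induction w generalizing F with
  | nil => simp [dsum_nil]
  | cons x w ih =>
    rw [dsum_cons, ih]
    simp [Fin.sum_univ_succ, Finset.smul_sum, smul_smul, Int.negOnePow_add]

theorem ev_bd {R : ℤ} {m : ℕ} {r : ℤ} (D' : MMap M M 1 (-1)) (μ : MMap L M m r) (h : -1 + r = R)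
    {w : Word L} (hw : w.length = m) :
    ev (bd R D' D μ h) w = ev D' [app μ w] - r.negOnePow • dsum D (ev μ) w := by
  subst hw
  rw [bd, ev_mcast, bdry, ev_sub, ev_zsmul, ev_sum, negOnePow_smul, dsum_eq_sum,
    ← ev_fc1 D' μ rfl rfl, fc1, ev_mcast]
  congr! 3 with j
  have hj := j.isLt
  have hsplit : w = w.take j ++ [w[j]] ++ w.drop (j + 1) := by simp
  have hcast : ev (mcast (by omega) rfl μ : MMap L M (j + 1 + (w.length - 1 - j)) r) = ev μ :=
    funext (ev_mcast _ _ μ)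
  rw [ev_mcast]
  refine ((congrArg _ hsplit).trans (ev_pcomp _ D (by grind) rfl (by grind))).trans ?_
  rw [hcast, neg_one_mul, Int.negOnePow_neg]

end Differential

section Leibniz

variable {k : Type} [CommRing k] {L M : ℤ → Type}
  [∀ i, AddCommGroup (L i)] [∀ i, AddCommGroup (M i)] [∀ i, Module k (M i)]

theorem IsMultilinear.ev_app_pc {N : ℤ → Type} [∀ i, AddCommGroup (N i)] [∀ i, Module k (N i)]
    {m₁ m₂ n : ℕ} {r s t Q : ℤ} {g : MMap M N 1 t} (hg : IsMultilinear k g)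
    (μ : MMap L M (m₁ + 1 + m₂) r) (ν : MMap L L n s) (hQ : r + s = Q) {x y z : Word L}
    (hx : x.length = m₁) (hy : y.length = n) (hz : z.length = m₂) :
    ev g [app (WL3.pc Q m₁ m₂ μ ν hQ) (x ++ y ++ z)] =
      (s * x.deg).negOnePow • ev g [app μ (x ++ app ν y :: z)] := by
  have hlin := isMultilinear_iff_ev.1 hg [] [] (r + Word.deg (x ++ app ν y :: z)) rfl
  have hdeg : Q + Word.deg (x ++ y ++ z) = r + Word.deg (x ++ app ν y :: z) := by
    simp only [← hQ, Word.deg_append, Word.deg_cons, app]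
    ring
  rw [app, ev_pc μ ν hQ hx hy hz, hdeg]
  exact (hlin.mk' _).toAddMonoidHom.map_zsmul _ _

variable [∀ i, Module k (L i)] (D' : MMap M M 1 (-1)) (D : MMap L L 1 (-1))

theorem IsMultilinear.ev_append_app_bd {m n : ℕ} {r s R : ℤ} {μ : MMap L M m r}
    (hμ : IsMultilinear k μ) (ν : MMap L L n s) (h : -1 + s = R) {u v w : Word L}
    (hv : v.length = n) (hm : u.length + 1 + w.length = m) :
    ev μ (u ++ app (bd R D D ν h) v :: w) =
      ev μ (u ++ app D [app ν v] :: w) -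
        s.negOnePow • dsum D (fun v' => ev μ (u ++ app ν v' :: w)) v := by
  have hφ := isMultilinear_iff_ev.1 hμ u w (R + v.deg) hm
  have hD : app D [app ν v] = (R + v.deg, ev D [app ν v]) := by
    simp only [app, ← h, Word.deg_cons, Word.deg_nil, add_zero, add_assoc]
  have hsum : dsum D (fun v' => ev μ (u ++ app ν v' :: w)) v =
      ev μ (u ++ (R + v.deg, dsum D (ev ν) v) :: w) := by
    refine (dsum_congr D fun v' _ hdeg => ?_).trans
      (map_dsum D (hφ.mk' _).toAddMonoidHom (ev ν) v).symm
    rw [app, hdeg, show s + (v.deg - 1) = R + v.deg by omega]; rfl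
  rw [app, ev_bd D D ν h hv, hD, hsum]
  exact ((hφ.mk' _).map_sub _ _).trans (congrArg _ ((hφ.mk' _).toAddMonoidHom.map_zsmul _ _))

theorem dsum_negOnePow_smul (n : ℤ) (F : Word L → ∀ j, M j) (w : Word L) :
    dsum D (fun v => n.negOnePow • F v) w = n.negOnePow • dsum D F w :=
  (map_dsum D (zsmulAddGroupHom (n.negOnePow : ℤ)) F w).symm

theorem bd_pc {m₁ m₂ n : ℕ} {r s Q R S T : ℤ} {μ : MMap L M (m₁ + 1 + m₂) r}
    (hD' : IsMultilinear k D') (hμ : IsMultilinear k μ) (ν : MMap L L n s) (hQ : r + s = Q)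
    (hR : -1 + Q = R) (hS : -1 + r = S) (hT : -1 + s = T) :
    bd R D' D (pc Q m₁ m₂ μ ν hQ) hR =
      pc R m₁ m₂ (bd S D' D μ hS) ν (by omega) +
        (r.negOnePow : ℤ) • pc R m₁ m₂ μ (bd T D D ν hT) (by omega) := by
  refine ext_ev fun w hw => ?_
  obtain ⟨w, z, rfl, hw, hz⟩ := exists_eq_append hw
  obtain ⟨x, y, rfl, hx, hy⟩ := exists_eq_append hw
  have hxyz : x ++ y ++ z = x ++ (y ++ z) := List.append_assoc ..
  have hx_sum : dsum D (fun x' => ev (pc Q m₁ m₂ μ ν hQ) (x' ++ (y ++ z))) x =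
      (s * (x.deg - 1)).negOnePow • dsum D (fun x' => ev μ (x' ++ app ν y :: z)) x := by
    rw [← dsum_negOnePow_smul]
    refine dsum_congr D fun x' hx' hdeg => ?_
    rw [← List.append_assoc, ev_pc μ ν hQ (hx'.trans hx) hy hz, hdeg]
  have hy_sum : dsum D (fun y' => ev (pc Q m₁ m₂ μ ν hQ) (x ++ (y' ++ z))) y =
      (s * x.deg).negOnePow • dsum D (fun y' => ev μ (x ++ app ν y' :: z)) y := by
    rw [← dsum_negOnePow_smul]
    refine dsum_congr D fun y' hy' _ => ?_
    rw [← List.append_assoc, ev_pc μ ν hQ hx (hy'.trans hy) hz]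
  have hz_sum : dsum D (fun z' => ev (pc Q m₁ m₂ μ ν hQ) (x ++ (y ++ z'))) z =
      (s * x.deg).negOnePow • dsum D (fun z' => ev μ (x ++ app ν y :: z')) z := by
    rw [← dsum_negOnePow_smul]
    refine dsum_congr D fun z' hz' _ => ?_
    rw [← List.append_assoc, ev_pc μ ν hQ hx hy (hz'.trans hz)]
  have hs : (s.negOnePow : ℤ) * s.negOnePow = 1 := by
    rw [← Units.val_mul, Int.units_mul_self, Units.val_one]
  rw [ev_add, ev_zsmul, ev_pc _ _ _ hx hy hz, ev_pc _ _ _ hx hy hz,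
    hμ.ev_append_app_bd D ν hT hy (by omega), ev_bd D D' μ hS (by grind), dsum_append, dsum_cons,
    ev_bd D D' _ hR (by grind), hD'.ev_app_pc μ ν hQ hx hy hz,
    hxyz, dsum_append, dsum_append, hx_sum, hy_sum, hz_sum,
    ← hQ, ← hT]
  simp only [app, mul_sub, add_mul, mul_one, neg_mul, one_mul, Int.negOnePow_add,
    Int.negOnePow_sub, Int.negOnePow_neg, Units.smul_def, Units.val_mul]
  match_scalars <;> grind

end Leibniz

section KoszulSign

theorem coe_koszulSign {m : ℕ} (d : Fin m → ℤ) (σ : Equiv.Perm (Fin m)) :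
    koszulSign d σ =
      (∑ i, ∑ j, if i < j ∧ σ j < σ i then d i * d j else 0).negOnePow := by
  have hprod (s : Finset (Fin m × Fin m)) (f : Fin m × Fin m → ℤ) :
      ((∑ p ∈ s, f p).negOnePow : ℤ) = ∏ p ∈ s, ((f p).negOnePow : ℤ) := by
    induction s using Finset.cons_induction with
    | empty => rfl
    | cons p s hp ih => rw [Finset.sum_cons, Finset.prod_cons, Int.negOnePow_add, Units.val_mul, ih]
  rw [← Fintype.sum_prod_type', ← Finset.sum_filter, hprod, koszulSign]
  exact Finset.prod_congr rfl fun p _ => by rw [← Int.coe_negOnePow ℤ, Int.cast_id]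

theorem koszulSign_update {m : ℕ} (d : Fin m → ℤ) (σ : Equiv.Perm (Fin m)) (j : Fin m) :
    koszulSign (Function.update d j (d j - 1)) σ * (∑ i with i < j, d i).negOnePow =
      koszulSign d σ * (∑ i with σ i < σ j, d i).negOnePow := by
  have hinv : (∑ a, ∑ b, if a < b ∧ σ b < σ a then
        Function.update d j (d j - 1) a * Function.update d j (d j - 1) b else 0) =
      (∑ a, ∑ b, if a < b ∧ σ b < σ a then d a * d b else 0) -
        ((∑ i with j < i ∧ σ i < σ j, d i) + ∑ i with i < j ∧ σ j < σ i, d i) := by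
    have hterm (a b : Fin m) : (if a < b ∧ σ b < σ a then
          Function.update d j (d j - 1) a * Function.update d j (d j - 1) b else 0) =
        (if a < b ∧ σ b < σ a then d a * d b else 0) -
          ((if a = j then if j < b ∧ σ b < σ j then d b else 0 else 0) +
            if b = j then if a < j ∧ σ j < σ a then d a else 0 else 0) := by
      simp only [Function.update_apply]
      split_ifs <;> grind
    simp only [hterm, Finset.sum_sub_distrib, Finset.sum_add_distrib, Finset.sum_ite_eq',
      Finset.mem_univ, if_true, Finset.sum_ite_irrel, Finset.sum_const_zero, Finset.sum_filter]
  have hσ {i : Fin m} : σ i = σ j ↔ i = j := σ.injective.eq_iff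
  have hlt : (∑ i with i < j, d i) =
      (∑ i with i < j ∧ σ i < σ j, d i) + ∑ i with i < j ∧ σ j < σ i, d i := by
    simp only [Finset.sum_filter, ← Finset.sum_add_distrib]
    refine Finset.sum_congr rfl fun i _ => ?_
    rcases lt_trichotomy (σ i) (σ j) with h | h | h
    · simp [h, h.not_gt]
    · simp [hσ.1 h]
    · simp [h, h.not_gt]
  have hσlt : (∑ i with σ i < σ j, d i) =
      (∑ i with i < j ∧ σ i < σ j, d i) + ∑ i with j < i ∧ σ i < σ j, d i := by
    simp only [Finset.sum_filter, ← Finset.sum_add_distrib]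
    refine Finset.sum_congr rfl fun i _ => ?_
    rcases lt_trichotomy i j with h | rfl | h
    · simp [h, h.not_gt]
    · simp
    · simp [h, h.not_gt]
  rw [coe_koszulSign, coe_koszulSign, hinv, hlt, hσlt, ← Units.val_mul, ← Units.val_mul,
    ← Int.negOnePow_add, ← Int.negOnePow_add, Units.val_inj, Int.negOnePow_eq_iff]
  exact ⟨-∑ i with j < i ∧ σ i < σ j, d i, by ring⟩

end KoszulSign

section DifferentialPermutation

variable {k : Type} [CommRing k] {L M : ℤ → Type}
  [∀ i, AddCommGroup (L i)] [∀ i, AddCommGroup (M i)] [∀ i, Module k (M i)]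
  {D' : MMap M M 1 (-1)} (D : MMap L L 1 (-1))

theorem dsum_ofFn {G : Type} [AddCommGroup G] (F : Word L → G) {m : ℕ} (x : Fin m → Letter L) :
    dsum D F (List.ofFn x) = ∑ j, (∑ i with i < j, (x i).1).negOnePow •
      F (List.ofFn (Function.update x j (app D [x j]))) := by
  induction m generalizing F with
  | zero => rfl
  | succ m ih =>
    have hsum (j : Fin m) :
        (∑ i with i < j.succ, (x i).1) = (x 0).1 + ∑ i with i < j, (x i.succ).1 := by
      simp [Finset.sum_filter, Fin.sum_univ_succ]
    have hupdate (j : Fin m) (a : Letter L) :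
        (fun i : Fin m => Function.update x j.succ a i.succ) =
          Function.update (fun i => x i.succ) j a :=
      Function.update_comp_eq_of_injective x (Fin.succ_injective m) j a
    rw [List.ofFn_succ, dsum_cons, ih, Fin.sum_univ_succ]
    simp [hsum, hupdate, Int.negOnePow_add, mul_smul, Finset.smul_sum, List.ofFn_succ,
      Function.update_of_ne (Fin.succ_ne_zero _).symm]

theorem dsum_pa {m : ℕ} {r : ℤ} (σ : Equiv.Perm (Fin m)) (μ : MMap L M m r)
    (x : Fin m → Letter L) :
    dsum D (ev (pa σ μ)) (List.ofFn x) =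
      koszulSign (fun j => (x j).1) σ • dsum D (ev μ) (List.ofFn fun j => x (σ.symm j)) := by
  rw [dsum_ofFn, dsum_ofFn, Finset.smul_sum]
  refine Fintype.sum_equiv σ _ _ fun j => ?_
  have hdeg : (fun i => (Function.update x j (app D [x j]) i).1) =
      Function.update (fun i => (x i).1) j ((x j).1 - 1) := by
    funext i
    rw [Function.update_apply, Function.update_apply]
    split_ifs
    · simp only [app, Word.deg_cons, Word.deg_nil]
      ring
    · rfl
  have hfilter : (∑ i with i < σ j, (x (σ.symm i)).1) = ∑ i with σ i < σ j, (x i).1 := by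
    simp only [Finset.sum_filter]
    rw [← Equiv.sum_comp σ]
    simp only [Equiv.symm_apply_apply]
  have hupdate : (fun i => Function.update x j (app D [x j]) (σ.symm i)) =
      Function.update (fun i => x (σ.symm i)) (σ j) (app D [x j]) :=
    Function.update_comp_equiv x σ.symm j _
  rw [ev_pa, hdeg, hupdate, hfilter, Units.smul_def, Units.smul_def, smul_smul, smul_smul,
    mul_comm, koszulSign_update, Equiv.symm_apply_apply]

theorem IsMultilinear.ev_app_pa {N : ℤ → Type} [∀ i, AddCommGroup (N i)] [∀ i, Module k (N i)]
    {m : ℕ} {r s : ℤ} {g : MMap M N 1 s} (hg : IsMultilinear k g) (σ : Equiv.Perm (Fin m))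
    (μ : MMap L M m r) (x : Fin m → Letter L) :
    ev g [app (WL3.pa σ μ) (List.ofFn x)] =
      koszulSign (fun j => (x j).1) σ • ev g [app μ (List.ofFn fun j => x (σ.symm j))] := by
  have hlin := isMultilinear_iff_ev.1 hg [] [] (r + Word.deg (List.ofFn x)) rfl
  have hdeg : Word.deg (List.ofFn fun j => x (σ.symm j)) = Word.deg (List.ofFn x) := by
    rw [Word.deg_ofFn, Word.deg_ofFn, Equiv.sum_comp σ.symm fun j => (x j).1]
  rw [app, app, ev_pa, hdeg]
  exact (hlin.mk' _).toAddMonoidHom.map_zsmul _ _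

theorem bd_pa {m : ℕ} {r R : ℤ} (hD' : IsMultilinear k D') (σ : Equiv.Perm (Fin m))
    (μ : MMap L M m r) (h : -1 + r = R) :
    bd R D' D (pa σ μ) h = pa σ (bd R D' D μ h) := by
  refine ext_ev fun w hw => ?_
  obtain ⟨x, rfl⟩ := exists_eq_ofFn hw
  rw [ev_bd D D' _ h hw, ev_pa, ev_bd D D' _ h (by simp), hD'.ev_app_pa, dsum_pa, smul_sub,
    smul_comm r.negOnePow]

end DifferentialPermutation

section Additivity

variable {k : Type} [CommRing k] {L M N : ℤ → Type} [∀ i, AddCommGroup (L i)]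
  [∀ i, AddCommGroup (M i)] [∀ i, AddCommGroup (N i)] {R r s : ℤ}

section Unary

variable [∀ i, Module k (M i)] [∀ i, Module k (N i)] {g : MMap M N 1 r}

theorem fc1_add {m : ℕ} (hg : IsMultilinear k g) (μ ν : MMap L M m s) (h : r + s = R) :
    fc1 R g (μ + ν) h = fc1 R g μ h + fc1 R g ν h := by
  refine ext_ev fun w hw => ?_
  simp only [ev_add, ev_fc1 _ _ _ hw, app]
  exact (isMultilinear_iff_ev.1 hg [] [] _ rfl).map_add _ _

theorem fc1_sub {m : ℕ} (hg : IsMultilinear k g) (μ ν : MMap L M m s) (h : r + s = R) :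
    fc1 R g (μ - ν) h = fc1 R g μ h - fc1 R g ν h :=
  (AddMonoidHom.mk' (fun μ => fc1 R g μ h) fun μ ν => fc1_add hg μ ν h).map_sub μ ν

theorem fc1_zero {m : ℕ} (hg : IsMultilinear k g) (h : r + s = R) :
    fc1 R g (0 : MMap L M m s) h = 0 :=
  (AddMonoidHom.mk' (fun μ => fc1 R g μ h) fun μ ν => fc1_add hg μ ν h).map_zero

theorem fc1_pa {m : ℕ} (hg : IsMultilinear k g) (σ : Equiv.Perm (Fin m)) (μ : MMap L M m s)
    (h : r + s = R) : fc1 R g (pa σ μ) h = pa σ (fc1 R g μ h) := by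
  refine ext_ev fun w hw => ?_
  obtain ⟨x, rfl⟩ := exists_eq_ofFn hw
  rw [ev_fc1 _ _ _ hw, ev_pa, ev_fc1 _ _ _ (by simp), hg.ev_app_pa]

theorem fc1_pc {m₁ m₂ n : ℕ} {t S T : ℤ} (hg : IsMultilinear k g)
    (μ : MMap L M (m₁ + 1 + m₂) s) (ν : MMap L L n t) (hS : s + t = S) (h : r + S = R)
    (hT : r + s = T) :
    fc1 R g (pc S m₁ m₂ μ ν hS) h = pc R m₁ m₂ (fc1 T g μ hT) ν (by omega) := by
  refine ext_ev fun w hw => ?_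
  obtain ⟨w, z, rfl, hw', hz⟩ := exists_eq_append hw
  obtain ⟨x, y, rfl, hx, hy⟩ := exists_eq_append hw'
  rw [ev_fc1 _ _ _ hw, ev_pc _ _ _ hx hy hz, ev_fc1 _ _ _ (by grind),
    hg.ev_app_pc μ ν hS hx hy hz]

theorem bd_add {m : ℕ} {D' : MMap M M 1 (-1)} {D : MMap L L 1 (-1)} (hD' : IsMultilinear k D')
    (μ ν : MMap L M m r) (h : -1 + r = R) :
    bd R D' D (μ + ν) h = bd R D' D μ h + bd R D' D ν h := by
  refine ext_ev fun w hw => ?_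
  have hev : dsum D (ev (μ + ν)) w = dsum D (ev μ) w + dsum D (ev ν) w := by
    simp only [dsum_eq_sum, ev_add, smul_add, Finset.sum_add_distrib]
  rw [ev_add, ev_bd D D' _ h hw, ev_bd D D' _ h hw, ev_bd D D' _ h hw, hev, app, ev_add, smul_add,
    ← add_sub_add_comm]
  exact congrArg (· - _) ((isMultilinear_iff_ev.1 hD' [] [] _ rfl).map_add _ _)

theorem bd_sub {m : ℕ} {D' : MMap M M 1 (-1)} {D : MMap L L 1 (-1)} (hD' : IsMultilinear k D')
    (μ ν : MMap L M m r) (h : -1 + r = R) :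
    bd R D' D (μ - ν) h = bd R D' D μ h - bd R D' D ν h :=
  (AddMonoidHom.mk' (fun μ => bd R D' D μ h) fun μ ν => bd_add hD' μ ν h).map_sub μ ν

theorem bd_neg {m : ℕ} {D' : MMap M M 1 (-1)} {D : MMap L L 1 (-1)} (hD' : IsMultilinear k D')
    (μ : MMap L M m r) (h : -1 + r = R) :
    bd R D' D (-μ) h = -bd R D' D μ h :=
  (AddMonoidHom.mk' (fun μ => bd R D' D μ h) fun μ ν => bd_add hD' μ ν h).map_neg μ

end Unary

theorem pa_add {m : ℕ} (σ : Equiv.Perm (Fin m)) (μ ν : MMap L M m r) :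
    pa σ (μ + ν) = pa σ μ + pa σ ν := by
  refine ext_ev fun w hw => ?_
  obtain ⟨x, rfl⟩ := exists_eq_ofFn hw
  simp only [ev_add, ev_pa, smul_add]

theorem pa_neg {m : ℕ} (σ : Equiv.Perm (Fin m)) (μ : MMap L M m r) : pa σ (-μ) = -pa σ μ :=
  (AddMonoidHom.mk' (pa σ) (pa_add (r := r) (M := M) σ)).map_neg μ

theorem pa_sub {m : ℕ} (σ : Equiv.Perm (Fin m)) (μ ν : MMap L M m r) :
    pa σ (μ - ν) = pa σ μ - pa σ ν :=
  (AddMonoidHom.mk' (pa σ) (pa_add (r := r) (M := M) σ)).map_sub μ ν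

section Composition

variable {m₁ m₂ n : ℕ}

theorem add_pc (μ μ' : MMap L M (m₁ + 1 + m₂) r) (ν : MMap L L n s) (h : r + s = R) :
    pc R m₁ m₂ (μ + μ') ν h = pc R m₁ m₂ μ ν h + pc R m₁ m₂ μ' ν h := by
  refine ext_ev fun w hw => ?_
  obtain ⟨w, z, rfl, hw, hz⟩ := exists_eq_append hw
  obtain ⟨x, y, rfl, hx, hy⟩ := exists_eq_append hw
  simp only [ev_add, ev_pc _ _ _ hx hy hz, smul_add]

theorem neg_pc (μ : MMap L M (m₁ + 1 + m₂) r) (ν : MMap L L n s) (h : r + s = R) :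
    pc R m₁ m₂ (-μ) ν h = -pc R m₁ m₂ μ ν h :=
  (AddMonoidHom.mk' (fun μ => pc R m₁ m₂ μ ν h) fun μ μ' => add_pc μ μ' ν h).map_neg μ

theorem sub_pc (μ μ' : MMap L M (m₁ + 1 + m₂) r) (ν : MMap L L n s) (h : r + s = R) :
    pc R m₁ m₂ (μ - μ') ν h = pc R m₁ m₂ μ ν h - pc R m₁ m₂ μ' ν h :=
  (AddMonoidHom.mk' (fun μ => pc R m₁ m₂ μ ν h) fun μ μ' => add_pc μ μ' ν h).map_sub μ μ'

theorem zero_pc (ν : MMap L L n s) (h : r + s = R) :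
    pc R m₁ m₂ (0 : MMap L M (m₁ + 1 + m₂) r) ν h = 0 :=
  (AddMonoidHom.mk' (fun μ : MMap L M (m₁ + 1 + m₂) r => pc R m₁ m₂ μ ν h)
    fun μ μ' => add_pc μ μ' ν h).map_zero

variable [∀ i, Module k (L i)] [∀ i, Module k (M i)] {μ : MMap L M (m₁ + 1 + m₂) r}

theorem pc_add (hμ : IsMultilinear k μ) (ν ν' : MMap L L n s) (h : r + s = R) :
    pc R m₁ m₂ μ (ν + ν') h = pc R m₁ m₂ μ ν h + pc R m₁ m₂ μ ν' h := by
  refine ext_ev fun w hw => ?_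
  obtain ⟨w, z, rfl, hw, hz⟩ := exists_eq_append hw
  obtain ⟨x, y, rfl, hx, hy⟩ := exists_eq_append hw
  simp only [ev_add, ev_pc _ _ _ hx hy hz, app, ← smul_add]
  exact congrArg _ ((isMultilinear_iff_ev.1 hμ x z _ (by omega)).map_add _ _)

theorem pc_neg (hμ : IsMultilinear k μ) (ν : MMap L L n s) (h : r + s = R) :
    pc R m₁ m₂ μ (-ν) h = -pc R m₁ m₂ μ ν h :=
  (AddMonoidHom.mk' (fun ν => pc R m₁ m₂ μ ν h) fun ν ν' => pc_add hμ ν ν' h).map_neg ν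

theorem pc_sub (hμ : IsMultilinear k μ) (ν ν' : MMap L L n s) (h : r + s = R) :
    pc R m₁ m₂ μ (ν - ν') h = pc R m₁ m₂ μ ν h - pc R m₁ m₂ μ ν' h :=
  (AddMonoidHom.mk' (fun ν => pc R m₁ m₂ μ ν h) fun ν ν' => pc_add hμ ν ν' h).map_sub ν ν'

end Composition

end Additivity

section Pull

variable {k : Type} [CommRing k] {L M N N' : ℤ → Type} [∀ i, AddCommGroup (L i)]
  [∀ i, AddCommGroup (M i)] [∀ i, AddCommGroup (N i)] [∀ i, AddCommGroup (N' i)]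

/-- The composition `μ ∘ (f, …, f)` with a map `f` of degree `0` in every argument. -/
def pull (f : MMap L M 1 0) {m : ℕ} {r : ℤ} (μ : MMap M N m r) : MMap L N m r := fun d x =>
  gcast (by simp only [Fin.sum_univ_one, zero_add])
    (μ (fun j => 0 + ∑ _ : Fin 1, d j) fun j => f (fun _ => d j) fun _ => x j)

/-- The word `f x₁ ⊗ ⋯ ⊗ f xₘ`. -/
def Word.mapLetters (f : MMap L M 1 0) (w : Word L) : Word M := w.map fun x => app f [x]

variable (f : MMap L M 1 0)

@[simp] theorem Word.mapLetters_nil : Word.mapLetters f [] = [] := rfl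

@[simp] theorem Word.mapLetters_cons (x : Letter L) (w : Word L) :
    Word.mapLetters f (x :: w) = app f [x] :: w.mapLetters f := rfl

@[simp] theorem Word.mapLetters_append (v w : Word L) :
    Word.mapLetters f (v ++ w) = v.mapLetters f ++ w.mapLetters f := List.map_append

@[simp] theorem Word.length_mapLetters (w : Word L) : (w.mapLetters f).length = w.length :=
  List.length_map _

@[simp] theorem Word.deg_mapLetters (w : Word L) : (w.mapLetters f).deg = w.deg := by
  induction w with
  | nil => rfl
  | cons x w ih => simp [app, ih]

theorem Word.mapLetters_ofFn {m : ℕ} (x : Fin m → Letter L) :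
    Word.mapLetters f (List.ofFn x) = List.ofFn fun j => app f [x j] := List.map_ofFn ..

variable {m : ℕ} {r s : ℤ} {f}

theorem ev_pull (μ : MMap M N m r) {w : Word L} (hw : w.length = m) :
    ev (pull f μ) w = ev μ (w.mapLetters f) := by
  obtain ⟨x, rfl⟩ := exists_eq_ofFn hw
  rw [Word.mapLetters_ofFn, ev_ofFn, ev_ofFn, evalTuple, pull, el_gcast]
  refine el_eq_evalTuple μ fun j => ?_
  have hval : (app f [x j]).val = evalTuple f fun _ => x j :=
    (val_app f rfl).trans (ev_ofFn f fun _ => x j)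
  rw [hval]
  exact ⟨by simp [app], rfl⟩

theorem app_pull (μ : MMap M N m r) {w : Word L} (hw : w.length = m) :
    app (pull f μ) w = app μ (w.mapLetters f) := by
  rw [app, app, ev_pull μ hw, Word.deg_mapLetters]

theorem pull_add (μ ν : MMap M N m r) : pull f (μ + ν) = pull f μ + pull f ν :=
  ext_ev fun w hw => by simp only [ev_add, ev_pull _ hw]

theorem pull_sub (μ ν : MMap M N m r) : pull f (μ - ν) = pull f μ - pull f ν :=
  ext_ev fun w hw => by simp only [ev_sub, ev_pull _ hw]

theorem pull_neg (μ : MMap M N m r) : pull f (-μ) = -pull f μ :=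
  ext_ev fun w hw => by simp only [ev_neg, ev_pull _ hw]

theorem pull_pa (σ : Equiv.Perm (Fin m)) (μ : MMap M N m r) :
    pull f (pa σ μ) = pa σ (pull f μ) := by
  refine ext_ev fun w hw => ?_
  obtain ⟨x, rfl⟩ := exists_eq_ofFn hw
  rw [ev_pa, ev_pull _ hw, ev_pull _ (by simp), Word.mapLetters_ofFn, Word.mapLetters_ofFn, ev_pa]
  simp [app]

theorem IsMultilinear.pull [∀ i, Module k (L i)] [∀ i, Module k (M i)] [∀ i, Module k (N i)]
    {μ : MMap M N m r} (hμ : IsMultilinear k μ) (hf : IsMultilinear k f) :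
    IsMultilinear k (pull f μ) := by
  rw [isMultilinear_iff_ev] at hμ hf ⊢
  intro u w a hm
  convert ((hμ (u.mapLetters f) (w.mapLetters f) (0 + (a + 0)) (by simpa)).mk' _ ∘ₗ
    (hf [] [] a rfl).mk' _).isLinear using 2 with X
  rw [ev_pull _ (by grind)]
  simp [app]

theorem fc1_pull {R : ℤ} (g : MMap N N' 1 s) (μ : MMap M N m r) (h : s + r = R) :
    fc1 R g (pull f μ) h = pull f (fc1 R g μ h) := by
  refine ext_ev fun w hw => ?_
  rw [ev_fc1 _ _ _ hw, ev_pull _ hw, ev_fc1 _ _ _ (by simpa), app_pull μ hw]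

theorem app_fc1 {R : ℤ} (g : MMap M N 1 r) (μ : MMap L M m s) (h : r + s = R) {w : Word L}
    (hw : w.length = m) : app (fc1 R g μ h) w = app g [app μ w] := by
  rw [app, app, ev_fc1 g μ h hw]
  simp [app, ← h, add_assoc]

theorem fc1_fc1 {m : ℕ} {r s t S R T : ℤ} (g : MMap M N 1 r) (g' : MMap L M 1 s)
    (μ : MMap N' L m t) (hS : s + t = S) (hR : r + S = R) (hT : r + s = T) :
    fc1 R g (fc1 S g' μ hS) hR = fc1 R (fc1 T g g' hT) μ (by omega) := by
  refine ext_ev fun w hw => ?_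
  rw [ev_fc1 _ _ _ hw, ev_fc1 _ _ _ hw, ev_fc1 g g' hT rfl, app_fc1 g' μ hS hw]

theorem fc2_eq_pull (μ : MMap M N 2 r) (h : r + (0 + 0) = r) : fc2 r μ f f h = pull f μ := by
  refine ext_ev fun w hw => ?_
  obtain ⟨x, y, rfl, hx, hy⟩ := exists_eq_append hw
  obtain ⟨x, rfl⟩ := List.length_eq_one_iff.1 hx
  obtain ⟨y, rfl⟩ := List.length_eq_one_iff.1 hy
  rw [ev_fc2 _ _ _ _ hx hy, ev_pull μ (by simp)]
  simp

theorem fc3_eq_pull (μ : MMap M N 3 r) (h : r + (0 + 0 + 0) = r) :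
    fc3 r μ f f f h = pull f μ := by
  refine ext_ev fun w hw => ?_
  obtain ⟨w, z, rfl, hw, hz⟩ := exists_eq_append hw
  obtain ⟨x, y, rfl, hx, hy⟩ := exists_eq_append hw
  obtain ⟨x, rfl⟩ := List.length_eq_one_iff.1 hx
  obtain ⟨y, rfl⟩ := List.length_eq_one_iff.1 hy
  obtain ⟨z, rfl⟩ := List.length_eq_one_iff.1 hz
  rw [ev_fc3 _ _ _ _ _ hx hy hz, ev_pull μ (by simp)]
  simp

theorem fc4_eq_pull (μ : MMap M N 4 r) (h : r + (0 + 0 + 0 + 0) = r) :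
    fc4 r μ f f f f h = pull f μ := by
  refine ext_ev fun w hw => ?_
  obtain ⟨w, z, rfl, hw, hz⟩ := exists_eq_append hw
  obtain ⟨w, y, rfl, hw, hy⟩ := exists_eq_append hw
  obtain ⟨t, x, rfl, ht, hx⟩ := exists_eq_append hw
  obtain ⟨t, rfl⟩ := List.length_eq_one_iff.1 ht
  obtain ⟨x, rfl⟩ := List.length_eq_one_iff.1 hx
  obtain ⟨y, rfl⟩ := List.length_eq_one_iff.1 hy
  obtain ⟨z, rfl⟩ := List.length_eq_one_iff.1 hz
  rw [ev_fc4 _ _ _ _ _ _ ht hx hy hz, ev_pull μ (by simp)]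
  simp

theorem fc2_pull_pull {a b : ℕ} {s₁ s₂ R : ℤ} (μ : MMap N N' 2 r) (g₁ : MMap M N a s₁)
    (g₂ : MMap M N b s₂) (h : r + (s₁ + s₂) = R) :
    fc2 R μ (pull f g₁) (pull f g₂) h = pull f (fc2 R μ g₁ g₂ h) := by
  refine ext_ev fun w hw => ?_
  obtain ⟨x, y, rfl, hx, hy⟩ := exists_eq_append hw
  rw [ev_fc2 _ _ _ _ hx hy, ev_pull _ hw, Word.mapLetters_append,
    ev_fc2 _ _ _ _ (by simpa) (by simpa), app_pull _ hx, app_pull _ hy, Word.deg_mapLetters]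

theorem fc2_self_pull {n : ℕ} {R : ℤ} (μ : MMap M N 2 r) (ν : MMap M M n s)
    (h : r + (0 + s) = R) :
    fc2 R μ f (pull f ν) h = pull f (pc R 1 0 μ ν (by omega)) := by
  refine ext_ev fun w hw => ?_
  obtain ⟨x, y, rfl, hx, hy⟩ := exists_eq_append (b := n) hw
  obtain ⟨x, rfl⟩ := List.length_eq_one_iff.1 hx
  have hpc := ev_pc μ ν (by omega : r + s = R) (u := [app f [x]]) (v := y.mapLetters f)
    (w := []) rfl (by simpa) rfl
  rw [ev_fc2 _ _ _ _ hx hy, ev_pull _ hw, app_pull _ hy, Word.mapLetters_append]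
  simp_all [app]

theorem fc2_pull_self {n : ℕ} {R : ℤ} (μ : MMap M N 2 r) (ν : MMap M M n s)
    (h : r + (s + 0) = R) :
    fc2 R μ (pull f ν) f h =
      mcast (by omega) rfl (pull f (pc R 0 1 μ ν (by omega))) := by
  refine ext_ev fun w hw => ?_
  obtain ⟨x, y, rfl, hx, hy⟩ := exists_eq_append hw
  obtain ⟨y, rfl⟩ := List.length_eq_one_iff.1 hy
  have hpc := ev_pc μ ν (by omega : r + s = R) (u := []) (v := x.mapLetters f)
    (w := [app f [y]]) rfl (by simpa) rfl
  rw [ev_fc2 _ _ _ _ hx hy, ev_mcast, ev_pull _ (by omega), app_pull _ hx, Word.mapLetters_append]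
  simp_all [app]

theorem fc3_pull_self_self {n : ℕ} {R : ℤ} (μ : MMap M N 3 r) (ν : MMap M M n s)
    (h : r + (s + 0 + 0) = R) :
    fc3 R μ (pull f ν) f f h =
      mcast (by omega) rfl (pull f (pc R 0 2 μ ν (by omega))) := by
  refine ext_ev fun w hw => ?_
  obtain ⟨w, z, rfl, hw', hz⟩ := exists_eq_append hw
  obtain ⟨x, y, rfl, hx, hy⟩ := exists_eq_append hw'
  obtain ⟨y, rfl⟩ := List.length_eq_one_iff.1 hy
  obtain ⟨z, rfl⟩ := List.length_eq_one_iff.1 hz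
  have hpc := ev_pc μ ν (by omega : r + s = R) (u := []) (v := x.mapLetters f)
    (w := [app f [y], app f [z]]) rfl (by simpa) rfl
  rw [ev_fc3 _ _ _ _ _ hx hy hz, ev_mcast, ev_pull _ (by omega), app_pull _ hx]
  simp_all [app]

theorem fc3_self_pull_self {n : ℕ} {R : ℤ} (μ : MMap M N 3 r) (ν : MMap M M n s)
    (h : r + (0 + s + 0) = R) :
    fc3 R μ f (pull f ν) f h = pull f (pc R 1 1 μ ν (by omega)) := by
  refine ext_ev fun w hw => ?_
  obtain ⟨w, z, rfl, hw', hz⟩ := exists_eq_append hw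
  obtain ⟨x, y, rfl, hx, hy⟩ := exists_eq_append hw'
  obtain ⟨x, rfl⟩ := List.length_eq_one_iff.1 hx
  obtain ⟨z, rfl⟩ := List.length_eq_one_iff.1 hz
  have hpc := ev_pc μ ν (by omega : r + s = R) (u := [app f [x]]) (v := y.mapLetters f)
    (w := [app f [z]]) rfl (by simpa) rfl
  rw [ev_fc3 _ _ _ _ _ hx hy hz, ev_pull _ (by omega), app_pull _ hy]
  simp_all [app]

theorem fc3_self_self_pull {n : ℕ} {R : ℤ} (μ : MMap M N 3 r) (ν : MMap M M n s)
    (h : r + (0 + 0 + s) = R) :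
    fc3 R μ f f (pull f ν) h = pull f (pc R 2 0 μ ν (by omega)) := by
  refine ext_ev fun w hw => ?_
  obtain ⟨w, z, rfl, hw', hz⟩ := exists_eq_append hw
  obtain ⟨x, y, rfl, hx, hy⟩ := exists_eq_append hw'
  obtain ⟨x, rfl⟩ := List.length_eq_one_iff.1 hx
  obtain ⟨y, rfl⟩ := List.length_eq_one_iff.1 hy
  have hpc := ev_pc μ ν (by omega : r + s = R) (u := [app f [x], app f [y]]) (v := z.mapLetters f)
    (w := []) rfl (by simpa) rfl
  rw [ev_fc3 _ _ _ _ _ hx hy hz, ev_pull _ hw, app_pull _ hz]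
  simp_all [app]

theorem pull_pc {m₁ m₂ n : ℕ} {R : ℤ} (p : MMap M L 1 0) (μ : MMap M N (m₁ + 1 + m₂) r)
    (ν : MMap M M n s) (h : r + s = R) :
    pc R m₁ m₂ (pull f μ) (fc1 s p (pull f ν) (zero_add s)) h =
      pull f (pc R m₁ m₂ μ (fc1 s (fc1 0 f p) ν (zero_add s)) h) := by
  refine ext_ev fun w hw => ?_
  obtain ⟨w, z, rfl, hw', hz⟩ := exists_eq_append hw
  obtain ⟨x, y, rfl, hx, hy⟩ := exists_eq_append hw'
  have happ : app f [app (fc1 s p (pull f ν) (zero_add s)) y] =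
      app (fc1 s (fc1 0 f p) ν (zero_add s)) (y.mapLetters f) := by
    rw [← fc1_fc1 f p ν (zero_add s) (zero_add s) (zero_add 0), fc1_pull, app_pull _ hy,
      app_fc1 f _ _ (by simpa)]
  rw [ev_pc _ _ _ hx hy hz, ev_pull _ hw, ev_pull _ (by grind)]
  simp only [Word.mapLetters_append, Word.mapLetters_cons]
  rw [ev_pc _ _ _ (by simpa) (by simpa) (by simpa), happ, Word.deg_mapLetters]

variable {D'' : MMap N N 1 (-1)} {D' : MMap M M 1 (-1)} {D : MMap L L 1 (-1)}

theorem app_comm_of_bd_eq_zero (hf : bd (-1) D' D f = 0) (x : Letter L) :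
    app D' [app f [x]] = app f [app D [x]] := by
  have h := ev_bd D D' f (by norm_num : -1 + 0 = (-1 : ℤ)) (w := [x]) rfl
  rw [hf, ev_zero, dsum_cons, dsum_nil, smul_zero, add_zero, Int.negOnePow_zero, one_smul, eq_comm,
    sub_eq_zero] at h
  rw [app, h]
  simp [app]

theorem dsum_mapLetters {G : Type} [AddCommGroup G] (hf : bd (-1) D' D f = 0) (F : Word M → G)
    (w : Word L) :
    dsum D' F (w.mapLetters f) = dsum D (fun v => F (v.mapLetters f)) w := by
  induction w generalizing F with
  | nil => rfl
  | cons x w ih =>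
    rw [Word.mapLetters_cons, dsum_cons, dsum_cons, ih, app_comm_of_bd_eq_zero hf]
    simp [app]

theorem bd_pull {R : ℤ} (hf : bd (-1) D' D f = 0) (μ : MMap M N m r) (h : -1 + r = R) :
    bd R D'' D (pull f μ) h = pull f (bd R D'' D' μ h) := by
  refine ext_ev fun w hw => ?_
  have hsum : dsum D (ev (pull f μ)) w = dsum D (fun v => ev μ (v.mapLetters f)) w :=
    dsum_congr D fun v hv _ => ev_pull μ (hv.trans hw)
  rw [ev_bd D D'' _ h hw, ev_pull _ hw, ev_bd D' D'' _ h (by simpa), dsum_mapLetters hf, hsum,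
    app_pull _ hw]

end Pull

section DegreeZero

variable {k : Type} [CommRing k] {L M : ℤ → Type}
  [∀ i, AddCommGroup (L i)] [∀ i, AddCommGroup (M i)] {R r s : ℤ}

/-- The word `x₀ ⊗ ⋯ ⊗ xₘ₋₁` of elements of degree zero. -/
def Word.ofDegZero {m : ℕ} (x : Fin m → ∀ n, L n) : Word L := List.ofFn fun j => (0, x j)

theorem IsMultilinear.map_coord_zero [∀ i, Module k (L i)] [∀ i, Module k (M i)] {m : ℕ}
    {μ : MMap L M m r} (hμ : IsMultilinear k μ) {d : Fin m → ℤ} {x : ∀ j, L (d j)} {j : Fin m}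
    (hx : x j = 0) : μ d x = 0 := by
  have h := (hμ d x j).2 0 0
  rwa [zero_smul, zero_smul, ← hx, Function.update_eq_self] at h

theorem IsMultilinear.eq_zero_of_forall_le [∀ i, Module k (L i)] [∀ i, Module k (M i)] {m : ℕ}
    {μ : MMap L M m r} (hμ : IsMultilinear k μ) (hL : ∀ n < 0, ∀ x : L n, x = 0)
    (hM : ∀ n, r ≤ n → ∀ y : M n, y = 0) : μ = 0 := by
  funext d x
  by_cases hneg : ∃ j, d j < 0
  · obtain ⟨j, hj⟩ := hneg
    exact hμ.map_coord_zero (hL _ hj (x j))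
  push Not at hneg
  have hsum : 0 ≤ ∑ j, d j := Finset.sum_nonneg fun j _ => hneg j
  exact hM _ (by omega) _

-- The value in total degree `n` lies in degree `r + n`, which exceeds `r` unless `n ≤ 0`.
theorem ext_ev_of_degZero [∀ i, Module k (L i)] [∀ i, Module k (M i)] {m : ℕ}
    {μ ν : MMap L M m r} (hμ : IsMultilinear k μ) (hν : IsMultilinear k ν)
    (hL : ∀ n < 0, ∀ x : L n, x = 0) (hM : ∀ n, r < n → ∀ y : M n, y = 0)
    (H : ∀ x : Fin m → ∀ n, L n, ev μ (.ofDegZero x) = ev ν (.ofDegZero x)) : μ = ν := by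
  funext d x
  by_cases hneg : ∃ j, d j < 0
  · obtain ⟨j, hj⟩ := hneg
    rw [hμ.map_coord_zero (hL _ hj (x j)), hν.map_coord_zero (hL _ hj (x j))]
  push Not at hneg
  obtain hpos | hsum := (Finset.sum_nonneg (s := .univ) fun j _ => hneg j).lt_or_eq
  · rw [hM _ (by omega) (μ d x), hM _ (by omega) (ν d x)]
  · obtain rfl : d = fun _ => 0 := funext fun j =>
      (Finset.sum_eq_zero_iff_of_nonneg fun j _ => hneg j).1 hsum.symm j (Finset.mem_univ j)
    have h := H fun j => el (x j)
    simpa only [Word.ofDegZero, ev_ofFn, evalTuple, el_self, el_injective.eq_iff] using h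

theorem ev_pa_ofDegZero {m : ℕ} (σ : Equiv.Perm (Fin m)) (μ : MMap L M m r)
    (x : Fin m → ∀ n, L n) :
    ev (pa σ μ) (.ofDegZero x) = ev μ (.ofDegZero fun j => x (σ.symm j)) := by
  rw [Word.ofDegZero, ev_pa]
  simp [koszulSign, Word.ofDegZero]

theorem ev_pa_P12_two (μ : MMap L M 2 r) (x y : Letter L) :
    ev (pa (P12 2) μ) [x, y] = (x.1 * y.1).negOnePow • ev μ [y, x] := by
  have hinv : ∀ i j, i < j ∧ P12 2 j < P12 2 i ↔ i = 0 ∧ j = 1 := by decide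
  have hsign : koszulSign (fun j => (![x, y] j).1) (P12 2) = (x.1 * y.1).negOnePow := by
    simp [coe_koszulSign, hinv, ite_and]
  exact (ev_pa (P12 2) μ ![x, y]).trans (congrArg (· • ev μ [y, x]) hsign)

theorem ev_pa_P12_three (μ : MMap L M 3 r) (x y z : Letter L) :
    ev (pa (P12 3) μ) [x, y, z] = (x.1 * y.1).negOnePow • ev μ [y, x, z] := by
  have hinv : ∀ i j, i < j ∧ P12 3 j < P12 3 i ↔ i = 0 ∧ j = 1 := by decide
  have hsign : koszulSign (fun j => (![x, y, z] j).1) (P12 3) = (x.1 * y.1).negOnePow := by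
    simp [coe_koszulSign, hinv, ite_and]
  exact (ev_pa (P12 3) μ ![x, y, z]).trans (congrArg (· • ev μ [y, x, z]) hsign)

variable (x y z t : ∀ n, L n)

theorem ev_pa_P23_three (μ : MMap L M 3 r) :
    ev (pa (P23 3) μ) [(0, x), (0, y), (0, z)] =
      ev μ [(0, x), (0, z), (0, y)] :=
  ev_pa_ofDegZero (P23 3) μ ![x, y, z]

theorem ev_pa_P12_four (μ : MMap L M 4 r) :
    ev (pa (P12 4) μ) [(0, x), (0, y), (0, z), (0, t)] =
      ev μ [(0, y), (0, x), (0, z), (0, t)] :=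
  ev_pa_ofDegZero (P12 4) μ ![x, y, z, t]

theorem ev_pa_P13_four (μ : MMap L M 4 r) :
    ev (pa (P13 4) μ) [(0, x), (0, y), (0, z), (0, t)] =
      ev μ [(0, z), (0, y), (0, x), (0, t)] :=
  ev_pa_ofDegZero (P13 4) μ ![x, y, z, t]

theorem ev_pa_P23_four (μ : MMap L M 4 r) :
    ev (pa (P23 4) μ) [(0, x), (0, y), (0, z), (0, t)] =
      ev μ [(0, x), (0, z), (0, y), (0, t)] :=
  ev_pa_ofDegZero (P23 4) μ ![x, y, z, t]

theorem ev_pa_P123_four (μ : MMap L M 4 r) :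
    ev (pa (P123 4) μ) [(0, x), (0, y), (0, z), (0, t)] =
      ev μ [(0, z), (0, x), (0, y), (0, t)] :=
  ev_pa_ofDegZero (P123 4) μ ![x, y, z, t]

theorem ev_pa_P132_four (μ : MMap L M 4 r) :
    ev (pa (P132 4) μ) [(0, x), (0, y), (0, z), (0, t)] =
      ev μ [(0, y), (0, z), (0, x), (0, t)] :=
  ev_pa_ofDegZero (P132 4) μ ![x, y, z, t]

theorem app_pa_P12_two (μ : MMap L M 2 r) :
    app (pa (P12 2) μ) [(0, x), (0, y)] = app μ [(0, y), (0, x)] := by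
  rw [app, app, ev_pa_P12_two]; simp

theorem app_pa_P12_three (μ : MMap L M 3 r) :
    app (pa (P12 3) μ) [(0, x), (0, y), (0, z)] = app μ [(0, y), (0, x), (0, z)] := by
  rw [app, app, ev_pa_P12_three]; simp

end DegreeZero

section Evaluation

variable {L M : ℤ → Type} [∀ i, AddCommGroup (L i)] [∀ i, AddCommGroup (M i)] {R r s : ℤ}
  (h : r + s = R) (x y z t : Letter L)

theorem ev_pc_0_1_two (μ : MMap L M 2 r) (ν : MMap L L 2 s) :
    @ev L M _ _ 3 R (pc R 0 1 μ ν h) [x, y, z] =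
      ev μ [app ν [x, y], z] := by
  simpa using ev_pc μ ν h (u := []) (v := [x, y]) (w := [z]) rfl rfl rfl

theorem ev_pc_1_0_two (μ : MMap L M 2 r) (ν : MMap L L 2 s) :
    @ev L M _ _ 3 R (pc R 1 0 μ ν h) [x, y, z] =
      (s * x.1).negOnePow • ev μ [x, app ν [y, z]] := by
  simpa using ev_pc μ ν h (u := [x]) (v := [y, z]) (w := []) rfl rfl rfl

theorem ev_pc_0_2_two (μ : MMap L M 3 r) (ν : MMap L L 2 s) :
    @ev L M _ _ 4 R (pc R 0 2 μ ν h) [x, y, z, t] =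
      ev μ [app ν [x, y], z, t] := by
  simpa using ev_pc μ ν h (u := []) (v := [x, y]) (w := [z, t]) rfl rfl rfl

theorem ev_pc_1_1_two (μ : MMap L M 3 r) (ν : MMap L L 2 s) :
    @ev L M _ _ 4 R (pc R 1 1 μ ν h) [x, y, z, t] =
      (s * x.1).negOnePow • ev μ [x, app ν [y, z], t] := by
  simpa using ev_pc μ ν h (u := [x]) (v := [y, z]) (w := [t]) rfl rfl rfl

theorem ev_pc_2_0_two (μ : MMap L M 3 r) (ν : MMap L L 2 s) :
    @ev L M _ _ 4 R (pc R 2 0 μ ν h) [x, y, z, t] =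
      (s * (x.1 + y.1)).negOnePow • ev μ [x, y, app ν [z, t]] := by
  simpa using ev_pc μ ν h (u := [x, y]) (v := [z, t]) (w := []) rfl rfl rfl

theorem ev_pc_0_1_three (μ : MMap L M 2 r) (ν : MMap L L 3 s) :
    @ev L M _ _ 4 R (pc R 0 1 μ ν h) [x, y, z, t] =
      ev μ [app ν [x, y, z], t] := by
  simpa using ev_pc μ ν h (u := []) (v := [x, y, z]) (w := [t]) rfl rfl rfl

theorem ev_pc_1_0_three (μ : MMap L M 2 r) (ν : MMap L L 3 s) :
    @ev L M _ _ 4 R (pc R 1 0 μ ν h) [x, y, z, t] =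
      (s * x.1).negOnePow • ev μ [x, app ν [y, z, t]] := by
  simpa using ev_pc μ ν h (u := [x]) (v := [y, z, t]) (w := []) rfl rfl rfl

end Evaluation

section Homotopy

variable {k : Type} [CommRing k] {L M N : ℤ → Type} [∀ i, AddCommGroup (L i)]
  [∀ i, AddCommGroup (M i)] [∀ i, AddCommGroup (N i)] {m : ℕ}

theorem bd_fc1 [∀ i, Module k (M i)] [∀ i, Module k (N i)] {r s R S T Q : ℤ}
    {D : MMap L L 1 (-1)} {D' : MMap M M 1 (-1)} (D'' : MMap N N 1 (-1))
    {g : MMap M N 1 r} (hg : IsMultilinear k g) (μ : MMap L M m s) (hS : r + s = S)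
    (hR : -1 + S = R) (hQ : -1 + r = Q) (hT : -1 + s = T) :
    bd R D'' D (fc1 S g μ hS) hR =
      fc1 R (bd Q D'' D' g hQ) μ (by omega) +
        (r.negOnePow : ℤ) • fc1 R g (bd T D' D μ hT) (by omega) := by
  refine ext_ev fun w hw => ?_
  have hlin := isMultilinear_iff_ev.1 hg [] [] (T + w.deg) rfl
  have hsum : dsum D (ev (fc1 S g μ hS)) w = ev g [(T + w.deg, dsum D (ev μ) w)] := by
    refine (dsum_congr D fun v hv hdeg => ?_).trans
      (map_dsum D (hlin.mk' _).toAddMonoidHom (ev μ) w).symm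
    rw [ev_fc1 _ _ _ (hv.trans hw), app, hdeg, show s + (w.deg - 1) = T + w.deg by omega]; rfl
  have hD' : app D' [app μ w] = (T + w.deg, ev D' [app μ w]) := by
    rw [app, ← hT]; simp [app, add_assoc]
  have hbd : ev g [(T + w.deg, ev D' [app μ w] - s.negOnePow • dsum D (ev μ) w)] =
      ev g [(T + w.deg, ev D' [app μ w])] -
        s.negOnePow • ev g [(T + w.deg, dsum D (ev μ) w)] :=
    ((hlin.mk' _).map_sub _ _).trans
      (congrArg _ ((hlin.mk' _).toAddMonoidHom.map_zsmul _ _))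
  rw [ev_add, ev_zsmul, ev_bd D D'' _ hR hw, ev_fc1 _ _ _ hw, ev_fc1 _ _ _ hw,
    ev_bd D' D'' g hQ rfl, dsum_cons, dsum_nil, hsum, app_fc1 g μ hS hw, hD',
    app.eq_def (bd _ _ _ _ _), ev_bd D D' μ hT hw, hbd, ← hS, Int.negOnePow_add, smul_zero,
    add_zero, Units.smul_def, Units.smul_def, Units.smul_def, Units.val_mul, mul_smul, smul_sub]
  abel

variable {r R S T : ℤ}

theorem sub_fc1 (g g' : MMap M N 1 r) (μ : MMap L M m S) (h : r + S = R) :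
    fc1 R (g - g') μ h = fc1 R g μ h - fc1 R g' μ h :=
  ext_ev fun w hw => by simp only [ev_fc1 _ _ _ hw, ev_sub]

theorem idm_fc1 (μ : MMap L M m r) : fc1 r idm μ (zero_add r) = μ :=
  ext_ev fun w hw => by rw [ev_fc1 _ _ _ hw, ev_idm, val_app _ hw]

theorem bd_eq_fc1_add_fc1 {D : MMap L L 1 (-1)} (h : MMap L L 1 1) :
    bd 0 D D h = fc1 0 D h + fc1 0 h D := by
  refine ext_ev fun w hw => ?_
  obtain ⟨x, rfl⟩ := List.length_eq_one_iff.1 hw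
  simp [ev_bd, ev_fc1, dsum_cons, dsum_nil]

variable [∀ i, Module k (L i)] {D : MMap L L 1 (-1)} {P : MMap L L 1 0} {h : MMap L L 1 1}

theorem bd_fc1_homotopy (hh : IsMultilinear k h) (hP : bd 0 D D h (neg_add_cancel 1) = idm - P)
    (μ : MMap L L m r) (hS : 1 + r = S) (hT : -1 + r = T) :
    bd r D D (fc1 S h μ hS) (by omega) =
      μ - fc1 r P μ (zero_add r) - fc1 r h (bd T D D μ hT) (by omega) := by
  rw [bd_fc1 D hh μ hS _ (neg_add_cancel 1) hT, hP, sub_fc1, idm_fc1, Int.negOnePow_one,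
    Units.val_neg, Units.val_one, neg_one_smul, sub_eq_add_neg _ (fc1 r h _ _)]

theorem fc1_eq_sub_of_homotopy (hD : IsMultilinear k D) (hh : IsMultilinear k h)
    (hP : bd 0 D D h (neg_add_cancel 1) = idm - P) (hneg : ∀ n < 0, ∀ x : L n, x = 0)
    (hL : ∀ n, r < n → ∀ x : L n, x = 0) {μ : MMap L L m r} (hμ : IsMultilinear k μ)
    (hT : -1 + r = T) :
    fc1 r P μ (zero_add r) = μ - fc1 r h (bd T D D μ hT) (by omega) := by
  have hzero : fc1 (1 + r) h μ rfl = 0 :=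
    (hh.fc1 hμ rfl).eq_zero_of_forall_le hneg fun n hn => hL n (by omega)
  have hbd := bd_fc1_homotopy hh hP μ rfl hT
  have hbd_zero : bd r D D (0 : MMap L L m (1 + r)) (by omega) = 0 := by
    simpa using bd_sub hD (0 : MMap L L m (1 + r)) 0 (by omega)
  rw [hzero, hbd_zero] at hbd
  exact (sub_eq_zero.1 ((sub_right_comm ..).trans hbd.symm)).symm

theorem fc1_eq_sub_of_ev_bd (hD : IsMultilinear k D) (hh : IsMultilinear k h)
    (hPlin : IsMultilinear k P) (hP : bd 0 D D h (neg_add_cancel 1) = idm - P)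
    (hneg : ∀ n < 0, ∀ x : L n, x = 0) (hL : ∀ n, r < n → ∀ x : L n, x = 0) {μ : MMap L L m r}
    (hμ : IsMultilinear k μ) (hT : -1 + r = T) {ν : MMap L L m T} (hν : IsMultilinear k ν)
    (H : ∀ x : Fin m → ∀ n, L n, ev (bd T D D μ hT) (.ofDegZero x) = ev ν (.ofDegZero x)) :
    fc1 r P μ (zero_add r) = μ - fc1 r h ν (by omega) := by
  refine ext_ev_of_degZero (hPlin.fc1 hμ _) (hμ.sub (hh.fc1 hν _)) hneg hL fun x => ?_
  have hlen : (Word.ofDegZero x).length = m := List.length_ofFn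
  rw [fc1_eq_sub_of_homotopy hD hh hP hneg hL hμ hT, ev_sub, ev_sub, ev_fc1 _ _ _ hlen,
    ev_fc1 _ _ _ hlen, app, H, app]

end Homotopy

section LeibnizCompositions

variable {k : Type} [CommRing k] {L M N : ℤ → Type} [∀ i, AddCommGroup (L i)]
  [∀ i, AddCommGroup (M i)] [∀ i, AddCommGroup (N i)] {r s : ℤ}

/-- The composition of two binary operations that appears in the Leibniz identity (L2). -/
def leibComp₂₂ (R : ℤ) (μ : MMap L M 2 r) (ν : MMap L L 2 s) (h : r + s = R := by norm_num) :
    MMap L M 3 R :=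
  pc R 1 0 μ ν h - pc R 0 1 μ ν h - pa (P12 3) (pc R 1 0 μ ν h)

/-- The composition of a binary with a ternary operation that appears in (L3). -/
def leibComp₂₃ (R : ℤ) (μ : MMap L M 2 r) (ν : MMap L L 3 s) (h : r + s = R := by norm_num) :
    MMap L M 4 R :=
  pc R 0 1 μ ν h + pc R 1 0 μ ν h - pa (P12 4) (pc R 1 0 μ ν h) + pa (P123 4) (pc R 1 0 μ ν h)

/-- The composition of a ternary with a binary operation that appears, up to sign, in (L3). -/
def leibComp₃₂ (R : ℤ) (μ : MMap L M 3 r) (ν : MMap L L 2 s) (h : r + s = R := by norm_num) :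
    MMap L M 4 R :=
  pc R 0 2 μ ν h - pc R 1 1 μ ν h + pa (P12 4) (pc R 1 1 μ ν h) + pc R 2 0 μ ν h
    - pa (P23 4) (pc R 2 0 μ ν h) + pa (P132 4) (pc R 2 0 μ ν h)

/-- The unshuffle sum of `μ ∘ (ν, ν')` that appears, up to sign, in (M4). -/
def unshuffle₂₂ {t : ℤ} (R : ℤ) (μ : MMap M N 2 r) (ν : MMap L M 2 s) (ν' : MMap L M 2 t)
    (h : r + (s + t) = R := by norm_num) : MMap L N 4 R :=
  fc2 R μ ν ν' h - pa (P23 4) (fc2 R μ ν ν' h) + pa (P132 4) (fc2 R μ ν ν' h)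

variable {R : ℤ} (h : r + s = R)

section Multilinear

variable [∀ i, Module k (L i)] [∀ i, Module k (M i)]

theorem isMultilinear_leibComp₂₂ {μ : MMap L M 2 r} {ν : MMap L L 2 s} (hμ : IsMultilinear k μ)
    (hν : IsMultilinear k ν) : IsMultilinear k (leibComp₂₂ R μ ν h) :=
  have hpc₁ : IsMultilinear k (pc R 1 0 μ ν h) := hμ.pc hν h
  have hpc₂ : IsMultilinear k (pc R 0 1 μ ν h) := hμ.pc hν h
  (hpc₁.sub hpc₂).sub (hpc₁.pa _)

theorem isMultilinear_leibComp₂₃ {μ : MMap L M 2 r} {ν : MMap L L 3 s} (hμ : IsMultilinear k μ)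
    (hν : IsMultilinear k ν) : IsMultilinear k (leibComp₂₃ R μ ν h) :=
  have hpc₁ : IsMultilinear k (pc R 0 1 μ ν h) := hμ.pc hν h
  have hpc₂ : IsMultilinear k (pc R 1 0 μ ν h) := hμ.pc hν h
  ((hpc₁.add hpc₂).sub (hpc₂.pa _)).add (hpc₂.pa _)

theorem isMultilinear_leibComp₃₂ {μ : MMap L M 3 r} {ν : MMap L L 2 s} (hμ : IsMultilinear k μ)
    (hν : IsMultilinear k ν) : IsMultilinear k (leibComp₃₂ R μ ν h) :=
  have hpc₁ : IsMultilinear k (pc R 0 2 μ ν h) := hμ.pc hν h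
  have hpc₂ : IsMultilinear k (pc R 1 1 μ ν h) := hμ.pc hν h
  have hpc₃ : IsMultilinear k (pc R 2 0 μ ν h) := hμ.pc hν h
  ((((hpc₁.sub hpc₂).add (hpc₂.pa _)).add hpc₃).sub (hpc₃.pa _)).add (hpc₃.pa _)

end Multilinear

section Additivity

theorem neg_leibComp₂₂ (μ : MMap L M 2 r) (ν : MMap L L 2 s) :
    leibComp₂₂ R (-μ) ν h = -leibComp₂₂ R μ ν h := by
  rw [leibComp₂₂, neg_pc (m₁ := 1) (m₂ := 0), neg_pc (m₁ := 0) (m₂ := 1), pa_neg, leibComp₂₂]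
  abel

theorem neg_leibComp₂₃ (μ : MMap L M 2 r) (ν : MMap L L 3 s) :
    leibComp₂₃ R (-μ) ν h = -leibComp₂₃ R μ ν h := by
  rw [leibComp₂₃, neg_pc (m₁ := 0) (m₂ := 1), neg_pc (m₁ := 1) (m₂ := 0), pa_neg, pa_neg,
    leibComp₂₃]
  abel

theorem sub_leibComp₃₂ (μ μ' : MMap L M 3 r) (ν : MMap L L 2 s) :
    leibComp₃₂ R (μ - μ') ν h = leibComp₃₂ R μ ν h - leibComp₃₂ R μ' ν h := by
  rw [leibComp₃₂, sub_pc (m₁ := 0) (m₂ := 2), sub_pc (m₁ := 1) (m₂ := 1),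
    sub_pc (m₁ := 2) (m₂ := 0), pa_sub, pa_sub, pa_sub, leibComp₃₂, leibComp₃₂]
  abel

theorem neg_leibComp₃₂ (μ : MMap L M 3 r) (ν : MMap L L 2 s) :
    leibComp₃₂ R (-μ) ν h = -leibComp₃₂ R μ ν h := by
  rw [leibComp₃₂, neg_pc (m₁ := 0) (m₂ := 2), neg_pc (m₁ := 1) (m₂ := 1),
    neg_pc (m₁ := 2) (m₂ := 0), pa_neg, pa_neg, pa_neg, leibComp₃₂]
  abel

variable [∀ i, Module k (M i)]

section Postcomposition

variable [∀ i, Module k (N i)]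

theorem fc1_leibComp₂₂ {t S T : ℤ} {g : MMap M N 1 t} (hg : IsMultilinear k g)
    (μ : MMap L M 2 r) (ν : MMap L L 2 s) (hS : t + R = S) (hT : t + r = T) :
    fc1 S g (leibComp₂₂ R μ ν h) hS = leibComp₂₂ S (fc1 T g μ hT) ν (by omega) := by
  rw [leibComp₂₂, fc1_sub hg, fc1_sub hg, fc1_pa hg, fc1_pc (m₁ := 1) (m₂ := 0) hg μ ν h hS hT,
    fc1_pc (m₁ := 0) (m₂ := 1) hg μ ν h hS hT, leibComp₂₂]

theorem fc1_leibComp₂₃ {t S T : ℤ} {g : MMap M N 1 t} (hg : IsMultilinear k g)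
    (μ : MMap L M 2 r) (ν : MMap L L 3 s) (hS : t + R = S) (hT : t + r = T) :
    fc1 S g (leibComp₂₃ R μ ν h) hS = leibComp₂₃ S (fc1 T g μ hT) ν (by omega) := by
  rw [leibComp₂₃, fc1_add hg, fc1_sub hg, fc1_add hg, fc1_pa hg, fc1_pa hg,
    fc1_pc (m₁ := 1) (m₂ := 0) hg μ ν h hS hT,
    fc1_pc (m₁ := 0) (m₂ := 1) hg μ ν h hS hT, leibComp₂₃]

theorem fc1_leibComp₃₂ {t S T : ℤ} {g : MMap M N 1 t} (hg : IsMultilinear k g)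
    (μ : MMap L M 3 r) (ν : MMap L L 2 s) (hS : t + R = S) (hT : t + r = T) :
    fc1 S g (leibComp₃₂ R μ ν h) hS = leibComp₃₂ S (fc1 T g μ hT) ν (by omega) := by
  rw [leibComp₃₂, fc1_add hg, fc1_sub hg, fc1_add hg, fc1_add hg, fc1_sub hg, fc1_pa hg, fc1_pa hg,
    fc1_pa hg, fc1_pc (m₁ := 0) (m₂ := 2) hg μ ν h hS hT,
    fc1_pc (m₁ := 1) (m₂ := 1) hg μ ν h hS hT,
    fc1_pc (m₁ := 2) (m₂ := 0) hg μ ν h hS hT, leibComp₃₂]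

end Postcomposition

variable [∀ i, Module k (L i)]

theorem leibComp₂₂_neg {μ : MMap L M 2 r} (hμ : IsMultilinear k μ) (ν : MMap L L 2 s) :
    leibComp₂₂ R μ (-ν) h = -leibComp₂₂ R μ ν h := by
  rw [leibComp₂₂, pc_neg (m₁ := 1) (m₂ := 0) hμ, pc_neg (m₁ := 0) (m₂ := 1) hμ, pa_neg, leibComp₂₂]
  abel

theorem leibComp₂₂_sub {μ : MMap L M 2 r} (hμ : IsMultilinear k μ) (ν ν' : MMap L L 2 s) :
    leibComp₂₂ R μ (ν - ν') h = leibComp₂₂ R μ ν h - leibComp₂₂ R μ ν' h := by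
  rw [leibComp₂₂, pc_sub (m₁ := 1) (m₂ := 0) hμ, pc_sub (m₁ := 0) (m₂ := 1) hμ, pa_sub,
    leibComp₂₂, leibComp₂₂]
  abel

theorem leibComp₂₃_sub {μ : MMap L M 2 r} (hμ : IsMultilinear k μ) (ν ν' : MMap L L 3 s) :
    leibComp₂₃ R μ (ν - ν') h = leibComp₂₃ R μ ν h - leibComp₂₃ R μ ν' h := by
  rw [leibComp₂₃, pc_sub (m₁ := 0) (m₂ := 1) hμ, pc_sub (m₁ := 1) (m₂ := 0) hμ, pa_sub, pa_sub,
    leibComp₂₃, leibComp₂₃]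
  abel

theorem leibComp₂₃_neg {μ : MMap L M 2 r} (hμ : IsMultilinear k μ) (ν : MMap L L 3 s) :
    leibComp₂₃ R μ (-ν) h = -leibComp₂₃ R μ ν h := by
  rw [leibComp₂₃, pc_neg (m₁ := 0) (m₂ := 1) hμ, pc_neg (m₁ := 1) (m₂ := 0) hμ, pa_neg, pa_neg,
    leibComp₂₃]
  abel

theorem leibComp₃₂_sub {μ : MMap L M 3 r} (hμ : IsMultilinear k μ) (ν ν' : MMap L L 2 s) :
    leibComp₃₂ R μ (ν - ν') h = leibComp₃₂ R μ ν h - leibComp₃₂ R μ ν' h := by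
  rw [leibComp₃₂, pc_sub (m₁ := 0) (m₂ := 2) hμ, pc_sub (m₁ := 1) (m₂ := 1) hμ,
    pc_sub (m₁ := 2) (m₂ := 0) hμ, pa_sub, pa_sub, pa_sub, leibComp₃₂, leibComp₃₂]
  abel

theorem leibComp₃₂_neg {μ : MMap L M 3 r} (hμ : IsMultilinear k μ) (ν : MMap L L 2 s) :
    leibComp₃₂ R μ (-ν) h = -leibComp₃₂ R μ ν h := by
  rw [leibComp₃₂, pc_neg (m₁ := 0) (m₂ := 2) hμ, pc_neg (m₁ := 1) (m₂ := 1) hμ,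
    pc_neg (m₁ := 2) (m₂ := 0) hμ, pa_neg, pa_neg, pa_neg, leibComp₃₂]
  abel

end Additivity

section Pull

variable {f : MMap L M 1 0} (p : MMap M L 1 0)

theorem pull_leibComp₂₂ (μ : MMap M N 2 r) (ν : MMap M M 2 s) :
    leibComp₂₂ R (pull f μ) (fc1 s p (pull f ν) (zero_add s)) h =
      pull f (leibComp₂₂ R μ (fc1 s (fc1 0 f p) ν (zero_add s)) h) := by
  rw [leibComp₂₂, pull_pc (m₁ := 1) (m₂ := 0), pull_pc (m₁ := 0) (m₂ := 1), leibComp₂₂, pull_sub,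
    pull_sub, pull_pa]

theorem pull_leibComp₂₃ (μ : MMap M N 2 r) (ν : MMap M M 3 s) :
    leibComp₂₃ R (pull f μ) (fc1 s p (pull f ν) (zero_add s)) h =
      pull f (leibComp₂₃ R μ (fc1 s (fc1 0 f p) ν (zero_add s)) h) := by
  rw [leibComp₂₃, pull_pc (m₁ := 1) (m₂ := 0), pull_pc (m₁ := 0) (m₂ := 1), leibComp₂₃, pull_add,
    pull_sub, pull_add, pull_pa, pull_pa]

theorem pull_leibComp₃₂ (μ : MMap M N 3 r) (ν : MMap M M 2 s) :
    leibComp₃₂ R (pull f μ) (fc1 s p (pull f ν) (zero_add s)) h =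
      pull f (leibComp₃₂ R μ (fc1 s (fc1 0 f p) ν (zero_add s)) h) := by
  rw [leibComp₃₂, pull_pc (m₁ := 0) (m₂ := 2), pull_pc (m₁ := 1) (m₂ := 1),
    pull_pc (m₁ := 2) (m₂ := 0), leibComp₃₂]
  simp only [pull_add, pull_sub, pull_pa]

end Pull

end LeibnizCompositions

section IteratedComposition
variable {L M : ℤ → Type} [∀ i, AddCommGroup (L i)] [∀ i, AddCommGroup (M i)] {R T r s t : ℤ}

theorem fst_app {m : ℕ} (μ : MMap L M m r) (w : Word L) : (app μ w).1 = r + w.deg := rfl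

theorem ev_fc2_two {N : ℤ → Type} [∀ i, AddCommGroup (N i)] (μ : MMap M N 2 r) (ν : MMap L M 2 s)
    (ν' : MMap L M 2 t) (h : r + (s + t) = R) (x y z u : Letter L) :
    @ev L N _ _ 4 R (fc2 R μ ν ν' h) [x, y, z, u] =
      (t * (x.1 + y.1)).negOnePow • ev μ [app ν [x, y], app ν' [z, u]] := by
  simpa using ev_fc2 μ ν ν' h (u := [x, y]) (v := [z, u]) rfl rfl

theorem fc2_eq_pc_pc {S : ℤ} (μ : MMap L M 2 r) (ν : MMap L L 2 s) (ν' : MMap L L 2 t)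
    (hS : r + t = S) (h : r + (s + t) = R) :
    fc2 R μ ν ν' h =
      ((s * t).negOnePow : ℤ) • pc R 0 2 (pc S 1 0 μ ν' hS) ν (by omega) := by
  refine ext_ev fun w hw => ?_
  match w, hw with
  | [x, y, z, u], _ =>
    rw [ev_zsmul, ev_fc2_two, ev_pc_0_2_two, ev_pc_1_0_two, fst_app, Word.deg_cons, Word.deg_cons,
      Word.deg_nil, add_zero, ← Units.smul_def, smul_smul, ← Int.negOnePow_add]
    congr 1
    rw [Int.negOnePow_eq_iff]
    exact ⟨-(s * t), by ring⟩

section CompositionDifferential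

variable {k : Type} [CommRing k] [∀ i, Module k (L i)] {D : MMap L L 1 (-1)} {m₁ m₂ n : ℕ}

theorem bd_pc_of_bd_eq_zero (hD : IsMultilinear k D) {μ : MMap L L (m₁ + 1 + m₂) 0}
    (hμ : IsMultilinear k μ) (hbd : bd (-1) D D μ = 0) {S : ℤ} (ν : MMap L L n s)
    (hS : 0 + s = S) (hR : -1 + S = R) (hT : -1 + s = T) :
    bd R D D (pc S m₁ m₂ μ ν hS) hR = pc R m₁ m₂ μ (bd T D D ν hT) (by omega) := by
  rw [bd_pc D D hD hμ ν hS hR (S := -1) (by norm_num) hT, hbd, zero_pc,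
    Int.negOnePow_zero, Units.val_one, one_smul, zero_add]

theorem bd_pc_of_degree_one (hD : IsMultilinear k D) {μ : MMap L L (m₁ + 1 + m₂) 1}
    (hμ : IsMultilinear k μ) (ν : MMap L L n 1) :
    bd 1 D D (pc 2 m₁ m₂ μ ν) = pc 1 m₁ m₂ (bd 0 D D μ) ν - pc 1 m₁ m₂ μ (bd 0 D D ν) := by
  rw [bd_pc D D hD hμ ν _ _ (S := 0) (T := 0) (by norm_num) (by norm_num), Int.negOnePow_one,
    Units.val_neg, Units.val_one, neg_one_smul, ← sub_eq_add_neg]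

end CompositionDifferential

section DegreeZeroComposition

variable (hR : r + s = R) (x y z : ∀ n, L n) (μ : MMap L M 2 r) (ν : MMap L L 2 s)

theorem app_pc_0_1_two :
    @app L M _ _ 3 R (pc R 0 1 μ ν hR) [(0, x), (0, y), (0, z)] =
      app μ [app ν [(0, x), (0, y)], (0, z)] := by
  rw [app, app.eq_def μ, ev_pc_0_1_two]
  simp [fst_app, hR]

theorem app_pc_1_0_two :
    @app L M _ _ 3 R (pc R 1 0 μ ν hR) [(0, x), (0, y), (0, z)] =
      app μ [(0, x), app ν [(0, y), (0, z)]] := by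
  rw [app, app.eq_def μ, ev_pc_1_0_two]
  simp [fst_app, hR]

end DegreeZeroComposition

variable {k : Type} [CommRing k] [∀ i, Module k (L i)] [∀ i, Module k (M i)]

theorem ev_leibComp_sub_leibComp {μ : MMap L M 2 0} (hμ : IsMultilinear k μ) (ν : MMap L L 2 s)
    (ν' : MMap L L 2 t) (h : s + t = R) (x y z u : ∀ n, L n) :
    ev (leibComp₂₃ R μ (leibComp₂₂ R ν ν' h) (zero_add R) -
        leibComp₃₂ R (leibComp₂₂ s μ ν (zero_add s)) ν' h) [(0, x), (0, y), (0, z), (0, u)] =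
      ev (unshuffle₂₂ R μ ν ν' (by omega) - ((s * t).negOnePow : ℤ) •
        unshuffle₂₂ R μ ν' ν (by omega)) [(0, x), (0, y), (0, z), (0, u)] := by
  rw [ev_sub, ev_sub _ (_ • _), ev_zsmul, ← Units.smul_def]
  simp only [leibComp₂₂, leibComp₂₃, leibComp₃₂, unshuffle₂₂,
    pa_sub, ev_add, ev_sub, ev_fc2_two,
    sub_pc (m₁ := 0) (m₂ := 2), sub_pc (m₁ := 1) (m₂ := 1), sub_pc (m₁ := 2) (m₂ := 0),
    pc_sub (m₁ := 0) (m₂ := 1) hμ, pc_sub (m₁ := 1) (m₂ := 0) hμ,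
    ev_pa_P12_three, ev_pa_P12_four, ev_pa_P23_four, ev_pa_P123_four, ev_pa_P132_four,
    ev_pc_0_1_two, ev_pc_1_0_two, ev_pc_0_2_two, ev_pc_1_1_two, ev_pc_2_0_two, ev_pc_0_1_three,
    ev_pc_1_0_three, app_pa_P12_three, app_pc_0_1_two, app_pc_1_0_two, fst_app, Word.deg_cons,
    Word.deg_nil, add_zero, mul_zero, zero_mul, Int.negOnePow_zero, one_smul, smul_sub, smul_add]
  abel

theorem isMultilinear_unshuffle₂₂ {μ : MMap L M 2 r} {ν : MMap L L 2 s} {ν' : MMap L L 2 t}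
    (hμ : IsMultilinear k μ) (hν : IsMultilinear k ν) (hν' : IsMultilinear k ν')
    (h : r + (s + t) = R) : IsMultilinear k (unshuffle₂₂ R μ ν ν' h) := by
  have hμν' : IsMultilinear k (pc (r + t) 1 0 μ ν' rfl) := hμ.pc hν' _
  have hfc2 : IsMultilinear k (fc2 R μ ν ν' h) := fc2_eq_pc_pc μ ν ν' rfl h ▸
    ((hμν'.pc (m₁ := 0) (m₂ := 2) hν _).zsmul _)
  exact (hfc2.sub (hfc2.pa _)).add (hfc2.pa _)

theorem unshuffle₂₂_sub_left {μ : MMap L M 2 r} (hμ : IsMultilinear k μ) (ν₁ ν₂ : MMap L L 2 s)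
    {ν' : MMap L L 2 t} (hν' : IsMultilinear k ν') (h : r + (s + t) = R) :
    unshuffle₂₂ R μ (ν₁ - ν₂) ν' h = unshuffle₂₂ R μ ν₁ ν' h - unshuffle₂₂ R μ ν₂ ν' h := by
  have hμν' : IsMultilinear k (pc (r + t) 1 0 μ ν' rfl) := hμ.pc hν' _
  have hfc2 : fc2 R μ (ν₁ - ν₂) ν' h = fc2 R μ ν₁ ν' h - fc2 R μ ν₂ ν' h := by
    rw [fc2_eq_pc_pc μ _ ν' rfl, pc_sub (m₁ := 0) (m₂ := 2) hμν', smul_sub,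
      ← fc2_eq_pc_pc μ _ ν' rfl, ← fc2_eq_pc_pc μ _ ν' rfl]
  rw [unshuffle₂₂, hfc2, pa_sub, pa_sub, unshuffle₂₂, unshuffle₂₂]
  abel

theorem unshuffle₂₂_sub_right {μ : MMap L M 2 r} (hμ : IsMultilinear k μ) (ν : MMap L L 2 s)
    (ν₁ ν₂ : MMap L L 2 t) (h : r + (s + t) = R) :
    unshuffle₂₂ R μ ν (ν₁ - ν₂) h = unshuffle₂₂ R μ ν ν₁ h - unshuffle₂₂ R μ ν ν₂ h := by
  have hfc2 : fc2 R μ ν (ν₁ - ν₂) h = fc2 R μ ν ν₁ h - fc2 R μ ν ν₂ h := by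
    rw [fc2_eq_pc_pc μ ν _ rfl, pc_sub (m₁ := 1) (m₂ := 0) hμ, sub_pc (m₁ := 0) (m₂ := 2),
      smul_sub, ← fc2_eq_pc_pc μ ν _ rfl, ← fc2_eq_pc_pc μ ν _ rfl]
  rw [unshuffle₂₂, hfc2, pa_sub, pa_sub, unshuffle₂₂, unshuffle₂₂]
  abel

theorem unshuffle₂₂_neg_neg {μ : MMap L M 2 r} (hμ : IsMultilinear k μ) (ν : MMap L L 2 s)
    {ν' : MMap L L 2 t} (hν' : IsMultilinear k ν') (h : r + (s + t) = R) :
    unshuffle₂₂ R μ (-ν) (-ν') h = unshuffle₂₂ R μ ν ν' h := by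
  have hμν' : IsMultilinear k (pc (r + t) 1 0 μ ν' rfl) := hμ.pc hν' _
  have hfc2 : fc2 R μ (-ν) (-ν') h = fc2 R μ ν ν' h := by
    rw [fc2_eq_pc_pc μ _ _ rfl, pc_neg (m₁ := 1) (m₂ := 0) hμ, neg_pc (m₁ := 0) (m₂ := 2),
      pc_neg (m₁ := 0) (m₂ := 2) hμν', neg_neg, ← fc2_eq_pc_pc μ _ _ rfl]
  rw [unshuffle₂₂, hfc2, unshuffle₂₂]

section Differential

variable {D : MMap L L 1 (-1)} (hD : IsMultilinear k D)
include hD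

theorem bd_leibComp₂₂_of_bd_eq_zero {μ : MMap L L 2 0} (hμ : IsMultilinear k μ)
    (hbd : bd (-1) D D μ = 0) (ν : MMap L L 2 s) (hT : -1 + s = T) :
    bd T D D (leibComp₂₂ s μ ν (zero_add s)) hT =
      leibComp₂₂ T μ (bd T D D ν hT) (zero_add T) := by
  rw [leibComp₂₂, bd_sub hD, bd_sub hD, bd_pa D hD,
    bd_pc_of_bd_eq_zero (m₁ := 0) (m₂ := 1) hD hμ hbd ν _ _ hT,
    bd_pc_of_bd_eq_zero (m₁ := 1) (m₂ := 0) hD hμ hbd ν _ _ hT, leibComp₂₂]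

theorem bd_leibComp₂₃_of_bd_eq_zero {μ : MMap L L 2 0} (hμ : IsMultilinear k μ)
    (hbd : bd (-1) D D μ = 0) (ν : MMap L L 3 s) (hT : -1 + s = T) :
    bd T D D (leibComp₂₃ s μ ν (zero_add s)) hT =
      leibComp₂₃ T μ (bd T D D ν hT) (zero_add T) := by
  rw [leibComp₂₃, bd_add hD, bd_sub hD, bd_add hD, bd_pa D hD, bd_pa D hD,
    bd_pc_of_bd_eq_zero (m₁ := 0) (m₂ := 1) hD hμ hbd ν _ _ hT,
    bd_pc_of_bd_eq_zero (m₁ := 1) (m₂ := 0) hD hμ hbd ν _ _ hT, leibComp₂₃]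

theorem bd_leibComp₃₂ {μ : MMap L L 3 1} (hμ : IsMultilinear k μ) (ν : MMap L L 2 1) :
    bd 1 D D (leibComp₃₂ 2 μ ν) =
      leibComp₃₂ 1 (bd 0 D D μ) ν - leibComp₃₂ 1 μ (bd 0 D D ν) := by
  have hpc (m₁ m₂ : ℕ) (μ : MMap L L (m₁ + 1 + m₂) 1) (hμ : IsMultilinear k μ) :
      bd 1 D D (pc 2 m₁ m₂ μ ν) = pc 1 m₁ m₂ (bd 0 D D μ) ν - pc 1 m₁ m₂ μ (bd 0 D D ν) :=
    bd_pc_of_degree_one hD hμ ν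
  rw [leibComp₃₂, bd_add hD, bd_sub hD, bd_add hD, bd_add hD, bd_sub hD, bd_pa D hD, bd_pa D hD,
    bd_pa D hD, hpc 0 2 μ hμ, hpc 1 1 μ hμ, hpc 2 0 μ hμ, leibComp₃₂, leibComp₃₂, pa_sub, pa_sub,
    pa_sub]
  abel

theorem bd_fc2_of_bd_eq_zero {μ : MMap L L 2 0} (hμ : IsMultilinear k μ)
    (hbd : bd (-1) D D μ = 0) {ν : MMap L L 2 1} (hν : IsMultilinear k ν) :
    bd 1 D D (fc2 2 μ ν ν) = fc2 1 μ (bd 0 D D ν) ν - fc2 1 μ ν (bd 0 D D ν) := by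
  have hμν : IsMultilinear k (pc 1 1 0 μ ν) := hμ.pc hν _
  rw [fc2_eq_pc_pc μ ν ν (S := 1) (by norm_num), fc2_eq_pc_pc μ _ ν (S := 1) (by norm_num),
    fc2_eq_pc_pc μ ν _ (S := 0) (by norm_num)]
  simp only [Nat.reduceAdd, mul_one, Int.negOnePow_one, Units.val_neg, Units.val_one,
    Int.reduceNeg, neg_smul, one_smul, Int.negOnePow_zero, mul_zero]
  rw [bd_neg hD, bd_pc_of_degree_one (m₁ := 0) (m₂ := 2) hD hμν,
    bd_pc_of_bd_eq_zero (m₁ := 1) (m₂ := 0) hD hμ hbd ν _ _ (T := 0) (by norm_num)]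
  abel

theorem bd_unshuffle₂₂_of_bd_eq_zero {μ : MMap L L 2 0} (hμ : IsMultilinear k μ)
    (hbd : bd (-1) D D μ = 0) {ν : MMap L L 2 1} (hν : IsMultilinear k ν) :
    bd 1 D D (unshuffle₂₂ 2 μ ν ν) =
      unshuffle₂₂ 1 μ (bd 0 D D ν) ν - unshuffle₂₂ 1 μ ν (bd 0 D D ν) := by
  rw [unshuffle₂₂, bd_add hD, bd_sub hD, bd_pa D hD, bd_pa D hD,
    bd_fc2_of_bd_eq_zero hD hμ hbd hν, pa_sub, pa_sub, unshuffle₂₂, unshuffle₂₂]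
  abel

end Differential

end IteratedComposition

section PerturbedBrackets

variable {k : Type} [CommRing k] {L : ℤ → Type} [∀ i, AddCommGroup (L i)] [∀ i, Module k (L i)]
  (A : WeakLie3 k L) (h : MMap L L 1 1)

/-- The ternary bracket on `L` obtained from `λ3` by homotopy perturbation along `h`, so that
`λ3' = p ∘ perturbed3 ∘ (i, i, i)`. -/
def perturbed3 : MMap L L 3 1 := A.l3 - leibComp₂₂ 1 A.l2 (hl2 A h)

/-- `h ∘ perturbed3`, which restricts to `-i3`. -/
def hperturbed3 : MMap L L 3 2 := fc1 2 h (perturbed3 A h)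

/-- The quaternary bracket on `L` obtained from `λ4` by homotopy perturbation along `h`, so that
`λ4' = p ∘ perturbed4 ∘ (i, i, i, i)`. -/
def perturbed4 : MMap L L 4 2 :=
  A.l4 - (leibComp₂₃ 2 A.l2 (hperturbed3 A h) + leibComp₃₂ 2 A.l3 (hl2 A h)
    + unshuffle₂₂ 2 A.l2 (hl2 A h) (hl2 A h))

/-- The operation `λ31` perturbed along `h`, so that `λ31' = p ∘ perturbed31 ∘ (i, i, i)`. -/
def perturbed31 : MMap L L 3 2 := A.l31 - pc 2 0 1 A.l2 (hl21 A h)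

/-- The operation `λ32` perturbed along `h`, so that `λ32' = p ∘ perturbed32 ∘ (i, i, i)`. -/
def perturbed32 : MMap L L 3 2 :=
  A.l32 + (pc 2 0 1 A.l21 (hl2 A h) + pc 2 1 0 A.l2 (hl21 A h)
    + pa (P12 3) (pc 2 1 0 A.l21 (hl2 A h)))

variable {A h}

theorem bd_l3 : bd 0 A.D A.D A.l3 = leibComp₂₂ 0 A.l2 A.l2 := A.leib.eqL2

theorem bd_l4 : bd 1 A.D A.D A.l4 = leibComp₂₃ 1 A.l2 A.l3 - leibComp₃₂ 1 A.l3 A.l2 := by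
  rw [A.leib.eqL3, leibComp₂₃, leibComp₃₂]
  abel

variable (hh : IsMultilinear k h)
include hh

theorem isMultilinear_hl2 : IsMultilinear k (hl2 A h) := hh.fc1 A.leib.lin2 _

theorem isMultilinear_hl21 : IsMultilinear k (hl21 A h) := hh.fc1 A.lin21 _

theorem isMultilinear_perturbed3 : IsMultilinear k (perturbed3 A h) :=
  A.leib.lin3.sub (isMultilinear_leibComp₂₂ _ A.leib.lin2 (isMultilinear_hl2 hh))

theorem isMultilinear_hperturbed3 : IsMultilinear k (hperturbed3 A h) :=
  hh.fc1 (isMultilinear_perturbed3 hh) _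

theorem isMultilinear_perturbed4 : IsMultilinear k (perturbed4 A h) :=
  have hlin := isMultilinear_hl2 (A := A) hh
  A.leib.lin4.sub (((isMultilinear_leibComp₂₃ _ A.leib.lin2 (isMultilinear_hperturbed3 hh)).add
    (isMultilinear_leibComp₃₂ _ A.leib.lin3 hlin)).add
      (isMultilinear_unshuffle₂₂ A.leib.lin2 hlin hlin _))

theorem isMultilinear_perturbed31 : IsMultilinear k (perturbed31 A h) :=
  A.lin31.sub (A.leib.lin2.pc (isMultilinear_hl21 hh) _)

theorem isMultilinear_perturbed32 : IsMultilinear k (perturbed32 A h) := by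
  refine A.lin32.add (.add (.add ?_ ?_) (.pa ?_ _))
  · exact A.lin21.pc (isMultilinear_hl2 hh) _
  · exact A.leib.lin2.pc (isMultilinear_hl21 hh) _
  · exact A.lin21.pc (isMultilinear_hl2 hh) _

variable {P : MMap L L 1 0} (hP : bd 0 A.D A.D h (neg_add_cancel 1) = idm - P)
include hP

theorem bd_hl2 : bd 0 A.D A.D (hl2 A h) = A.l2 - fc1 0 P A.l2 := by
  rw [hl2, bd_fc1_homotopy hh hP A.l2 _ (T := -1) (by norm_num), A.leib.eqL1, fc1_zero hh, sub_zero]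

theorem bd_hl21 : bd 1 A.D A.D (hl21 A h) =
    A.l21 - fc1 1 P A.l21 - (hl2 A h + pa (P12 2) (hl2 A h)) := by
  rw [hl21, bd_fc1_homotopy hh hP A.l21 _ (T := 0) (by norm_num), A.w1, fc1_add hh, fc1_pa hh, hl2]

theorem bd_perturbed3 : bd 0 A.D A.D (perturbed3 A h) = leibComp₂₂ 0 A.l2 (fc1 0 P A.l2) := by
  rw [perturbed3, bd_sub A.linD, bd_l3,
    bd_leibComp₂₂_of_bd_eq_zero A.linD A.leib.lin2 A.leib.eqL1 _ (T := 0) (by norm_num),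
    bd_hl2 hh hP, leibComp₂₂_sub _ A.leib.lin2, sub_sub_cancel]

theorem bd_hperturbed3 : bd 1 A.D A.D (hperturbed3 A h) =
    perturbed3 A h - fc1 1 P (perturbed3 A h) - leibComp₂₂ 1 (hl2 A h) (fc1 0 P A.l2) := by
  rw [hperturbed3, bd_fc1_homotopy hh hP _ _ (T := 0) (by norm_num), bd_perturbed3 hh hP,
    fc1_leibComp₂₂ (T := 1) _ hh _ _ _ (by norm_num), hl2]

theorem ev_bd_perturbed4 (x y z u : ∀ n, L n) :
    ev (bd 1 A.D A.D (perturbed4 A h)) [(0, x), (0, y), (0, z), (0, u)] =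
      ev (leibComp₂₃ 1 A.l2 (fc1 1 P (perturbed3 A h)) -
        leibComp₃₂ 1 (perturbed3 A h) (fc1 0 P A.l2)) [(0, x), (0, y), (0, z), (0, u)] := by
  have hlin2 := A.leib.lin2
  have hlin := isMultilinear_hl2 (A := A) hh
  rw [perturbed4, bd_sub A.linD, bd_add A.linD, bd_add A.linD, bd_l4,
    bd_leibComp₂₃_of_bd_eq_zero A.linD hlin2 A.leib.eqL1 _ (T := 1) (by norm_num),
    bd_hperturbed3 hh hP, bd_leibComp₃₂ A.linD A.leib.lin3, bd_l3, bd_hl2 hh hP,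
    bd_unshuffle₂₂_of_bd_eq_zero A.linD hlin2 A.leib.eqL1 hlin, bd_hl2 hh hP]
  have hassoc₁ := ev_leibComp_sub_leibComp hlin2 A.l2 (hl2 A h) (R := 1) (by norm_num) x y z u
  have hassoc₂ := ev_leibComp_sub_leibComp hlin2 (hl2 A h) (fc1 0 P A.l2) (R := 1) (by norm_num)
    x y z u
  rw [zero_mul, Int.negOnePow_zero, Units.val_one, one_smul] at hassoc₁
  rw [mul_zero, Int.negOnePow_zero, Units.val_one, one_smul] at hassoc₂
  rw [unshuffle₂₂_sub_left hlin2 _ _ hlin, unshuffle₂₂_sub_right hlin2,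
    leibComp₃₂_sub _ A.leib.lin3, leibComp₂₃_sub _ hlin2, leibComp₂₃_sub _ hlin2, perturbed3,
    leibComp₂₃_sub _ hlin2, sub_leibComp₃₂]
  simp only [ev_add, ev_sub] at hassoc₁ hassoc₂ ⊢
  linear_combination (norm := abel) hassoc₁ + hassoc₂

end PerturbedBrackets

section ProjectedBrackets

variable {k : Type} [CommRing k] {L : ℤ → Type} [∀ i, AddCommGroup (L i)] [∀ i, Module k (L i)]
  {A : WeakLie3 k L} {h : MMap L L 1 1} {P : MMap L L 1 0} (hh : IsMultilinear k h)
  (hP : bd 0 A.D A.D h (neg_add_cancel 1) = idm - P)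
include hh hP

theorem ev_bd_perturbed31 (x y z : ∀ n, L n) :
    ev (bd 1 A.D A.D (perturbed31 A h)) [(0, x), (0, y), (0, z)] =
      ev (perturbed3 A h + pa (P12 3) (perturbed3 A h) + pc 1 0 1 A.l2 (fc1 1 P A.l21))
        [(0, x), (0, y), (0, z)] := by
  have hlin2 := A.leib.lin2
  rw [perturbed31, bd_sub A.linD, A.w3, bd_pc_of_bd_eq_zero (m₁ := 0) (m₂ := 1) A.linD hlin2
    A.leib.eqL1 _ _ _ (T := 1) (by norm_num), bd_hl21 hh hP, perturbed3, leibComp₂₂]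
  simp only [pc_sub (m₁ := 0) (m₂ := 1) hlin2, pc_add (m₁ := 0) (m₂ := 1) hlin2,
    pa_sub, ev_add, ev_sub, ev_pa_P12_three, ev_pc_0_1_two, ev_pc_1_0_two,
    app_pa_P12_two, mul_zero, Int.negOnePow_zero, one_smul]
  abel

theorem ev_bd_perturbed32 (x y z : ∀ n, L n) :
    ev (bd 1 A.D A.D (perturbed32 A h)) [(0, x), (0, y), (0, z)] =
      ev (perturbed3 A h + pa (P23 3) (perturbed3 A h) - pc 1 1 0 A.l2 (fc1 1 P A.l21) +
        pc 1 0 1 A.l21 (fc1 0 P A.l2) + pa (P12 3) (pc 1 1 0 A.l21 (fc1 0 P A.l2)))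
        [(0, x), (0, y), (0, z)] := by
  have hlin2 := A.leib.lin2
  rw [perturbed32, bd_add A.linD, bd_add A.linD, bd_add A.linD, A.w4, bd_pa A.D A.linD,
    bd_pc_of_bd_eq_zero (m₁ := 1) (m₂ := 0) A.linD hlin2 A.leib.eqL1 _ _ _ (T := 1) (by norm_num),
    bd_pc_of_degree_one (m₁ := 0) (m₂ := 1) A.linD A.lin21,
    bd_pc_of_degree_one (m₁ := 1) (m₂ := 0) A.linD A.lin21, bd_hl21 hh hP, bd_hl2 hh hP, A.w1,
    perturbed3, leibComp₂₂]
  simp only [pc_sub (m₁ := 1) (m₂ := 0) hlin2, pc_add (m₁ := 1) (m₂ := 0) hlin2,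
    pc_sub (m₁ := 1) (m₂ := 0) A.lin21, pc_sub (m₁ := 0) (m₂ := 1) A.lin21,
    pa_add, pa_sub, add_pc (m₁ := 0) (m₂ := 1), add_pc (m₁ := 1) (m₂ := 0), ev_add, ev_sub,
    ev_pa_P12_two, ev_pa_P12_three, ev_pa_P23_three, ev_pc_0_1_two, ev_pc_1_0_two, app_pa_P12_two,
    mul_zero, zero_mul, Int.negOnePow_zero, one_smul]
  abel

theorem fc1_l211 : fc1 2 P A.l211 - A.l211 = -hl21 A h - pa (P12 2) (-hl21 A h) := by
  rw [fc1_eq_sub_of_homotopy A.linD hh hP (fun n hn => A.bound n (.inl hn))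
    (fun n hn => A.bound n (.inr hn)) A.lin211 (T := 1) (by norm_num), A.w2, fc1_sub hh, fc1_pa hh,
    ← hl21, pa_neg]
  abel

variable (hPlin : IsMultilinear k P)
include hPlin

theorem fc1_perturbed4 : fc1 2 P (perturbed4 A h) - A.l4 =
    leibComp₂₃ 2 (-hl2 A h) (fc1 1 P (perturbed3 A h)) -
      leibComp₃₂ 2 (-hperturbed3 A h) (fc1 0 P A.l2) + leibComp₂₃ 2 A.l2 (-hperturbed3 A h) +
      leibComp₃₂ 2 A.l3 (-hl2 A h) - unshuffle₂₂ 2 A.l2 (-hl2 A h) (-hl2 A h) := by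
  have hT3 := isMultilinear_perturbed3 (A := A) hh
  have hlin : IsMultilinear k (leibComp₂₃ 1 A.l2 (fc1 1 P (perturbed3 A h)) -
      leibComp₃₂ 1 (perturbed3 A h) (fc1 0 P A.l2)) :=
    (isMultilinear_leibComp₂₃ _ A.leib.lin2 (hPlin.fc1 hT3 _)).sub
      (isMultilinear_leibComp₃₂ _ hT3 (hPlin.fc1 A.leib.lin2 _))
  rw [fc1_eq_sub_of_ev_bd A.linD hh hPlin hP (fun n hn => A.bound n (.inl hn))
      (fun n hn => A.bound n (.inr hn)) (isMultilinear_perturbed4 hh) (T := 1) (by norm_num) hlin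
      fun x => ev_bd_perturbed4 hh hP (x 0) (x 1) (x 2) (x 3),
    fc1_sub hh, fc1_leibComp₂₃ (T := 1) _ hh _ _ _ (by norm_num), ← hl2,
    fc1_leibComp₃₂ (T := 2) _ hh _ _ _ (by norm_num), ← hperturbed3, perturbed4, neg_leibComp₂₃,
    neg_leibComp₃₂, leibComp₂₃_neg _ A.leib.lin2, leibComp₃₂_neg _ A.leib.lin3,
    unshuffle₂₂_neg_neg A.leib.lin2 _ (isMultilinear_hl2 hh)]
  abel

theorem fc1_perturbed31 : fc1 2 P (perturbed31 A h) - A.l31 =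
    -hperturbed3 A h + pa (P12 3) (-hperturbed3 A h) + pc 2 0 1 (-hl2 A h) (fc1 1 P A.l21) +
      pc 2 0 1 A.l2 (-hl21 A h) := by
  have hT3 := isMultilinear_perturbed3 (A := A) hh
  have hl2_l21 : IsMultilinear k (pc 1 0 1 A.l2 (fc1 1 P A.l21)) :=
    A.leib.lin2.pc (hPlin.fc1 A.lin21 _) _
  rw [fc1_eq_sub_of_ev_bd A.linD hh hPlin hP (fun n hn => A.bound n (.inl hn))
      (fun n hn => A.bound n (.inr hn)) (isMultilinear_perturbed31 hh) (T := 1) (by norm_num)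
      ((hT3.add (hT3.pa _)).add hl2_l21) fun x => ev_bd_perturbed31 hh hP (x 0) (x 1) (x 2),
    fc1_add hh, fc1_add hh, fc1_pa hh, ← hperturbed3,
    fc1_pc (m₁ := 0) (m₂ := 1) (T := 1) hh A.l2 _ _ _ (by norm_num), ← hl2, perturbed31, pa_neg,
    neg_pc (m₁ := 0) (m₂ := 1), pc_neg (m₁ := 0) (m₂ := 1) A.leib.lin2]
  abel

theorem fc1_perturbed32 : fc1 2 P (perturbed32 A h) - A.l32 =
    -hperturbed3 A h + pa (P23 3) (-hperturbed3 A h) - pc 2 1 0 (-hl2 A h) (fc1 1 P A.l21) +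
      pc 2 0 1 (-hl21 A h) (fc1 0 P A.l2) + pa (P12 3) (pc 2 1 0 (-hl21 A h) (fc1 0 P A.l2)) -
      pc 2 1 0 A.l2 (-hl21 A h) - pc 2 0 1 A.l21 (-hl2 A h) -
      pa (P12 3) (pc 2 1 0 A.l21 (-hl2 A h)) := by
  have hT3 := isMultilinear_perturbed3 (A := A) hh
  have hPl21 := hPlin.fc1 A.lin21 (zero_add 1)
  have hPl2 := hPlin.fc1 A.leib.lin2 (zero_add 0)
  have hl2_l21 : IsMultilinear k (pc 1 1 0 A.l2 (fc1 1 P A.l21)) := A.leib.lin2.pc hPl21 _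
  have hl21_l2 : IsMultilinear k (pc 1 0 1 A.l21 (fc1 0 P A.l2)) := A.lin21.pc hPl2 _
  have hl21_l2' : IsMultilinear k (pc 1 1 0 A.l21 (fc1 0 P A.l2)) := A.lin21.pc hPl2 _
  rw [fc1_eq_sub_of_ev_bd A.linD hh hPlin hP (fun n hn => A.bound n (.inl hn))
      (fun n hn => A.bound n (.inr hn)) (isMultilinear_perturbed32 hh) (T := 1) (by norm_num)
      ((((hT3.add (hT3.pa _)).sub hl2_l21).add hl21_l2).add (hl21_l2'.pa _))
      fun x => ev_bd_perturbed32 hh hP (x 0) (x 1) (x 2),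
    fc1_add hh, fc1_add hh, fc1_sub hh, fc1_add hh, fc1_pa hh, fc1_pa hh, ← hperturbed3,
    fc1_pc (m₁ := 1) (m₂ := 0) (T := 1) hh A.l2 _ _ _ (by norm_num), ← hl2,
    fc1_pc (m₁ := 0) (m₂ := 1) (T := 2) hh A.l21 _ _ _ (by norm_num),
    fc1_pc (m₁ := 1) (m₂ := 0) (T := 2) hh A.l21 _ _ _ (by norm_num), ← hl21, perturbed32, pa_neg,
    neg_pc (m₁ := 0) (m₂ := 1), neg_pc (m₁ := 1) (m₂ := 0), neg_pc (m₁ := 1) (m₂ := 0),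
    pc_neg (m₁ := 1) (m₂ := 0) A.leib.lin2, pc_neg (m₁ := 0) (m₂ := 1) A.lin21,
    pc_neg (m₁ := 1) (m₂ := 0) A.lin21, pa_neg, pa_neg]
  abel

end ProjectedBrackets

section IteratedBrackets

variable {k : Type} [CommRing k] {L : ℤ → Type} [∀ i, AddCommGroup (L i)] [∀ i, Module k (L i)]

theorem unshuffle₂₂_sub_leibComp₂₃_leibComp₂₂ {μ : MMap L L 2 0} {ν : MMap L L 2 1}
    (hμ : IsMultilinear k μ) (hν : IsMultilinear k ν) (hneg : ∀ n < 0, ∀ x : L n, x = 0)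
    (hL : ∀ n, 2 < n → ∀ x : L n, x = 0) :
    unshuffle₂₂ 2 μ ν ν - leibComp₂₃ 2 μ (leibComp₂₂ 2 ν ν) =
      pc 2 0 2 (pc 1 0 1 μ ν) ν
        - (pc 2 1 1 (pc 1 0 1 μ ν) ν - pa (P12 4) (pc 2 1 1 (pc 1 0 1 μ ν) ν))
        + (fc2 2 μ ν ν - pa (P23 4) (fc2 2 μ ν ν) + pa (P132 4) (fc2 2 μ ν ν))
        + (pc 2 1 1 (pc 1 1 0 μ ν) ν - pa (P12 4) (pc 2 1 1 (pc 1 1 0 μ ν) ν)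
            + pa (P123 4) (pc 2 1 1 (pc 1 1 0 μ ν) ν))
        - (pc 2 2 0 (pc 1 1 0 μ ν) ν - pa (P12 4) (pc 2 2 0 (pc 1 1 0 μ ν) ν)
            + pa (P123 4) (pc 2 2 0 (pc 1 1 0 μ ν) ν) - pa (P23 4) (pc 2 2 0 (pc 1 1 0 μ ν) ν)
            + pa (P132 4) (pc 2 2 0 (pc 1 1 0 μ ν) ν)
            - pa (P13 4) (pc 2 2 0 (pc 1 1 0 μ ν) ν)) := by
  have hunsh := isMultilinear_unshuffle₂₂ (R := 2) hμ hν hν (by norm_num)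
  have hcomp : IsMultilinear k (leibComp₂₃ 2 μ (leibComp₂₂ 2 ν ν)) :=
    isMultilinear_leibComp₂₃ _ hμ (isMultilinear_leibComp₂₂ _ hν hν)
  have hl : IsMultilinear k (pc 1 0 1 μ ν) := hμ.pc hν _
  have hr : IsMultilinear k (pc 1 1 0 μ ν) := hμ.pc hν _
  have hl₀₂ : IsMultilinear k (pc 2 0 2 (pc 1 0 1 μ ν) ν) := hl.pc (m₁ := 0) (m₂ := 2) hν _
  have hl₁₁ : IsMultilinear k (pc 2 1 1 (pc 1 0 1 μ ν) ν) := hl.pc (m₁ := 1) (m₂ := 1) hν _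
  have hr₁₁ : IsMultilinear k (pc 2 1 1 (pc 1 1 0 μ ν) ν) := hr.pc (m₁ := 1) (m₂ := 1) hν _
  have hr₂₀ : IsMultilinear k (pc 2 2 0 (pc 1 1 0 μ ν) ν) := hr.pc (m₁ := 2) (m₂ := 0) hν _
  rw [← unshuffle₂₂]
  refine ext_ev_of_degZero (hunsh.sub hcomp) (.sub (.add (.add (.sub hl₀₂ (.sub hl₁₁ (hl₁₁.pa _)))
      hunsh) (.add (.sub hr₁₁ (hr₁₁.pa _)) (hr₁₁.pa _))) (.sub (.add (.sub (.add (.sub hr₂₀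
      (hr₂₀.pa _)) (hr₂₀.pa _)) (hr₂₀.pa _)) (hr₂₀.pa _)) (hr₂₀.pa _))) hneg hL fun x => ?_
  change ev _ [(0, x 0), (0, x 1), (0, x 2), (0, x 3)] =
    ev _ [(0, x 0), (0, x 1), (0, x 2), (0, x 3)]
  simp only [leibComp₂₃, leibComp₂₂, ev_add, ev_sub, pa_sub,
    pc_sub (m₁ := 0) (m₂ := 1) hμ, pc_sub (m₁ := 1) (m₂ := 0) hμ, ev_pa_P12_four,
    ev_pa_P13_four, ev_pa_P23_four, ev_pa_P123_four, ev_pa_P132_four, ev_pc_0_1_two,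
    ev_pc_1_0_two, ev_pc_0_2_two, ev_pc_1_1_two, ev_pc_2_0_two, ev_pc_0_1_three, ev_pc_1_0_three,
    app_pa_P12_three, app_pc_0_1_two, app_pc_1_0_two, mul_zero, add_zero,
    Int.negOnePow_zero, one_smul]
  abel

end IteratedBrackets

section TransferredMaps

variable {k : Type} [CommRing k] {L L' : ℤ → Type} [∀ i, AddCommGroup (L i)]
  [∀ i, Module k (L i)] [∀ i, AddCommGroup (L' i)] (A : WeakLie3 k L)
  {p : MMap L L' 1 0} (i : MMap L' L 1 0) {h : MMap L L 1 1}

theorem tl2_eq_fc1_pull (p : MMap L L' 1 0) : tl2 A p i = fc1 0 p (pull i A.l2) := by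
  rw [tl2, fc2_eq_pull]

theorem tl21_eq_fc1_pull (p : MMap L L' 1 0) : tl21 A p i = fc1 1 p (pull i A.l21) := by
  rw [tl21, fc2_eq_pull]

theorem tl211_eq_fc1_pull (p : MMap L L' 1 0) : tl211 A p i = fc1 2 p (pull i A.l211) := by
  rw [tl211, fc2_eq_pull]

theorem ti2_eq_pull (h : MMap L L 1 1) : ti2 A i h = pull i (-hl2 A h) := by
  rw [ti2, fc2_eq_pull, fc1_pull, ← hl2, pull_neg]

theorem ti21_eq_pull (h : MMap L L 1 1) : ti21 A i h = pull i (-hl21 A h) := by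
  rw [ti21, fc2_eq_pull, fc1_pull, ← hl21, pull_neg]

theorem ti3_eq_pull (hh : IsMultilinear k h) : ti3 A i h = pull i (-hperturbed3 A h) := by
  rw [ti3, fc3_eq_pull, fc3_eq_pull, fc1_pull, fc1_pull, hperturbed3, perturbed3, leibComp₂₂,
    ← pull_neg, ← pull_sub]
  simp only [fc1_sub hh]
  congr 1
  abel

variable [∀ i, Module k (L' i)] (hp : IsMultilinear k p)
include hp

theorem tl3_eq_fc1_pull : tl3 A p i h = fc1 1 p (pull i (perturbed3 A h)) := by
  rw [tl3, fc3_eq_pull, fc3_eq_pull, ← fc1_add hp, ← pull_add, perturbed3, leibComp₂₂]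
  congr 2
  abel

theorem tl31_eq_fc1_pull : tl31 A p i h = fc1 2 p (pull i (perturbed31 A h)) := by
  rw [tl31, fc3_eq_pull, fc3_eq_pull, ← fc1_sub hp, ← pull_sub, perturbed31]

theorem tl32_eq_fc1_pull : tl32 A p i h = fc1 2 p (pull i (perturbed32 A h)) := by
  rw [tl32, fc3_eq_pull, fc3_eq_pull, ← fc1_add hp, ← pull_add, perturbed32]

theorem tl4_eq_fc1_pull (hh : IsMultilinear k h) :
    tl4 A p i h = fc1 2 p (pull i (perturbed4 A h)) := by
  have hhl3 : hperturbed3 A h = hl3 A h - leibComp₂₂ 2 (hl2 A h) (hl2 A h) := by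
    rw [hperturbed3, perturbed3, fc1_sub hh, ← hl3,
      fc1_leibComp₂₂ (T := 1) _ hh _ _ _ (by norm_num), ← hl2]
  rw [tl4, fc4_eq_pull, fc4_eq_pull, fc4_eq_pull, ← fc1_sub hp, ← fc1_sub hp, ← pull_sub,
    ← pull_sub, ← unshuffle₂₂_sub_leibComp₂₃_leibComp₂₂ A.leib.lin2 (isMultilinear_hl2 hh)
      (fun n hn => A.bound n (.inl hn)) (fun n hn => A.bound n (.inr hn)), perturbed4, hhl3,
    leibComp₂₃_sub _ A.leib.lin2]
  congr 2
  simp only [leibComp₂₃.eq_def 2 A.l2 (hl3 A h), leibComp₃₂]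
  abel

end TransferredMaps

section RetractInclusion

variable {k : Type} [CommRing k] {L L' : ℤ → Type} [∀ i, AddCommGroup (L i)]
  [∀ i, Module k (L i)] [∀ i, AddCommGroup (L' i)] {A : WeakLie3 k L}
  {D' : MMap L' L' 1 (-1)} {p : MMap L L' 1 0} {i : MMap L' L 1 0} {h : MMap L L 1 1}

theorem fc1_fc1_pull {m : ℕ} {r : ℤ} (p : MMap L L' 1 0) (i : MMap L' L 1 0) (μ : MMap L L m r) :
    fc1 r i (fc1 r p (pull i μ) (zero_add r)) (zero_add r) =
      pull i (fc1 r (fc1 0 i p) μ (zero_add r)) := by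
  rw [fc1_fc1 i p _ (zero_add r) (zero_add r) (zero_add 0), fc1_pull]

variable (hh : IsMultilinear k h) (hP : bd 0 A.D A.D h (neg_add_cancel 1) = idm - fc1 0 i p)
include hh hP

theorem fc1_tl211 :
    fc1 2 i (tl211 A p i) - fc2 2 A.l211 i i = ti21 A i h - pa (P12 2) (ti21 A i h) := by
  have hN := congrArg (pull i) (fc1_l211 hh hP)
  rw [pull_sub, pull_sub, pull_pa] at hN
  rw [tl211_eq_fc1_pull, fc1_fc1_pull, fc2_eq_pull, ti21_eq_pull, hN]

section Differential

variable (hchain : bd (-1) A.D D' i = 0)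
include hchain

theorem bd_ti2 : bd 0 A.D D' (ti2 A i h) = fc1 0 i (tl2 A p i) - fc2 0 A.l2 i i := by
  rw [ti2_eq_pull, bd_pull hchain, bd_neg A.linD, bd_hl2 hh hP, neg_sub, pull_sub,
    tl2_eq_fc1_pull, fc1_fc1_pull, fc2_eq_pull]

theorem bd_ti21 : bd 1 A.D D' (ti21 A i h) =
    -ti2 A i h - pa (P12 2) (ti2 A i h) + fc1 1 i (tl21 A p i) - fc2 1 A.l21 i i := by
  rw [ti21_eq_pull, bd_pull hchain, bd_neg A.linD, bd_hl21 hh hP, tl21_eq_fc1_pull, fc1_fc1_pull,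
    fc2_eq_pull, ti2_eq_pull, ← pull_pa]
  simp only [pull_sub, pull_add, pull_neg, pa_neg]
  abel

theorem bd_ti3 [∀ i, Module k (L' i)] (hp : IsMultilinear k p) : bd 1 A.D D' (ti3 A i h) =
    fc1 1 i (tl3 A p i h) - pc 1 1 0 (ti2 A i h) (tl2 A p i) + pc 1 0 1 (ti2 A i h) (tl2 A p i) +
      pa (P12 3) (pc 1 1 0 (ti2 A i h) (tl2 A p i)) - fc3 1 A.l3 i i i -
      fc2 1 A.l2 i (ti2 A i h) + fc2 1 A.l2 (ti2 A i h) i +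
      pa (P12 3) (fc2 1 A.l2 i (ti2 A i h)) := by
  have hmixed : fc2 1 A.l2 i (ti2 A i h) - fc2 1 A.l2 (ti2 A i h) i -
      pa (P12 3) (fc2 1 A.l2 i (ti2 A i h)) = pull i (leibComp₂₂ 1 A.l2 (-hl2 A h)) := by
    rw [ti2_eq_pull, fc2_self_pull, fc2_pull_self, leibComp₂₂, pull_sub, pull_sub, pull_pa]
    rfl
  have hN : bd 1 A.D A.D (-hperturbed3 A h) =
      fc1 1 (fc1 0 i p) (perturbed3 A h) - leibComp₂₂ 1 (-hl2 A h) (fc1 0 (fc1 0 i p) A.l2) -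
        (A.l3 + leibComp₂₂ 1 A.l2 (-hl2 A h)) := by
    rw [bd_neg A.linD, bd_hperturbed3 hh hP, neg_leibComp₂₂, leibComp₂₂_neg _ A.leib.lin2]
    nth_rw 1 [perturbed3]
    abel
  rw [ti3_eq_pull _ _ hh, bd_pull hchain, hN, pull_sub, pull_sub, pull_add, ← hmixed,
    ← fc1_fc1_pull, ← tl3_eq_fc1_pull _ _ hp, ← pull_leibComp₂₂, ← tl2_eq_fc1_pull,
    ← ti2_eq_pull, ← fc3_eq_pull A.l3 (by norm_num), leibComp₂₂]
  abel

end Differential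

variable [∀ i, Module k (L' i)] (hp : IsMultilinear k p) (hi : IsMultilinear k i)
include hp hi

theorem fc1_tl31 : fc1 2 i (tl31 A p i h) - fc3 2 A.l31 i i i =
    ti3 A i h + pa (P12 3) (ti3 A i h) + pc 2 0 1 (ti2 A i h) (tl21 A p i) +
      fc2 2 A.l2 (ti21 A i h) i := by
  have hmixed : fc2 2 A.l2 (ti21 A i h) i = pull i (pc 2 0 1 A.l2 (-hl21 A h)) := by
    rw [ti21_eq_pull, fc2_pull_self]
    rfl
  have hN := congrArg (pull i) (fc1_perturbed31 hh hP (hi.fc1 hp _))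
  rw [pull_sub, pull_add, pull_add, pull_add, pull_pa, ← hmixed, ← ti3_eq_pull _ _ hh,
    ← fc1_fc1_pull, ← tl31_eq_fc1_pull _ _ hp, ← pull_pc (m₁ := 0) (m₂ := 1), ← ti2_eq_pull,
    ← tl21_eq_fc1_pull, ← fc3_eq_pull A.l31 (by norm_num)] at hN
  exact hN

theorem fc1_tl32 : fc1 2 i (tl32 A p i h) - fc3 2 A.l32 i i i =
    ti3 A i h + pa (P23 3) (ti3 A i h) - pc 2 1 0 (ti2 A i h) (tl21 A p i) +
      pc 2 0 1 (ti21 A i h) (tl2 A p i) + pa (P12 3) (pc 2 1 0 (ti21 A i h) (tl2 A p i)) -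
      fc2 2 A.l2 i (ti21 A i h) - fc2 2 A.l21 (ti2 A i h) i -
      pa (P12 3) (fc2 2 A.l21 i (ti2 A i h)) := by
  have hmixed₁ : fc2 2 A.l2 i (ti21 A i h) = pull i (pc 2 1 0 A.l2 (-hl21 A h)) := by
    rw [ti21_eq_pull, fc2_self_pull]
  have hmixed₂ : fc2 2 A.l21 (ti2 A i h) i = pull i (pc 2 0 1 A.l21 (-hl2 A h)) := by
    rw [ti2_eq_pull, fc2_pull_self]
    rfl
  have hmixed₃ : fc2 2 A.l21 i (ti2 A i h) = pull i (pc 2 1 0 A.l21 (-hl2 A h)) := by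
    rw [ti2_eq_pull, fc2_self_pull]
  have hN := congrArg (pull i) (fc1_perturbed32 hh hP (hi.fc1 hp _))
  simp only [pull_sub, pull_add, pull_pa] at hN
  rw [← hmixed₁, ← hmixed₂, ← hmixed₃, ← ti3_eq_pull _ _ hh,
    ← fc1_fc1_pull, ← tl32_eq_fc1_pull _ _ hp, ← pull_pc (m₁ := 0) (m₂ := 1),
    ← pull_pc (m₁ := 1) (m₂ := 0), ← pull_pc (m₁ := 1) (m₂ := 0), ← ti2_eq_pull, ← ti21_eq_pull,
    ← tl2_eq_fc1_pull, ← tl21_eq_fc1_pull, ← fc3_eq_pull A.l32 (by norm_num)] at hN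
  exact hN

theorem fc1_tl4 : fc1 2 i (tl4 A p i h) - fc4 2 A.l4 i i i i =
    leibComp₂₃ 2 (ti2 A i h) (tl3 A p i h) - leibComp₃₂ 2 (ti3 A i h) (tl2 A p i) +
      (fc2 2 A.l2 (ti3 A i h) i + fc2 2 A.l2 i (ti3 A i h) -
        pa (P12 4) (fc2 2 A.l2 i (ti3 A i h)) + pa (P123 4) (fc2 2 A.l2 i (ti3 A i h))) +
      (fc3 2 A.l3 (ti2 A i h) i i - fc3 2 A.l3 i (ti2 A i h) i +
        pa (P12 4) (fc3 2 A.l3 i (ti2 A i h) i) + fc3 2 A.l3 i i (ti2 A i h) -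
        pa (P23 4) (fc3 2 A.l3 i i (ti2 A i h)) + pa (P132 4) (fc3 2 A.l3 i i (ti2 A i h))) -
      unshuffle₂₂ 2 A.l2 (ti2 A i h) (ti2 A i h) := by
  have hmixed₂₃ : fc2 2 A.l2 (ti3 A i h) i + fc2 2 A.l2 i (ti3 A i h) -
      pa (P12 4) (fc2 2 A.l2 i (ti3 A i h)) + pa (P123 4) (fc2 2 A.l2 i (ti3 A i h)) =
        pull i (leibComp₂₃ 2 A.l2 (-hperturbed3 A h)) := by
    rw [ti3_eq_pull _ _ hh, fc2_self_pull, fc2_pull_self, leibComp₂₃]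
    simp only [pull_add, pull_sub, pull_pa]
    rfl
  have hmixed₃₂ : fc3 2 A.l3 (ti2 A i h) i i - fc3 2 A.l3 i (ti2 A i h) i +
      pa (P12 4) (fc3 2 A.l3 i (ti2 A i h) i) + fc3 2 A.l3 i i (ti2 A i h) -
      pa (P23 4) (fc3 2 A.l3 i i (ti2 A i h)) + pa (P132 4) (fc3 2 A.l3 i i (ti2 A i h)) =
        pull i (leibComp₃₂ 2 A.l3 (-hl2 A h)) := by
    rw [ti2_eq_pull, fc3_self_pull_self, fc3_self_self_pull, fc3_pull_self_self, leibComp₃₂]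
    simp only [pull_add, pull_sub, pull_pa]
    rfl
  have hunshuffle : unshuffle₂₂ 2 A.l2 (ti2 A i h) (ti2 A i h) =
      pull i (unshuffle₂₂ 2 A.l2 (-hl2 A h) (-hl2 A h)) := by
    rw [ti2_eq_pull, unshuffle₂₂, fc2_pull_pull, unshuffle₂₂, pull_add, pull_sub, pull_pa, pull_pa]
  have hN := congrArg (pull i) (fc1_perturbed4 hh hP (hi.fc1 hp _))
  rw [pull_sub, pull_sub, pull_add, pull_add, pull_sub, ← hunshuffle, ← hmixed₂₃, ← hmixed₃₂,
    ← fc1_fc1_pull, ← tl4_eq_fc1_pull _ _ hp hh, ← pull_leibComp₂₃, ← pull_leibComp₃₂,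
    ← ti2_eq_pull, ← ti3_eq_pull _ _ hh, ← tl2_eq_fc1_pull, ← tl3_eq_fc1_pull _ _ hp,
    ← fc4_eq_pull A.l4 (by norm_num)] at hN
  exact hN

end RetractInclusion

theorem retract_inclusion_is_weak_morphism_general {k : Type} [CommRing k] {L L' : ℤ → Type}
    [∀ i, AddCommGroup (L i)] [∀ i, Module k (L i)]
    [∀ i, AddCommGroup (L' i)] [∀ i, Module k (L' i)] (A : WeakLie3 k L) (B : WeakLie3 k L')
    {p : MMap L L' 1 0} {i : MMap L' L 1 0} {h : MMap L L 1 1}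
    (hp : IsMultilinear k p) (hi : IsMultilinear k i) (hh : IsMultilinear k h)
    (hchain : bd (-1) A.D B.D i = 0)
    (homotopy : idm - fc1 0 i p = fc1 0 A.D h + fc1 0 h A.D)
    (hB2 : B.l2 = tl2 A p i) (hB3 : B.l3 = tl3 A p i h) (hB4 : B.l4 = tl4 A p i h)
    (hB21 : B.l21 = tl21 A p i) (hB211 : B.l211 = tl211 A p i)
    (hB31 : B.l31 = tl31 A p i h) (hB32 : B.l32 = tl32 A p i h) :
    IsWeakMorphism k B A i (ti2 A i h) (ti21 A i h) (ti3 A i h) := by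
  have hP : bd 0 A.D A.D h (neg_add_cancel 1) = idm - fc1 0 i p :=
    (bd_eq_fc1_add_fc1 h).trans homotopy.symm
  exact
    { lin1 := hi
      lin2 := ti2_eq_pull A i h ▸ (isMultilinear_hl2 hh).neg.pull hi
      lin21 := ti21_eq_pull A i h ▸ (isMultilinear_hl21 hh).neg.pull hi
      lin3 := ti3_eq_pull A i hh ▸ (isMultilinear_hperturbed3 hh).neg.pull hi
      m1 := hchain
      m2 := by rw [hB2, bd_ti2 hh hP hchain]
      m3 := by rw [hB2, hB3, bd_ti3 hh hP hchain hp]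
      m4 := by
        rw [hB2, hB3, hB4, fc1_tl4 hh hP hp hi, leibComp₂₃, leibComp₃₂, unshuffle₂₂]
        abel
      m5 := by rw [hB21, bd_ti21 hh hP hchain]
      m6 := by rw [hB211, fc1_tl211 hh hP]
      m7 := by rw [hB21, hB31, fc1_tl31 hh hP hp hi]
      m8 := by rw [hB2, hB21, hB32, fc1_tl32 hh hP hp hi] }

/-- **`i` extends to a weak morphism**: given a weak Lie 3-algebra `(L, d, λ)`, a
deformation retract `(p, i, h)` of `(L, d)` onto `(L', d')`, and the transferred weak Lie
3-algebra structure `λ'` on `(L', d')`, the maps `i₁ = i`, `i₂ = -h∘λ2∘(i,i)`,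
`i₂₁ = -h∘λ21∘(i,i)` and `i₃ = -h∘λ3∘(i,i,i) - h∘(λ2∘₁(h∘λ2) - (λ2∘₂(h∘λ2))^{1-(12)})∘(i,i,i)`
form a weak morphism `(L', d', λ') → (L, d, λ)`, i.e. satisfy (M1)–(M8). -/
theorem retract_inclusion_is_weak_morphism
    (k : Type) [CommRing k] {L L' : ℤ → Type}
    [∀ i, AddCommGroup (L i)] [∀ i, Module k (L i)]
    [∀ i, AddCommGroup (L' i)] [∀ i, Module k (L' i)]
    (A : WeakLie3 k L)
    (D' : MMap L' L' 1 (-1)) (hlinD' : IsMultilinear k D') (hdd' : fc1 (-2) D' D' = 0)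
    (hbound' : ∀ i : ℤ, (i < 0 ∨ 2 < i) → ∀ x : L' i, x = 0)
    (p : MMap L L' 1 0) (i : MMap L' L 1 0) (h : MMap L L 1 1)
    (hret : IsDefRetract k A.D D' p i h)
    (B : WeakLie3 k L')
    (hBD : B.D = D') (hB2 : B.l2 = tl2 A p i) (hB3 : B.l3 = tl3 A p i h)
    (hB4 : B.l4 = tl4 A p i h) (hB21 : B.l21 = tl21 A p i) (hB211 : B.l211 = tl211 A p i)
    (hB31 : B.l31 = tl31 A p i h) (hB32 : B.l32 = tl32 A p i h) :
    IsWeakMorphism k B A i (ti2 A i h) (ti21 A i h) (ti3 A i h) := by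
  subst hBD
  exact retract_inclusion_is_weak_morphism_general A B hret.linp hret.lini hret.linh hret.chaini
    hret.homotopy hB2 hB3 hB4 hB21 hB211 hB31 hB32

end WL3
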